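/- arXiv:math/0302349 — 3 statements merged into one kernel-verified Lean document; each statement's English description precedes it below -/
import Mathlib

section
/- Let m ≤ -1 and let Φ(s) = s^m/m for s > 0. Then for a nondecreasing continuous function u₀ : ℝ → [0,1] with lim_{x→-∞} u₀(x) = 0 and lim_{x→∞} u₀(x) = 1, there exists no continuous weak solution u of the Cauchy problem u_t = (Φ(u_x))_x on Q = ℝ × (0,∞) with u(x,0) = u₀(x) in the class of functions u with 0 ≤ u ≤ 1 such that for each t > 0 the profile u(·,t) is nondecreasing with ∂ₓu(·,t) > 0 where 0 < u < 1, lim_{x→-∞} u(x,t) = 0 and lim_{x→∞} u(x,t) = 1. -/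
open Set Filter Topology MeasureTheory

/-- A continuous weak solution of the Cauchy problem `u_t = (Φ(u_x))_x` on
`Q = ℝ × (0,∞)` with initial data `u₀`: `u` is continuous on `ℝ × [0,∞)`,
takes the initial data at `t = 0`, the profile `u(·,t)` is `C¹` in `x` for each `t > 0`,
and the weak formulation holds against every smooth compactly supported test function
supported in `ℝ × (0,∞)`. -/
def IsWeakSolution (Φ : ℝ → ℝ) (u₀ : ℝ → ℝ) (u : ℝ → ℝ → ℝ) : Prop :=
  ContinuousOn (fun p : ℝ × ℝ => u p.1 p.2) ((Set.univ : Set ℝ) ×ˢ Set.Ici 0) ∧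
  (∀ x : ℝ, u x 0 = u₀ x) ∧
  (∀ t : ℝ, 0 < t → ContDiff ℝ 1 fun x => u x t) ∧
  ∀ φ : ℝ → ℝ → ℝ,
    ContDiff ℝ (⊤ : ℕ∞) (fun p : ℝ × ℝ => φ p.1 p.2) →
    HasCompactSupport (fun p : ℝ × ℝ => φ p.1 p.2) →
    tsupport (fun p : ℝ × ℝ => φ p.1 p.2) ⊆ (Set.univ : Set ℝ) ×ˢ Set.Ioi 0 →
    ∫ p : ℝ × ℝ in (Set.univ : Set ℝ) ×ˢ Set.Ioi (0 : ℝ),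
      (u p.1 p.2 * deriv (fun s => φ p.1 s) p.2
        - Φ (deriv (fun y => u y p.2) p.1) * deriv (fun y => φ y p.2) p.1) = 0

/-!
Write `u_t = (Φ(u_x))_x = u_x^(m-1) u_xx`, where `0 < u < 1`. For `m ≤ -1` this equation has strict
supersolutions on `[a, a + L]` which start above `1`, stay above `1/2` on the left and above `1` on
the right, and come down to `1/2 + O(1/L)` near `a` after a time that does not depend on `L`. If
`u ≤ 1/2` at `a` during that time, letting `L → ∞` gives `u ≤ 1/2` on all of `[a, ∞)`, so that the
limit `1` at `+∞` is lost.

The flux `Φ(u_x)` is unbounded where `u_x` is small, so a weak solution can be compared with smooth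
functions only where `u_x` is locally bounded below. That this holds wherever `0 < u < 1` is a
regularity statement. By Baire's theorem, if the set of bad points were nonempty then `u` would
have, along a relatively open part of it, a uniform positive lower bound on its difference quotients
over intervals of a fixed length. At each time close to that of a bad point there, either all points
of a fixed space interval are good, or the profile is steep on that interval. A line of small slope
which the profile crosses downwards could then be traced back in time, through times of the first
kind, by the maximum principle: but there is no first time for such a crossing, hence no crossing,
and the difference quotients of `u` are bounded below near the bad point after all.

On boxes of good points the maximum principle follows from the decay of `∫ (w - κ)₊³ dx` for the
difference `w` of `u` and a smooth supersolution; the time derivative `w_t`, which need not exist,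
is replaced by differences in time and Steklov averages of the flux.
-/

open Function (uncurry)

/-- A smooth step rising from `0` at `s` to `1` at `s + 1 / (n + 1)`. -/
noncomputable def smoothStep (n : ℕ) (s r : ℝ) : ℝ := Real.smoothTransition ((n + 1) * (r - s))

/-- A smooth approximation of the indicator function of `Ioc s t`, for `s ≤ t`. -/
noncomputable def smoothIndicator (n : ℕ) (s t r : ℝ) : ℝ := smoothStep n s r - smoothStep n t r

section SmoothIndicator

variable {n : ℕ} {s t r : ℝ}

lemma smoothStep_of_le (h : r ≤ s) : smoothStep n s r = 0 :=
  Real.smoothTransition.zero_of_nonpos <|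
    mul_nonpos_of_nonneg_of_nonpos (by positivity) (sub_nonpos.2 h)

lemma smoothStep_of_ge (h : s + 1 / (n + 1) ≤ r) : smoothStep n s r = 1 :=
  Real.smoothTransition.one_of_one_le <| by
    rw [← div_le_iff₀' (by positivity)]; linarith

lemma smoothStep_mem_Icc (n : ℕ) (s r : ℝ) : smoothStep n s r ∈ Icc 0 1 :=
  ⟨Real.smoothTransition.nonneg _, Real.smoothTransition.le_one _⟩

lemma tendsto_smoothStep (s r : ℝ) :
    Tendsto (fun n => smoothStep n s r) atTop (𝓝 ((Ioi s).indicator 1 r)) := by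
  rcases le_or_gt r s with h | h
  · simp [smoothStep_of_le h, h]
  · have hlt := tendsto_one_div_add_atTop_nhds_zero_nat (𝕜 := ℝ) |>.eventually_lt_const
      (sub_pos.2 h)
    rw [indicator_of_mem (mem_Ioi.2 h)]
    refine tendsto_const_nhds.congr' ?_
    filter_upwards [hlt] with n hn
    exact (smoothStep_of_ge (by linarith)).symm

lemma contDiff_smoothStep (n : ℕ) (s : ℝ) : ContDiff ℝ (⊤ : ℕ∞) (smoothStep n s) := by
  unfold smoothStep
  fun_prop

lemma contDiff_smoothIndicator (n : ℕ) (s t : ℝ) :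
    ContDiff ℝ (⊤ : ℕ∞) (smoothIndicator n s t) :=
  (contDiff_smoothStep n s).sub (contDiff_smoothStep n t)

lemma abs_smoothIndicator_le_one (n : ℕ) (s t r : ℝ) : |smoothIndicator n s t r| ≤ 1 := by
  have hs := smoothStep_mem_Icc n s r
  have ht := smoothStep_mem_Icc n t r
  exact abs_sub_le_iff.2 ⟨by linarith [hs.2, ht.1], by linarith [hs.1, ht.2]⟩

lemma smoothIndicator_eq_zero (hst : s ≤ t) (hr : r ∉ Icc s (t + 1 / (n + 1))) :
    smoothIndicator n s t r = 0 := by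
  rcases lt_or_ge r s with h | h
  · simp [smoothIndicator, smoothStep_of_le h.le, smoothStep_of_le (h.le.trans hst)]
  · have h' : t + 1 / (n + 1) < r := not_le.1 fun h' => hr ⟨h, h'⟩
    rw [smoothIndicator, smoothStep_of_ge (by linarith), smoothStep_of_ge h'.le, sub_self]

lemma tsupport_smoothIndicator_subset (hst : s ≤ t) :
    tsupport (smoothIndicator n s t) ⊆ Icc s (t + 1 / (n + 1)) :=
  closure_minimal (fun _ hr => not_not.1 fun h => hr (smoothIndicator_eq_zero hst h)) isClosed_Icc

lemma hasCompactSupport_smoothIndicator (hst : s ≤ t) :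
    HasCompactSupport (smoothIndicator n s t) :=
  isCompact_Icc.of_isClosed_subset (isClosed_tsupport _) (tsupport_smoothIndicator_subset hst)

lemma tendsto_smoothIndicator (hst : s ≤ t) (r : ℝ) :
    Tendsto (fun n => smoothIndicator n s t r) atTop (𝓝 ((Ioc s t).indicator 1 r)) := by
  have hIoc : (Ioc s t).indicator (1 : ℝ → ℝ) r
      = (Ioi s).indicator 1 r - (Ioi t).indicator 1 r := by
    rw [← Ioi_sdiff_Ioi, indicator_sdiff (Ioi_subset_Ioi hst), Pi.sub_apply]
  exact hIoc ▸ (tendsto_smoothStep s r).sub (tendsto_smoothStep t r)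

lemma tendsto_integral_smoothIndicator_mul {H : ℕ → ℝ → ℝ} {H₀ : ℝ → ℝ} {C : ℝ}
    (hmeas : ∀ n, AEStronglyMeasurable (H n)) (hC : ∀ n r, |H n r| ≤ C)
    (hlim : ∀ r, Tendsto (fun n => H n r) atTop (𝓝 (H₀ r))) (hst : s ≤ t) :
    Tendsto (fun n => ∫ r, smoothIndicator n s t r * H n r) atTop (𝓝 (∫ r in s..t, H₀ r)) := by
  have hind : ∫ r in s..t, H₀ r = ∫ r, (Ioc s t).indicator 1 r * H₀ r := by
    rw [intervalIntegral.integral_of_le hst, ← integral_indicator measurableSet_Ioc]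
    simp only [indicator_apply, Pi.one_apply, ite_mul, one_mul, zero_mul]
  rw [hind]
  refine tendsto_integral_of_dominated_convergence ((Icc s (t + 1)).indicator fun _ => C)
    (fun n => (contDiff_smoothIndicator n s t).continuous.aestronglyMeasurable.mul (hmeas n))
    ((integrable_indicator_iff measurableSet_Icc).2 (integrableOn_const (by simp)))
    (fun n => ae_of_all _ fun r => ?_) (ae_of_all _ fun r =>
      (tendsto_smoothIndicator hst r).mul (hlim r))
  by_cases hr : r ∈ Icc s (t + 1)
  · rw [indicator_of_mem hr, norm_mul]
    simpa using mul_le_mul (abs_smoothIndicator_le_one n s t r) (hC n r) (abs_nonneg _) zero_le_one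
  · have hn : 1 / ((n : ℝ) + 1) ≤ 1 := by
      rw [div_le_one (by positivity)]; linarith [n.cast_nonneg (α := ℝ)]
    rw [smoothIndicator_eq_zero hst fun h => hr ⟨h.1, h.2.trans (by linarith)⟩, zero_mul, norm_zero]
    exact indicator_nonneg (fun _ _ => (abs_nonneg _).trans (hC 0 0)) r

lemma deriv_smoothStep (n : ℕ) (s r : ℝ) :
    deriv (smoothStep n s) r = (n + 1) * deriv Real.smoothTransition ((n + 1) * (r - s)) := by
  have h := deriv_comp_sub_const (fun r => Real.smoothTransition ((n + 1) * r)) s r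
  exact h.trans (deriv_comp_mul_left (n + 1 : ℝ) Real.smoothTransition (r - s))

lemma deriv_smoothTransition_of_notMem {v : ℝ} (hv : v ∉ Ioc 0 1) :
    deriv Real.smoothTransition v = 0 := by
  rcases le_or_gt v 0 with h | h
  · exact IsLocalMin.deriv_eq_zero <| Eventually.of_forall fun w => by
      simpa [Real.smoothTransition.zero_of_nonpos h] using Real.smoothTransition.nonneg w
  · have h1 : 1 ≤ v := not_lt.1 fun h1 => hv ⟨h, h1.le⟩
    exact IsLocalMax.deriv_eq_zero <| Eventually.of_forall fun w => by
      simpa [Real.smoothTransition.one_of_one_le h1] using Real.smoothTransition.le_one w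

lemma integral_mul_deriv_smoothStep (A : ℝ → ℝ) (n : ℕ) (s : ℝ) :
    ∫ r, A r * deriv (smoothStep n s) r
      = ∫ v in 0..1, A (s + v * (1 / (n + 1))) * deriv Real.smoothTransition v := by
  have hn : (0 : ℝ) < n + 1 := by positivity
  set B : ℝ → ℝ := fun v => A (s + v * (1 / (n + 1))) * deriv Real.smoothTransition v with hB
  calc ∫ r, A r * deriv (smoothStep n s) r
      = ∫ r, (n + 1) * B ((n + 1) * (r - s)) := by
        congr 1 with r
        rw [deriv_smoothStep, hB]
        field_simp
        ring_nf
    _ = ∫ v, B v := by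
        rw [integral_const_mul, integral_sub_right_eq_self (fun r => B ((n + 1) * r)),
          Measure.integral_comp_mul_left B, abs_of_pos (inv_pos.2 hn), smul_eq_mul,
          mul_inv_cancel_left₀ hn.ne']
    _ = ∫ v in 0..1, B v := by
        rw [intervalIntegral.integral_of_le zero_le_one]
        exact (setIntegral_eq_integral_of_forall_compl_eq_zero fun v hv => by
          simp only [hB, deriv_smoothTransition_of_notMem hv, mul_zero]).symm

lemma continuous_deriv_smoothTransition : Continuous (deriv Real.smoothTransition) :=
  Real.smoothTransition.contDiff.continuous_deriv (n := 1) le_rfl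

lemma integral_deriv_smoothTransition : ∫ v in 0..1, deriv Real.smoothTransition v = 1 := by
  rw [intervalIntegral.integral_deriv_eq_sub
    (fun _ _ => Real.smoothTransition.contDiffAt.differentiableAt one_ne_zero)
    (continuous_deriv_smoothTransition.intervalIntegrable _ _)]
  simp

lemma tendsto_integral_mul_deriv_smoothStep {A : ℝ → ℝ} (hA : Continuous A) (s : ℝ) :
    Tendsto (fun n => ∫ r, A r * deriv (smoothStep n s) r) atTop (𝓝 (A s)) := by
  have := continuous_deriv_smoothTransition
  have hcont : Continuous fun ε : ℝ =>
      ∫ v in 0..1, A (s + v * ε) * deriv Real.smoothTransition v :=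
    intervalIntegral.continuous_parametric_intervalIntegral_of_continuous' (by fun_prop) 0 1
  have h := (hcont.tendsto 0).comp (tendsto_one_div_add_atTop_nhds_zero_nat (𝕜 := ℝ))
  simp only [mul_zero, add_zero, intervalIntegral.integral_const_mul,
    integral_deriv_smoothTransition, mul_one] at h
  exact h.congr fun n => (integral_mul_deriv_smoothStep A n s).symm

lemma abs_integral_mul_deriv_smoothStep_le {A : ℝ → ℝ} {M : ℝ} (hM : ∀ r, |A r| ≤ M)
    (n : ℕ) (s : ℝ) : |∫ r, A r * deriv (smoothStep n s) r| ≤ M := by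
  rw [integral_mul_deriv_smoothStep, ← Real.norm_eq_abs]
  calc _ ≤ ∫ v in 0..1, M * deriv Real.smoothTransition v := by
        refine intervalIntegral.norm_integral_le_of_norm_le zero_le_one (ae_of_all _ fun v _ => ?_)
          ((continuous_deriv_smoothTransition.const_mul M).intervalIntegrable _ _)
        rw [norm_mul, Real.norm_eq_abs,
          Real.norm_of_nonneg Real.smoothTransition.monotone.deriv_nonneg]
        exact mul_le_mul_of_nonneg_right (hM _) Real.smoothTransition.monotone.deriv_nonneg
    _ = M := by
        rw [intervalIntegral.integral_const_mul, integral_deriv_smoothTransition, mul_one]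

lemma integral_mul_deriv_smoothIndicator {A : ℝ → ℝ} (hA : Continuous A) (n : ℕ) (s t : ℝ) :
    ∫ r, A r * deriv (smoothIndicator n s t) r
      = (∫ r, A r * deriv (smoothStep n s) r) - ∫ r, A r * deriv (smoothStep n t) r := by
  have hint (s : ℝ) : Integrable fun r => A r * deriv (smoothStep n s) r := by
    refine (hA.mul ((contDiff_smoothStep n s).continuous_deriv
      (by simp))).integrable_of_hasCompactSupport (.intro (K := Icc s (s + 1 / (n + 1)))
        isCompact_Icc fun r hr => ?_)
    have hn : (0 : ℝ) < n + 1 := by positivity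
    rw [Pi.mul_apply, deriv_smoothStep, deriv_smoothTransition_of_notMem, mul_zero, mul_zero]
    refine fun h => hr ⟨by linarith [pos_of_mul_pos_right h.1 hn.le], ?_⟩
    linarith [(le_div_iff₀' hn).2 h.2]
  rw [← integral_sub (hint s) (hint t)]
  congr 1 with r
  rw [← mul_sub]
  congr 1
  exact deriv_sub ((contDiff_smoothStep n s).differentiable (by simp) r)
    ((contDiff_smoothStep n t).differentiable (by simp) r)

lemma tendsto_integral_smoothIndicator_mul_integral_deriv {G : ℝ → ℝ → ℝ} {M x y : ℝ}
    (hmeas : Measurable (uncurry G)) (hM : ∀ z r, |G z r| ≤ M) (hcont : ∀ z, Continuous (G z))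
    (hxy : x ≤ y) (s t : ℝ) :
    Tendsto (fun n => ∫ z, smoothIndicator n x y z *
        ∫ r, G z r * deriv (smoothIndicator n s t) r)
      atTop (𝓝 (∫ z in x..y, (G z s - G z t))) := by
  refine tendsto_integral_smoothIndicator_mul (C := M + M) (fun n => ?_) (fun n z => ?_)
    (fun z => ?_) hxy
  · have hd : Measurable (deriv (smoothIndicator n s t)) := measurable_deriv _
    exact (StronglyMeasurable.integral_prod_right'
      (f := fun p : ℝ × ℝ => G p.1 p.2 * deriv (smoothIndicator n s t) p.2)
      (hmeas.mul (hd.comp measurable_snd)).stronglyMeasurable).aestronglyMeasurable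
  · rw [integral_mul_deriv_smoothIndicator (hcont z)]
    exact (abs_sub _ _).trans (add_le_add (abs_integral_mul_deriv_smoothStep_le (hM z) n s)
      (abs_integral_mul_deriv_smoothStep_le (hM z) n t))
  · simp only [integral_mul_deriv_smoothIndicator (hcont z)]
    exact (tendsto_integral_mul_deriv_smoothStep (hcont z) s).sub
      (tendsto_integral_mul_deriv_smoothStep (hcont z) t)

end SmoothIndicator

section FluxBalance

variable {u F : ℝ → ℝ → ℝ} {M N α β a b x y s t : ℝ}

lemma eventually_add_one_div_lt (h : x < y) : ∀ᶠ n : ℕ in atTop, x + 1 / ((n : ℝ) + 1) < y := by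
  filter_upwards [tendsto_one_div_add_atTop_nhds_zero_nat (𝕜 := ℝ) |>.eventually_lt_const
    (sub_pos.2 h)] with n hn
  linarith

lemma integrable_mul_prod_of_bdd {G : ℝ → ℝ → ℝ} {f g : ℝ → ℝ} (hG : Measurable (uncurry G))
    (hM : ∀ x t, |G x t| ≤ M) (hf : Integrable f) (hg : Integrable g) :
    Integrable fun p : ℝ × ℝ => G p.1 p.2 * (f p.1 * g p.2) :=
  (hf.mul_prod hg).bdd_mul hG.aestronglyMeasurable (ae_of_all _ fun p => hM p.1 p.2)

/-- The weak formulation of `u_t = F_x` on the rectangle `(α, β) × (a, b)`. -/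
def IsWeakBalance (u F : ℝ → ℝ → ℝ) (α β a b : ℝ) : Prop :=
  ∀ φ : ℝ → ℝ → ℝ, ContDiff ℝ (⊤ : ℕ∞) (uncurry φ) → HasCompactSupport (uncurry φ) →
    tsupport (uncurry φ) ⊆ Ioo α β ×ˢ Ioo a b →
    ∫ p : ℝ × ℝ, (u p.1 p.2 * deriv (fun s => φ p.1 s) p.2
      - F p.1 p.2 * deriv (fun y => φ y p.2) p.1) = 0

lemma IsWeakBalance.integral_tensor_eq (h : IsWeakBalance u F α β a b)
    (hu : Measurable (uncurry u)) (huN : ∀ x t, |u x t| ≤ N)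
    (hF : Measurable (uncurry F)) (hFM : ∀ x t, |F x t| ≤ M) {f g : ℝ → ℝ}
    (hf : ContDiff ℝ (⊤ : ℕ∞) f) (hfc : HasCompactSupport f) (hfs : tsupport f ⊆ Ioo α β)
    (hg : ContDiff ℝ (⊤ : ℕ∞) g) (hgc : HasCompactSupport g) (hgs : tsupport g ⊆ Ioo a b) :
    ∫ x, f x * ∫ t, u x t * deriv g t = ∫ t, g t * ∫ x, F x t * deriv f x := by
  have hzero : ∀ p : ℝ × ℝ, p ∉ tsupport f ×ˢ tsupport g → f p.1 * g p.2 = 0 := fun p hp => by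
    rcases not_and_or.1 hp with hp | hp <;> simp [image_eq_zero_of_notMem_tsupport hp]
  have hsupp : tsupport (uncurry fun x t => f x * g t) ⊆ tsupport f ×ˢ tsupport g :=
    closure_minimal (fun p hp => not_not.1 fun h => hp (hzero p h))
      ((isClosed_tsupport f).prod (isClosed_tsupport g))
  have hint {k : ℝ → ℝ} (hk : ContDiff ℝ (⊤ : ℕ∞) k) (hkc : HasCompactSupport k) :
      Integrable k ∧ Integrable (deriv k) :=
    ⟨hk.continuous.integrable_of_hasCompactSupport hkc,
      (hk.continuous_deriv (by simp)).integrable_of_hasCompactSupport hkc.deriv⟩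
  have hI₁ := integrable_mul_prod_of_bdd hu huN (hint hf hfc).1 (hint hg hgc).2
  have hI₂ := integrable_mul_prod_of_bdd hF hFM (hint hf hfc).2 (hint hg hgc).1
  have hweak := h (fun x t => f x * g t)
    ((hf.comp contDiff_fst).mul (hg.comp contDiff_snd))
    (.intro (hfc.prod hgc) hzero) (hsupp.trans (prod_mono hfs hgs))
  simp only [deriv_const_mul_field, deriv_mul_const_field] at hweak
  rw [integral_sub hI₁ hI₂, sub_eq_zero, Measure.volume_eq_prod, integral_prod _ hI₁,
    integral_prod_symm _ hI₂] at hweak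
  simpa only [← integral_const_mul, mul_left_comm, mul_comm] using hweak

theorem IsWeakBalance.integral_sub_eq (h : IsWeakBalance u F α β a b)
    (hu : Measurable (uncurry u)) (huN : ∀ x t, |u x t| ≤ N) (hut : ∀ x, Continuous (u x))
    (hF : Measurable (uncurry F)) (hFM : ∀ x t, |F x t| ≤ M) (hFx : ∀ t, Continuous (F · t))
    (hx : α < x) (hxy : x ≤ y) (hy : y < β) (hs : a < s) (hst : s ≤ t) (ht : t < b) :
    ∫ τ in s..t, (F y τ - F x τ) = ∫ z in x..y, (u z t - u z s) := by
  have hlim₁ := tendsto_integral_smoothIndicator_mul_integral_deriv hu huN hut hxy s t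
  have hlim₂ := tendsto_integral_smoothIndicator_mul_integral_deriv (G := fun τ z => F z τ)
    (hF.comp measurable_swap) (fun τ z => hFM z τ) hFx hst x y
  suffices heq : ∫ z in x..y, (u z s - u z t) = ∫ τ in s..t, (F x τ - F y τ) by
    simpa only [← intervalIntegral.integral_neg, neg_sub] using congrArg Neg.neg heq.symm
  refine tendsto_nhds_unique (hlim₁.congr' ?_) hlim₂
  filter_upwards [eventually_add_one_div_lt hy, eventually_add_one_div_lt ht] with n hn₁ hn₂
  exact h.integral_tensor_eq hu huN hF hFM (contDiff_smoothIndicator n x y)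
    (hasCompactSupport_smoothIndicator hxy)
    ((tsupport_smoothIndicator_subset hxy).trans (Icc_subset_Ioo hx hn₁))
    (contDiff_smoothIndicator n s t) (hasCompactSupport_smoothIndicator hst)
    ((tsupport_smoothIndicator_subset hst).trans (Icc_subset_Ioo hs hn₂))

lemma intervalIntegrable_of_bdd (hF : Measurable (uncurry F)) (hFM : ∀ x t, |F x t| ≤ M)
    (x s t : ℝ) : IntervalIntegrable (F x) volume s t :=
  (intervalIntegrable_const (c := M)).mono_fun hF.of_uncurry_left.aestronglyMeasurable
    (ae_of_all _ fun τ => (hFM x τ).trans (le_abs_self M))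

theorem IsWeakBalance.hasDerivAt_integral (h : IsWeakBalance u F α β a b)
    (hu : Continuous (uncurry u)) (huN : ∀ x t, |u x t| ≤ N)
    (hF : Measurable (uncurry F)) (hFM : ∀ x t, |F x t| ≤ M) (hFx : ∀ t, Continuous (F · t))
    (hx : x ∈ Ioo α β) (hs : a < s) (hst : s ≤ t) (ht : t < b) :
    HasDerivAt (fun y => ∫ τ in s..t, F y τ) (u x t - u x s) x := by
  obtain ⟨x₀, hx₀, hx₀x⟩ := exists_between hx.1
  have hcont : Continuous fun z => u z t - u z s := by fun_prop
  have hderiv := (intervalIntegral.integral_hasDerivAt_right (hcont.intervalIntegrable x₀ x)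
    (hcont.stronglyMeasurableAtFilter _ _) hcont.continuousAt).add_const (∫ τ in s..t, F x₀ τ)
  refine hderiv.congr_of_eventuallyEq ?_
  filter_upwards [Ioo_mem_nhds hx₀x hx.2] with y hy
  rw [← h.integral_sub_eq hu.measurable huN (fun x => by fun_prop) hF hFM hFx hx₀ hy.1.le hy.2
    hs hst ht, intervalIntegral.integral_sub (intervalIntegrable_of_bdd hF hFM y s t)
    (intervalIntegrable_of_bdd hF hFM x₀ s t), sub_add_cancel]

end FluxBalance

/-- The backward Steklov average `h⁻¹ ∫_{t-h}^t f`, parametrised so as to make sense at `h = 0`. -/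
noncomputable def steklov (h : ℝ) (f : ℝ → ℝ) (t : ℝ) : ℝ := ∫ r in 0..1, f (t - h * r)

section Steklov

variable {f : ℝ → ℝ} {M t : ℝ}

lemma mul_steklov (h : ℝ) (f : ℝ → ℝ) (t : ℝ) :
    h * steklov h f t = ∫ τ in (t - h)..t, f τ := by
  simp [steklov, intervalIntegral.mul_integral_comp_sub_mul]

lemma abs_steklov_le (hM : ∀ t, |f t| ≤ M) (h t : ℝ) : |steklov h f t| ≤ M := by
  simpa [steklov] using intervalIntegral.norm_integral_le_of_norm_le_const (a := 0) (b := 1)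
    (f := fun r => f (t - h * r)) fun r _ => hM _

lemma continuous_steklov (hf : Continuous f) (t : ℝ) : Continuous fun h => steklov h f t :=
  intervalIntegral.continuous_parametric_intervalIntegral_of_continuous' (by fun_prop) 0 1

lemma measurable_steklov {F : ℝ → ℝ → ℝ} (hF : Measurable (uncurry F)) (h : ℝ) :
    Measurable fun p : ℝ × ℝ => steklov h (F p.1) p.2 := by
  have hF' : Measurable fun q : (ℝ × ℝ) × ℝ => F q.1.1 (q.1.2 - h * q.2) :=
    hF.comp (by fun_prop : Measurable fun q : (ℝ × ℝ) × ℝ => (q.1.1, q.1.2 - h * q.2))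
  simp only [steklov, intervalIntegral.integral_of_le zero_le_one]
  exact hF'.stronglyMeasurable.integral_prod_right'.measurable

lemma ae_tendsto_steklov (hf : LocallyIntegrable f) {h : ℕ → ℝ} (hpos : ∀ n, 0 < h n)
    (hlim : Tendsto h atTop (𝓝 0)) :
    ∀ᵐ t, Tendsto (fun n => steklov (h n) f t) atTop (𝓝 (f t)) := by
  have hne : Tendsto (fun n => -h n) atTop (𝓝[≠] 0) :=
    tendsto_nhdsWithin_iff.2 ⟨by simpa using hlim.neg, .of_forall fun n => by simp [(hpos n).ne']⟩
  have hint (c d : ℝ) : IntervalIntegrable f volume c d :=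
    intervalIntegrable_iff.2 <|
      (hf.integrableOn_isCompact isCompact_uIcc).mono_set uIoc_subset_uIcc
  filter_upwards [LocallyIntegrable.ae_hasDerivAt_integral hf] with t ht
  refine ((ht 0).tendsto_slope_zero.comp hne).congr fun n => ?_
  rw [Function.comp_apply, ← sub_eq_add_neg, intervalIntegral.integral_interval_sub_left
    (hint _ _) (hint _ _), intervalIntegral.integral_symm, ← mul_steklov, smul_eq_mul, inv_neg,
    neg_mul_neg, inv_mul_cancel_left₀ (hpos n).ne']

lemma integral_sub_comp_sub (hf : Continuous f) (h s t : ℝ) :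
    ∫ τ in s..t, (f τ - f (τ - h)) = h * steklov h f t - h * steklov h f s := by
  have hint (c d : ℝ) : IntervalIntegrable f volume c d := hf.intervalIntegrable c d
  rw [intervalIntegral.integral_sub (hint s t)
    ((by fun_prop : Continuous fun τ => f (τ - h)).intervalIntegrable s t),
    intervalIntegral.integral_comp_sub_right, mul_steklov, mul_steklov,
    intervalIntegral.integral_interval_sub_interval_comm' (hint _ _) (hint _ _) (hint _ _)]

end Steklov

/-- The spatial derivative `∂ₓu` of `u = u(x, t)`. -/
noncomputable def spaceDeriv (u : ℝ → ℝ → ℝ) (x t : ℝ) : ℝ := deriv (fun y => u y t) x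

lemma measurable_spaceDeriv {u : ℝ → ℝ → ℝ} (hu : Continuous (uncurry u)) :
    Measurable (uncurry (spaceDeriv u)) :=
  (measurable_deriv_with_param (f := fun t x => u x t) (hu.comp continuous_swap)).comp
    measurable_swap

lemma hasDerivAt_sq_max_zero (w : ℝ) :
    HasDerivAt (fun w : ℝ => max w 0 ^ 2) (2 * max w 0) w := by
  refine hasDerivAt_iff_isLittleO.2 <| (Asymptotics.IsBigO.of_bound 1 <| .of_forall fun y => ?_)
    |>.trans_isLittleO (Asymptotics.isLittleO_pow_sub_sub w one_lt_two)
  rw [norm_pow, norm_norm, Real.norm_eq_abs, Real.norm_eq_abs, sq_abs, one_mul, smul_eq_mul, abs_le]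
  rcases le_total w 0 with hw | hw <;> rcases le_total y 0 with hy | hy <;>
    simp only [max_eq_left, max_eq_right, hw, hy] <;> constructor <;> nlinarith

lemma cube_max_zero_sub_le (a b : ℝ) :
    max a 0 ^ 3 - max b 0 ^ 3 ≤ 3 * max a 0 ^ 2 * (a - b) := by
  have hb : b ≤ max b 0 := le_max_left b 0
  have hb₀ : 0 ≤ max b 0 := le_max_right b 0
  rcases le_total a 0 with ha | ha
  · rw [max_eq_right ha]
    have : 0 ≤ max b 0 ^ 3 := by positivity
    nlinarith
  · rw [max_eq_left ha]
    nlinarith [mul_nonneg (sq_nonneg (a - max b 0)) (by linarith : 0 ≤ 2 * a + max b 0),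
      mul_nonneg (sq_nonneg a) (sub_nonneg.2 hb)]

/-- `w` is a subsolution of `w_t ≤ F_x` (in the form integrated over time) on
`[α, β] × (a, b)`, with a bounded flux `F` satisfying `F w_x ≥ 0`. -/
structure IsFluxSubsolution (w F : ℝ → ℝ → ℝ) (α β a b : ℝ) : Prop where
  continuous : Continuous (uncurry w)
  contDiff : ∀ t ∈ Ioo a b, ContDiff ℝ 1 (w · t)
  integrableOn : IntegrableOn (uncurry (spaceDeriv w)) (Icc α β ×ˢ Ioo a b)
  measurable_flux : Measurable (uncurry F)
  flux_bdd : ∃ M, ∀ x t, |F x t| ≤ M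
  flux_mul_nonneg : ∀ x ∈ Icc α β, ∀ t ∈ Ioo a b, 0 ≤ F x t * spaceDeriv w x t
  balance : ∀ s t, a < s → s ≤ t → t < b → ∃ D : ℝ → ℝ, ContinuousOn D (Icc α β) ∧
    ∀ x ∈ Icc α β, HasDerivAt (fun y => ∫ τ in s..t, F y τ) (D x) x ∧ w x t - w x s ≤ D x

namespace IsFluxSubsolution

variable {w F : ℝ → ℝ → ℝ} {α β a b κ : ℝ}

lemma hasDerivAt (h : IsFluxSubsolution w F α β a b) {t : ℝ} (ht : t ∈ Ioo a b) (x : ℝ) :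
    HasDerivAt (w · t) (spaceDeriv w x t) x :=
  ((h.contDiff t ht).differentiable one_ne_zero x).hasDerivAt

/-- The energy `∫ (w - κ)₊³ dx` over `[α, β]`. -/
noncomputable def energy (w : ℝ → ℝ → ℝ) (κ α β t : ℝ) : ℝ := ∫ x in α..β, max (w x t - κ) 0 ^ 3

/-- The space derivative of `3 (w - κ)₊²`, the multiplier belonging to the energy. -/
noncomputable def multiplierDeriv (w : ℝ → ℝ → ℝ) (κ x t : ℝ) : ℝ :=
  6 * max (w x t - κ) 0 * spaceDeriv w x t

lemma hasDerivAt_multiplier (h : IsFluxSubsolution w F α β a b) {t : ℝ} (ht : t ∈ Ioo a b)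
    (κ x : ℝ) :
    HasDerivAt (fun y => 3 * max (w y t - κ) 0 ^ 2) (multiplierDeriv w κ x t) x := by
  have := ((hasDerivAt_sq_max_zero (w x t - κ)).comp x
    ((h.hasDerivAt ht x).sub_const κ)).const_mul 3
  exact this.congr_deriv (by rw [multiplierDeriv]; ring)

lemma continuous_multiplierDeriv (h : IsFluxSubsolution w F α β a b) {t : ℝ} (ht : t ∈ Ioo a b)
    (κ : ℝ) : Continuous (multiplierDeriv w κ · t) := by
  have hw := h.continuous
  have hd : Continuous (spaceDeriv w · t) := (h.contDiff t ht).continuous_deriv le_rfl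
  unfold multiplierDeriv
  fun_prop

lemma energy_sub_le (h : IsFluxSubsolution w F α β a b) (hαβ : α ≤ β) {s t : ℝ}
    (hs : a < s) (hst : s ≤ t) (ht : t < b) (hα : w α t ≤ κ) (hβ : w β t ≤ κ) :
    energy w κ α β t - energy w κ α β s
      ≤ -∫ x in α..β, multiplierDeriv w κ x t * ∫ τ in s..t, F x τ := by
  obtain ⟨D, hD, hbal⟩ := h.balance s t hs hst ht
  have hw := h.continuous
  have ht' : t ∈ Ioo a b := ⟨hs.trans_le hst, ht⟩
  have hcube (t : ℝ) : Continuous fun x => max (w x t - κ) 0 ^ 3 := by fun_prop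
  have hIcc : uIcc α β = Icc α β := uIcc_of_le hαβ
  have hDint : IntervalIntegrable D volume α β := (hIcc ▸ hD).intervalIntegrable
  have hmulD : IntervalIntegrable (fun x => 3 * max (w x t - κ) 0 ^ 2 * D x) volume α β :=
    hDint.continuousOn_mul (by fun_prop)
  calc energy w κ α β t - energy w κ α β s
      = ∫ x in α..β, (max (w x t - κ) 0 ^ 3 - max (w x s - κ) 0 ^ 3) :=
        (intervalIntegral.integral_sub ((hcube t).intervalIntegrable _ _)
          ((hcube s).intervalIntegrable _ _)).symm
    _ ≤ ∫ x in α..β, 3 * max (w x t - κ) 0 ^ 2 * D x := by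
        refine intervalIntegral.integral_mono_on hαβ
          (((hcube t).sub (hcube s)).intervalIntegrable _ _) hmulD fun x hx => ?_
        refine (cube_max_zero_sub_le _ _).trans (mul_le_mul_of_nonneg_left ?_ (by positivity))
        linarith [(hbal x hx).2]
    _ = _ := by
        rw [intervalIntegral.integral_mul_deriv_eq_deriv_mul
          (fun x _ => h.hasDerivAt_multiplier ht' κ x) (fun x hx => (hbal x (hIcc ▸ hx)).1)
          ((h.continuous_multiplierDeriv ht' κ).intervalIntegrable _ _) hDint,
          max_eq_right (sub_nonpos.2 hα), max_eq_right (sub_nonpos.2 hβ)]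
        ring

lemma continuous_energy (hw : Continuous (uncurry w)) (κ α β : ℝ) :
    Continuous (energy w κ α β) :=
  intervalIntegral.continuous_parametric_intervalIntegral_of_continuous'
    (f := fun t x => max (w x t - κ) 0 ^ 3) (by fun_prop) α β

lemma integrableOn_multiplierDeriv (h : IsFluxSubsolution w F α β a b) {t₁ t₂ : ℝ} (h₁ : a < t₁)
    (h₂ : t₂ < b) (κ : ℝ) :
    IntegrableOn (uncurry (multiplierDeriv w κ)) (Ioc α β ×ˢ Ioc t₁ t₂) := by
  have hw := h.continuous
  refine IntegrableOn.mono_set ?_ (prod_mono Ioc_subset_Icc_self Ioc_subset_Icc_self)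
  exact (h.integrableOn.mono_set (prod_mono subset_rfl (Icc_subset_Ioo h₁ h₂))).continuousOn_mul
    (g := fun p : ℝ × ℝ => 6 * max (w p.1 p.2 - κ) 0) (by fun_prop)
    (isCompact_Icc.prod isCompact_Icc)

lemma integrableOn_multiplierDeriv_mul_steklov (h : IsFluxSubsolution w F α β a b) {t₁ t₂ : ℝ}
    (h₁ : a < t₁) (h₂ : t₂ < b) (κ r : ℝ) :
    IntegrableOn (fun p : ℝ × ℝ => multiplierDeriv w κ p.1 p.2 * steklov r (F p.1) p.2)
      (Ioc α β ×ˢ Ioc t₁ t₂) := by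
  obtain ⟨M, hM⟩ := h.flux_bdd
  exact (h.integrableOn_multiplierDeriv h₁ h₂ κ).mul_bdd (c := M)
    (measurable_steklov h.measurable_flux r).aestronglyMeasurable
    (.of_forall fun p => abs_steklov_le (hM p.1) _ _)

lemma steklov_energy_sub_le (h : IsFluxSubsolution w F α β a b) (hαβ : α ≤ β) {t₁ t₂ r : ℝ}
    (h₁₂ : t₁ ≤ t₂) (h₂ : t₂ < b) (hr : 0 < r) (hrt : r < t₁ - a)
    (hα : ∀ t ∈ Icc t₁ t₂, w α t ≤ κ) (hβ : ∀ t ∈ Icc t₁ t₂, w β t ≤ κ) :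
    steklov r (energy w κ α β) t₂ - steklov r (energy w κ α β) t₁
      ≤ -∫ p in Ioc α β ×ˢ Ioc t₁ t₂, multiplierDeriv w κ p.1 p.2 * steklov r (F p.1) p.2 := by
  have hE := continuous_energy h.continuous κ α β
  have hint := h.integrableOn_multiplierDeriv_mul_steklov (t₁ := t₁) (by linarith) h₂ κ r
  rw [IntegrableOn, Measure.volume_eq_prod, ← Measure.prod_restrict] at hint
  have hpoint : ∀ t ∈ Icc t₁ t₂, energy w κ α β t - energy w κ α β (t - r)
      ≤ -r * ∫ x in Ioc α β, multiplierDeriv w κ x t * steklov r (F x) t := fun t ht => by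
    refine (h.energy_sub_le hαβ (by linarith [ht.1]) (by linarith) (ht.2.trans_lt h₂)
      (hα t ht) (hβ t ht)).trans_eq ?_
    simp_rw [← mul_steklov, mul_left_comm _ r]
    rw [intervalIntegral.integral_const_mul, intervalIntegral.integral_of_le hαβ, neg_mul]
  refine le_of_mul_le_mul_left ?_ hr
  calc r * (steklov r (energy w κ α β) t₂ - steklov r (energy w κ α β) t₁)
      = ∫ t in t₁..t₂, (energy w κ α β t - energy w κ α β (t - r)) := by
        rw [integral_sub_comp_sub hE, mul_sub]
    _ ≤ ∫ t in t₁..t₂, -r * ∫ x in Ioc α β, multiplierDeriv w κ x t * steklov r (F x) t :=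
        intervalIntegral.integral_mono_on h₁₂ (Continuous.intervalIntegrable (by fun_prop) _ _)
          ((intervalIntegrable_iff_integrableOn_Ioc_of_le h₁₂).2
            (hint.integral_prod_right.const_mul _)) hpoint
    _ = _ := by
        rw [intervalIntegral.integral_const_mul, intervalIntegral.integral_of_le h₁₂,
          Measure.volume_eq_prod, ← Measure.prod_restrict, integral_prod_symm _ hint]
        ring

lemma tendsto_integral_multiplierDeriv_mul_steklov (h : IsFluxSubsolution w F α β a b)
    {t₁ t₂ : ℝ} (h₁ : a < t₁) (h₂ : t₂ < b) (κ : ℝ) {r : ℕ → ℝ} (hpos : ∀ n, 0 < r n)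
    (hlim : Tendsto r atTop (𝓝 0)) :
    Tendsto (fun n => ∫ p in Ioc α β ×ˢ Ioc t₁ t₂,
        multiplierDeriv w κ p.1 p.2 * steklov (r n) (F p.1) p.2) atTop
      (𝓝 (∫ p in Ioc α β ×ˢ Ioc t₁ t₂, multiplierDeriv w κ p.1 p.2 * F p.1 p.2)) := by
  obtain ⟨M, hM⟩ := h.flux_bdd
  have hF := h.measurable_flux
  have hK := h.integrableOn_multiplierDeriv h₁ h₂ κ
  have hlocal (x : ℝ) : LocallyIntegrable (F x) :=
    (locallyIntegrable_const M).mono hF.of_uncurry_left.aestronglyMeasurable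
      (.of_forall fun t => (hM x t).trans (le_abs_self M))
  have hae : ∀ᵐ p : ℝ × ℝ, Tendsto (fun n => steklov (r n) (F p.1) p.2) atTop (𝓝 (F p.1 p.2)) := by
    rw [Measure.volume_eq_prod, Measure.ae_prod_iff_ae_ae]
    · exact .of_forall fun x => ae_tendsto_steklov (hlocal x) hpos hlim
    · exact measurableSet_tendsto_fun (fun n => measurable_steklov hF (r n)) hF
  refine tendsto_integral_of_dominated_convergence _
    (fun n => (h.integrableOn_multiplierDeriv_mul_steklov h₁ h₂ κ (r n)).aestronglyMeasurable)
    (hK.norm.mul_const M) (fun n => .of_forall fun p => ?_) ?_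
  · rw [norm_mul]
    exact mul_le_mul_of_nonneg_left (abs_steklov_le (hM p.1) _ _) (norm_nonneg _)
  · exact ae_restrict_of_ae (hae.mono fun p hp => hp.const_mul _)

lemma energy_le (h : IsFluxSubsolution w F α β a b) (hαβ : α ≤ β) {t₁ t₂ : ℝ} (h₁ : a < t₁)
    (h₁₂ : t₁ ≤ t₂) (h₂ : t₂ < b) (hα : ∀ t ∈ Icc t₁ t₂, w α t ≤ κ)
    (hβ : ∀ t ∈ Icc t₁ t₂, w β t ≤ κ) : energy w κ α β t₂ ≤ energy w κ α β t₁ := by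
  have hE := continuous_energy h.continuous κ α β
  have hr : Tendsto (fun n : ℕ => 1 / ((n : ℝ) + 1)) atTop (𝓝 0) :=
    tendsto_one_div_add_atTop_nhds_zero_nat
  have hsteklov (t : ℝ) : Tendsto (fun n : ℕ => steklov (1 / ((n : ℝ) + 1)) (energy w κ α β) t)
      atTop (𝓝 (energy w κ α β t)) := by
    simpa [steklov, Function.comp_def] using ((continuous_steklov hE t).tendsto 0).comp hr
  have hlim := le_of_tendsto_of_tendsto ((hsteklov t₂).sub (hsteklov t₁))
    (h.tendsto_integral_multiplierDeriv_mul_steklov h₁ h₂ κ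
      (fun n => Nat.one_div_pos_of_nat) hr).neg
    ((hr.eventually (gt_mem_nhds (sub_pos.2 h₁))).mono fun n hn =>
      h.steklov_energy_sub_le hαβ h₁₂ h₂ Nat.one_div_pos_of_nat hn hα hβ)
  have hnonneg : 0 ≤ ∫ p in Ioc α β ×ˢ Ioc t₁ t₂, multiplierDeriv w κ p.1 p.2 * F p.1 p.2 := by
    refine setIntegral_nonneg (measurableSet_Ioc.prod measurableSet_Ioc) fun p hp => ?_
    have := h.flux_mul_nonneg p.1 (Ioc_subset_Icc_self hp.1) p.2
      ⟨h₁.trans hp.2.1, hp.2.2.trans_lt h₂⟩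
    calc 0 ≤ 6 * max (w p.1 p.2 - κ) 0 * (F p.1 p.2 * spaceDeriv w p.1 p.2) := by positivity
      _ = _ := by rw [multiplierDeriv]; ring
  linarith

theorem le_of_le (h : IsFluxSubsolution w F α β a b) (hαβ : α < β) {t₁ t₂ : ℝ} (h₁ : a < t₁)
    (h₁₂ : t₁ ≤ t₂) (h₂ : t₂ < b) (hα : ∀ t ∈ Icc t₁ t₂, w α t ≤ κ)
    (hβ : ∀ t ∈ Icc t₁ t₂, w β t ≤ κ) (hinit : ∀ x ∈ Icc α β, w x t₁ ≤ κ) :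
    ∀ x ∈ Icc α β, w x t₂ ≤ κ := by
  have hw := h.continuous
  by_contra! ⟨x, hx, hlt⟩
  have hpos : 0 < energy w κ α β t₂ :=
    intervalIntegral.integral_pos hαβ (by fun_prop) (fun _ _ => by positivity)
      ⟨x, hx, pow_pos (lt_max_of_lt_left (sub_pos.2 hlt)) 3⟩
  have hzero : energy w κ α β t₁ = 0 :=
    intervalIntegral.integral_zero_ae (.of_forall fun x hx => by
      rw [uIoc_of_le hαβ.le] at hx
      simp [max_eq_right (sub_nonpos.2 (hinit x (Ioc_subset_Icc_self hx)))])
  exact (h.energy_le hαβ.le h₁ h₁₂ h₂ hα hβ).not_gt (hzero ▸ hpos)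

lemma exists_le_of_le (h : IsFluxSubsolution w F α β a b) {t₁ t₂ x η : ℝ} (h₁ : a < t₁)
    (h₁₂ : t₁ ≤ t₂) (h₂ : t₂ < b) (hκη : κ < η) (hα : ∀ t ∈ Icc t₁ t₂, w α t ≤ κ)
    (hβ : ∀ t ∈ Icc t₁ t₂, w β t ≤ κ) (hx : x ∈ Icc α β) (hxη : η ≤ w x t₂) :
    ∃ y ∈ Icc α β, η ≤ w y t₁ := by
  have hw := h.continuous
  by_contra! hlt
  obtain ⟨y, hy, hmax⟩ := isCompact_Icc.exists_isMaxOn ⟨x, hx⟩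
    (f := (w · t₁)) (by fun_prop)
  have hαx : α < β := by
    refine (hx.1.trans hx.2).lt_of_ne fun hαβ => ?_
    obtain rfl : x = α := le_antisymm (hαβ ▸ hx.2) hx.1
    linarith [hα t₂ (right_mem_Icc.2 h₁₂)]
  have := h.le_of_le hαx h₁ h₁₂ h₂ (κ := max κ (w y t₁))
    (fun t ht => (hα t ht).trans (le_max_left _ _)) (fun t ht => (hβ t ht).trans (le_max_left _ _))
    (fun z hz => (hmax hz).trans (le_max_right _ _)) x hx
  exact (hxη.trans this).not_gt (max_lt hκη (hlt y hy))

end IsFluxSubsolution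

/-- The part of space-time after time `t₀` where `0 < u < 1`. -/
def transitionRegion (u : ℝ → ℝ → ℝ) (t₀ : ℝ) : Set (ℝ × ℝ) :=
  {p | t₀ < p.2 ∧ u p.1 p.2 ∈ Ioo 0 1}

/-- A weak solution `u` of `u_t = ((u_x)^m / m)_x` after time `t₀` with values in `[0, 1]` and
nondecreasing profiles. Continuity and regularity of the profiles are asked for at all times (not
only after `t₀`), which can be achieved by freezing `u` before `t₀`. -/
structure IsMonotoneSolution (m t₀ : ℝ) (u : ℝ → ℝ → ℝ) : Prop where
  continuous : Continuous (uncurry u)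
  mem_Icc : ∀ x t, u x t ∈ Icc 0 1
  monotone : ∀ t, Monotone (u · t)
  contDiff : ∀ t, ContDiff ℝ 1 (u · t)
  spaceDeriv_pos : ∀ {x t}, u x t ∈ Ioo 0 1 → 0 < spaceDeriv u x t
  weak : ∀ φ : ℝ → ℝ → ℝ, ContDiff ℝ (⊤ : ℕ∞) (uncurry φ) → HasCompactSupport (uncurry φ) →
    tsupport (uncurry φ) ⊆ transitionRegion u t₀ →
    ∫ p : ℝ × ℝ, (u p.1 p.2 * deriv (fun s => φ p.1 s) p.2
      - spaceDeriv u p.1 p.2 ^ m / m * deriv (fun y => φ y p.2) p.1) = 0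

lemma isOpen_transitionRegion {u : ℝ → ℝ → ℝ} (hu : Continuous (uncurry u)) (t₀ : ℝ) :
    IsOpen (transitionRegion u t₀) :=
  (isOpen_lt continuous_const continuous_snd).inter (isOpen_Ioo.preimage hu)

lemma deriv_slices_eq_zero_of_notMem_tsupport {φ : ℝ → ℝ → ℝ} {p : ℝ × ℝ}
    (hp : p ∉ tsupport (uncurry φ)) :
    deriv (fun s => φ p.1 s) p.2 = 0 ∧ deriv (fun y => φ y p.2) p.1 = 0 := by
  have hzero := notMem_tsupport_iff_eventuallyEq.1 hp
  refine ⟨(Filter.EventuallyEq.deriv_eq (f := fun _ => 0) ?_).trans (deriv_const _ _),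
    (Filter.EventuallyEq.deriv_eq (f := fun _ => 0) ?_).trans (deriv_const _ _)⟩
  · exact (by fun_prop : Continuous fun s => (p.1, s)).continuousAt.eventually hzero
  · exact (by fun_prop : Continuous fun y => (y, p.2)).continuousAt.eventually hzero

section TruncatedFlux

/-- The flux function `s ^ m / m` frozen below `c`. -/
noncomputable def truncFlux (m c s : ℝ) : ℝ := max c s ^ m / m

variable {m c s : ℝ}

lemma truncFlux_of_le (h : c ≤ s) : truncFlux m c s = s ^ m / m := by rw [truncFlux, max_eq_right h]

lemma continuous_truncFlux (hc : 0 < c) : Continuous (truncFlux m c) :=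
  ((continuous_const.max continuous_id).rpow_const
    fun _ => .inl (lt_max_of_lt_left hc).ne').div_const m

lemma abs_truncFlux_le (hm : m < 0) (hc : 0 < c) (s : ℝ) : |truncFlux m c s| ≤ c ^ m / |m| := by
  rw [truncFlux, abs_div, abs_of_nonneg (by positivity)]
  exact div_le_div_of_nonneg_right
    (Real.rpow_le_rpow_of_nonpos hc (le_max_left c s) hm.le) (abs_nonneg m)

lemma monotone_truncFlux (hm : m < 0) (hc : 0 < c) : Monotone (truncFlux m c) := fun _ _ hsr =>
  div_le_div_of_nonpos_of_le hm.le <| Real.rpow_le_rpow_of_nonpos (lt_max_of_lt_left hc)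
    (max_le_max_left c hsr) hm.le

lemma truncFlux_sub_mul_sub_nonneg (hm : m < 0) (hc : 0 < c) (s r : ℝ) :
    0 ≤ (truncFlux m c s - truncFlux m c r) * (s - r) := by
  rcases le_total s r with h | h
  · exact mul_nonneg_of_nonpos_of_nonpos (sub_nonpos.2 (monotone_truncFlux hm hc h))
      (sub_nonpos.2 h)
  · exact mul_nonneg (sub_nonneg.2 (monotone_truncFlux hm hc h)) (sub_nonneg.2 h)

lemma hasDerivAt_truncFlux (hm : m ≠ 0) (hc : 0 < c) (hs : c < s) :
    HasDerivAt (truncFlux m c) (s ^ (m - 1)) s := by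
  refine ((((hasDerivAt_id s).rpow_const (.inl (hc.trans hs).ne')).div_const m).congr_deriv
    (by simp; field_simp)).congr_of_eventuallyEq ?_
  filter_upwards [lt_mem_nhds hs] with r hr using truncFlux_of_le hr.le

end TruncatedFlux

namespace IsMonotoneSolution

variable {m t₀ : ℝ} {u : ℝ → ℝ → ℝ}

lemma continuous_spaceDeriv (h : IsMonotoneSolution m t₀ u) (t : ℝ) :
    Continuous (spaceDeriv u · t) :=
  (h.contDiff t).continuous_deriv le_rfl

lemma hasDerivAt (h : IsMonotoneSolution m t₀ u) (x t : ℝ) :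
    HasDerivAt (u · t) (spaceDeriv u x t) x :=
  ((h.contDiff t).differentiable one_ne_zero x).hasDerivAt

lemma integrableOn_spaceDeriv (h : IsMonotoneSolution m t₀ u) (α β a b : ℝ) :
    IntegrableOn (uncurry (spaceDeriv u)) (Icc α β ×ˢ Icc a b) := by
  have hu := h.continuous
  rcases lt_or_ge β α with hαβ | hαβ
  · simp [Icc_eq_empty hαβ.not_ge]
  have hint (t : ℝ) : ∫ x in Icc α β, ‖spaceDeriv u x t‖ = u β t - u α t := by
    simp_rw [spaceDeriv, Real.norm_of_nonneg (h.monotone t).deriv_nonneg]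
    rw [integral_Icc_eq_integral_Ioc, ← intervalIntegral.integral_of_le hαβ,
      intervalIntegral.integral_deriv_eq_sub fun x _ => (h.hasDerivAt x t).differentiableAt]
    exact (h.continuous_spaceDeriv t).intervalIntegrable _ _
  rw [IntegrableOn, Measure.volume_eq_prod, ← Measure.prod_restrict,
    integrable_prod_iff' (measurable_spaceDeriv hu).aestronglyMeasurable]
  refine ⟨.of_forall fun t => (h.continuous_spaceDeriv t).integrableOn_Icc, ?_⟩
  simp only [Function.uncurry_apply_pair, hint]
  exact (by fun_prop : Continuous fun t => u β t - u α t).integrableOn_Icc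

lemma isWeakBalance (h : IsMonotoneSolution m t₀ u) {α β a b c : ℝ}
    (hbox : ∀ x ∈ Ioo α β, ∀ t ∈ Ioo a b, (x, t) ∈ transitionRegion u t₀ ∧ c ≤ spaceDeriv u x t) :
    IsWeakBalance u (fun x t => truncFlux m c (spaceDeriv u x t)) α β a b := by
  intro φ hφ hφc hφs
  rw [← h.weak φ hφ hφc fun p hp => (hbox p.1 (hφs hp).1 p.2 (hφs hp).2).1]
  refine integral_congr_ae (.of_forall fun p => ?_)
  by_cases hp : p ∈ tsupport (uncurry φ)
  · simp only [truncFlux_of_le (hbox p.1 (hφs hp).1 p.2 (hφs hp).2).2]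
  · simp [deriv_slices_eq_zero_of_notMem_tsupport hp]

lemma hasDerivAt_integral_truncFlux (h : IsMonotoneSolution m t₀ u) (hm : m < 0)
    {α β a b c : ℝ} (hc : 0 < c)
    (hbox : ∀ x ∈ Ioo α β, ∀ t ∈ Ioo a b, (x, t) ∈ transitionRegion u t₀ ∧ c ≤ spaceDeriv u x t)
    {x s t : ℝ} (hx : x ∈ Ioo α β) (hs : a < s) (hst : s ≤ t) (ht : t < b) :
    HasDerivAt (fun y => ∫ τ in s..t, truncFlux m c (spaceDeriv u y τ)) (u x t - u x s) x :=
  (h.isWeakBalance hbox).hasDerivAt_integral h.continuous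
    (fun x t => (abs_of_nonneg (h.mem_Icc x t).1).trans_le (h.mem_Icc x t).2)
    ((continuous_truncFlux hc).measurable.comp (measurable_spaceDeriv h.continuous))
    (fun _ _ => abs_truncFlux_le hm hc _)
    (fun t => (continuous_truncFlux hc).comp (h.continuous_spaceDeriv t)) hx hs hst ht

lemma hasDerivAt_integral_truncFlux_sub (h : IsMonotoneSolution m t₀ u) (hm : m < 0)
    {α β a b c : ℝ} (hc : 0 < c)
    (hbox : ∀ x ∈ Ioo α β, ∀ t ∈ Ioo a b, (x, t) ∈ transitionRegion u t₀ ∧ c ≤ spaceDeriv u x t)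
    {g : ℝ → ℝ} {g' x s t : ℝ} (ε : ℝ) (hg : HasDerivAt g g' x) (hcg : c < g x)
    (hx : x ∈ Ioo α β) (hs : a < s) (hst : s ≤ t) (ht : t < b) :
    HasDerivAt
      (fun y => ∫ τ in s..t, ε * (truncFlux m c (spaceDeriv u y τ) - truncFlux m c (g y)))
      (ε * (u x t - u x s - (t - s) * (g x ^ (m - 1) * g'))) x := by
  have hT : Measurable (uncurry fun x t => truncFlux m c (spaceDeriv u x t)) :=
    (continuous_truncFlux hc).measurable.comp (measurable_spaceDeriv h.continuous)
  have hsplit (y : ℝ) : ∫ τ in s..t, ε * (truncFlux m c (spaceDeriv u y τ) - truncFlux m c (g y))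
      = ε * ((∫ τ in s..t, truncFlux m c (spaceDeriv u y τ)) - (t - s) * truncFlux m c (g y)) := by
    rw [intervalIntegral.integral_const_mul, intervalIntegral.integral_sub
      (intervalIntegrable_of_bdd hT (fun _ _ => abs_truncFlux_le hm hc _) y s t)
      intervalIntegrable_const, intervalIntegral.integral_const, smul_eq_mul]
  simp_rw [hsplit]
  exact ((h.hasDerivAt_integral_truncFlux hm hc hbox hx hs hst ht).sub
    (((hasDerivAt_truncFlux hm.ne hc hcg).comp x hg).const_mul (t - s))).const_mul ε

/-- The sign `ε = 1` serves for bounding `u` from above, `ε = -1` for bounding it from below. -/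
lemma isFluxSubsolution_sub (h : IsMonotoneSolution m t₀ u) (hm : m < 0)
    {α' α β β' a b c : ℝ} (hα : α' < α) (hβ : β < β') (hc : 0 < c)
    (hbox : ∀ x ∈ Ioo α' β', ∀ t ∈ Ioo a b, (x, t) ∈ transitionRegion u t₀ ∧ c ≤ spaceDeriv u x t)
    {Q g g' : ℝ → ℝ} {ε θ : ℝ} (hQ : ∀ x, HasDerivAt Q (g x) x) (hg : ∀ x, HasDerivAt g (g' x) x)
    (hg' : Continuous g') (hcg : ∀ x ∈ Icc α β, c < g x)
    (hθ : ∀ x ∈ Icc α β, ε * (θ + g x ^ (m - 1) * g' x) ≤ 0) :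
    IsFluxSubsolution (fun x t => ε * (u x t - (Q x - θ * t)))
      (fun x t => ε * (truncFlux m c (spaceDeriv u x t) - truncFlux m c (g x))) α β a b := by
  have hu := h.continuous
  have hux := measurable_spaceDeriv hu
  have hT := continuous_truncFlux (m := m) hc
  have hgc : Continuous g := continuous_iff_continuousAt.2 fun x => (hg x).continuousAt
  have hQc : Continuous Q := continuous_iff_continuousAt.2 fun x => (hQ x).continuousAt
  have hsub (x t : ℝ) : HasDerivAt (fun y => ε * (u y t - (Q y - θ * t)))
      (ε * (spaceDeriv u x t - g x)) x :=
    ((h.hasDerivAt x t).sub ((hQ x).sub_const _)).const_mul ε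
  have hderiv : spaceDeriv (fun x t => ε * (u x t - (Q x - θ * t)))
      = fun x t => ε * (spaceDeriv u x t - g x) := by
    ext x t; exact (hsub x t).deriv
  refine ⟨by fun_prop, fun t _ => ?_, ?_, by fun_prop, ?_, fun x _ t _ => ?_,
    fun s t hs hst ht => ⟨fun x => ε * (u x t - u x s - (t - s) * (g x ^ (m - 1) * g' x)), ?_,
      fun x hx => ⟨?_, ?_⟩⟩⟩
  · rw [contDiff_one_iff_deriv]
    refine ⟨fun x => (hsub x t).differentiableAt, ?_⟩
    have := h.continuous_spaceDeriv t
    rw [show deriv _ = _ from funext fun x => (hsub x t).deriv]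
    fun_prop
  · rw [hderiv]
    refine ((h.integrableOn_spaceDeriv α β a b).mono_set
      (prod_mono subset_rfl Ioo_subset_Icc_self)).sub ?_ |>.const_mul ε
    exact ((by fun_prop : Continuous fun p : ℝ × ℝ => g p.1).continuousOn.integrableOn_compact
      (isCompact_Icc.prod isCompact_Icc)).mono_set (prod_mono subset_rfl Ioo_subset_Icc_self)
  · refine ⟨|ε| * (c ^ m / |m| + c ^ m / |m|), fun x t => ?_⟩
    rw [abs_mul]
    exact mul_le_mul_of_nonneg_left ((abs_sub _ _).trans (add_le_add (abs_truncFlux_le hm hc _)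
      (abs_truncFlux_le hm hc _))) (abs_nonneg ε)
  · rw [hderiv, mul_mul_mul_comm]
    exact mul_nonneg (mul_self_nonneg ε) (truncFlux_sub_mul_sub_nonneg hm hc _ _)
  · have hgpow : ContinuousOn (fun x => g x ^ (m - 1)) (Icc α β) :=
      hgc.continuousOn.rpow_const fun x hx => .inl (hc.trans (hcg x hx)).ne'
    fun_prop
  · exact h.hasDerivAt_integral_truncFlux_sub hm hc hbox ε (hg x) (hcg x hx)
      ⟨hα.trans_le hx.1, hx.2.trans_lt hβ⟩ hs hst ht
  · nlinarith [mul_nonneg (sub_nonneg.2 hst) (neg_nonneg.2 (hθ x hx))]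

end IsMonotoneSolution

/-- The solution `u` is nondegenerate at `p` if, near `p`, it takes values in `(0, 1)` and its
slope is bounded away from zero, so that the flux is bounded. -/
def IsNondegenerateAt (u : ℝ → ℝ → ℝ) (t₀ : ℝ) (p : ℝ × ℝ) : Prop :=
  ∃ c > 0, ∀ᶠ q in 𝓝 p, q ∈ transitionRegion u t₀ ∧ c ≤ spaceDeriv u q.1 q.2

section Nondegenerate

variable {u : ℝ → ℝ → ℝ} {t₀ : ℝ}

lemma isOpen_setOf_isNondegenerateAt (u : ℝ → ℝ → ℝ) (t₀ : ℝ) :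
    IsOpen {p | IsNondegenerateAt u t₀ p} :=
  isOpen_iff_mem_nhds.2 fun _ ⟨c, hc, hp⟩ => hp.eventually_nhds.mono fun _ hq => ⟨c, hc, hq⟩

lemma eventually_forall_isNondegenerateAt {α β t : ℝ}
    (h : ∀ x ∈ Icc α β, IsNondegenerateAt u t₀ (x, t)) :
    ∀ᶠ s in 𝓝 t, ∀ x ∈ Icc α β, IsNondegenerateAt u t₀ (x, s) :=
  isCompact_Icc.eventually_forall_of_forall_eventually fun x hx =>
    (continuous_swap.tendsto (t, x)).eventually
      ((isOpen_setOf_isNondegenerateAt u t₀).mem_nhds (h x hx))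

lemma exists_forall_Ioo_of_eventually_nhdsSet_Icc {P : ℝ → Prop} {α β : ℝ} (hαβ : α ≤ β)
    (h : ∀ᶠ x in 𝓝ˢ (Icc α β), P x) : ∃ r > 0, ∀ x ∈ Ioo (α - r) (β + r), P x := by
  rw [nhdsSet_Icc hαβ, eventually_sup, eventually_sup] at h
  obtain ⟨⟨hα, hβ⟩, hmid⟩ := h
  obtain ⟨r, hr, hPα⟩ := Metric.eventually_nhds_iff.1 hα
  obtain ⟨r', hr', hPβ⟩ := Metric.eventually_nhds_iff.1 hβ
  refine ⟨min r r', lt_min hr hr', fun x hx => ?_⟩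
  have := min_le_left r r'
  have := min_le_right r r'
  rcases le_or_gt x α with hxα | hxα
  · exact hPα (abs_lt.2 ⟨by linarith [hx.1], by linarith⟩)
  rcases le_or_gt β x with hxβ | hxβ
  · exact hPβ (abs_lt.2 ⟨by linarith, by linarith [hx.2]⟩)
  · exact hmid ⟨hxα, hxβ⟩

lemma exists_le_spaceDeriv_of_forall_isNondegenerateAt {α β a b : ℝ} (hαβ : α ≤ β) (hab : a ≤ b)
    (h : ∀ x ∈ Icc α β, ∀ t ∈ Icc a b, IsNondegenerateAt u t₀ (x, t)) :
    ∃ c > 0, ∃ r > 0, ∀ x ∈ Ioo (α - r) (β + r), ∀ t ∈ Ioo (a - r) (b + r),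
      (x, t) ∈ transitionRegion u t₀ ∧ c ≤ spaceDeriv u x t := by
  obtain ⟨c, hc, hev⟩ : ∃ c > 0, ∀ᶠ q in 𝓝ˢ (Icc α β ×ˢ Icc a b),
      q ∈ transitionRegion u t₀ ∧ c ≤ spaceDeriv u q.1 q.2 := by
    refine (isCompact_Icc.prod isCompact_Icc).induction_on
      (p := fun K => ∃ c > 0, ∀ᶠ q in 𝓝ˢ K,
        q ∈ transitionRegion u t₀ ∧ c ≤ spaceDeriv u q.1 q.2) ?_ ?_ ?_ ?_
    · exact ⟨1, one_pos, by simp⟩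
    · exact fun K K' hKK' ⟨c, hc, hK'⟩ => ⟨c, hc, hK'.filter_mono (nhdsSet_mono hKK')⟩
    · rintro K K' ⟨c, hc, hK⟩ ⟨c', hc', hK'⟩
      refine ⟨min c c', lt_min hc hc', ?_⟩
      rw [nhdsSet_union, eventually_sup]
      exact ⟨hK.mono fun q hq => ⟨hq.1, (min_le_left _ _).trans hq.2⟩,
        hK'.mono fun q hq => ⟨hq.1, (min_le_right _ _).trans hq.2⟩⟩
    · rintro ⟨x, t⟩ hp
      obtain ⟨c, hc, hq⟩ := h x hp.1 t hp.2
      refine ⟨{q | ∀ᶠ q' in 𝓝 q, q' ∈ transitionRegion u t₀ ∧ c ≤ spaceDeriv u q'.1 q'.2},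
        mem_nhdsWithin_of_mem_nhds hq.eventually_nhds, c, hc, eventually_nhdsSet_iff_forall.2 ?_⟩
      exact fun q hq => hq
  rw [isCompact_Icc.nhdsSet_prod_eq isCompact_Icc, eventually_prod_iff] at hev
  obtain ⟨P, hP, P', hP', hPP'⟩ := hev
  obtain ⟨r, hr, hPr⟩ := exists_forall_Ioo_of_eventually_nhdsSet_Icc hαβ hP
  obtain ⟨r', hr', hPr'⟩ := exists_forall_Ioo_of_eventually_nhdsSet_Icc hab hP'
  have := min_le_left r r'
  have := min_le_right r r'
  exact ⟨c, hc, min r r', lt_min hr hr', fun x hx t ht =>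
    hPP' (hPr x ⟨by linarith [hx.1], by linarith [hx.2]⟩)
      (hPr' t ⟨by linarith [ht.1], by linarith [ht.2]⟩)⟩

end Nondegenerate

section Comparison

variable {m t₀ : ℝ} {u : ℝ → ℝ → ℝ} {α β t₁ t₂ κ η x ε : ℝ}

lemma IsMonotoneSolution.exists_le_of_le (h : IsMonotoneSolution m t₀ u) (hm : m < 0)
    (h₁₂ : t₁ ≤ t₂) (hbox : ∀ x ∈ Icc α β, ∀ t ∈ Icc t₁ t₂, IsNondegenerateAt u t₀ (x, t))
    {Q g g' : ℝ → ℝ} {θ : ℝ} (hQ : ∀ x, HasDerivAt Q (g x) x) (hg : ∀ x, HasDerivAt g (g' x) x)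
    (hg' : Continuous g') (hgpos : ∀ x ∈ Icc α β, 0 < g x)
    (hθ : ∀ x ∈ Icc α β, ε * (θ + g x ^ (m - 1) * g' x) ≤ 0) (hκη : κ < η)
    (hα : ∀ t ∈ Icc t₁ t₂, ε * (u α t - (Q α - θ * t)) ≤ κ)
    (hβ : ∀ t ∈ Icc t₁ t₂, ε * (u β t - (Q β - θ * t)) ≤ κ)
    (hx : x ∈ Icc α β) (hxη : η ≤ ε * (u x t₂ - (Q x - θ * t₂))) :
    ∃ y ∈ Icc α β, η ≤ ε * (u y t₁ - (Q y - θ * t₁)) := by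
  obtain ⟨c, hc, r, hr, hbox⟩ :=
    exists_le_spaceDeriv_of_forall_isNondegenerateAt (hx.1.trans hx.2) h₁₂ hbox
  have hgc : Continuous g := continuous_iff_continuousAt.2 fun x => (hg x).continuousAt
  obtain ⟨z, hz, hmin⟩ := isCompact_Icc.exists_isMinOn ⟨x, hx⟩ hgc.continuousOn
  have hsub := h.isFluxSubsolution_sub hm (c := min c (g z / 2)) (sub_lt_self α hr)
    (lt_add_of_pos_right β hr) (lt_min hc (half_pos (hgpos z hz)))
    (fun x hx t ht => (hbox x hx t ht).imp_right (min_le_left _ _).trans) hQ hg hg'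
    (fun x hx => (min_le_right _ _).trans_lt ((half_lt_self (hgpos z hz)).trans_le (hmin hx))) hθ
  exact hsub.exists_le_of_le (sub_lt_self t₁ hr) h₁₂ (lt_add_of_pos_right t₂ hr) hκη hα hβ hx hxη

lemma IsMonotoneSolution.exists_le_of_le_line (h : IsMonotoneSolution m t₀ u) (hm : m < 0)
    {σ : ℝ} (hσ : 0 < σ) (d : ℝ) (h₁₂ : t₁ ≤ t₂)
    (hbox : ∀ x ∈ Icc α β, ∀ t ∈ Icc t₁ t₂, IsNondegenerateAt u t₀ (x, t)) (hκη : κ < η)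
    (hα : ∀ t ∈ Icc t₁ t₂, ε * (u α t - (σ * α + d)) ≤ κ)
    (hβ : ∀ t ∈ Icc t₁ t₂, ε * (u β t - (σ * β + d)) ≤ κ)
    (hx : x ∈ Icc α β) (hxη : η ≤ ε * (u x t₂ - (σ * x + d))) :
    ∃ y ∈ Icc α β, η ≤ ε * (u y t₁ - (σ * y + d)) := by
  have hQ (x : ℝ) : HasDerivAt (fun x => σ * x + d) σ x := by
    simpa using ((hasDerivAt_id x).const_mul σ).add_const d
  simpa using h.exists_le_of_le hm (θ := 0) h₁₂ hbox hQ (fun x => hasDerivAt_const x σ)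
    continuous_const (fun _ _ => hσ) (by simp) hκη (by simpa using hα) (by simpa using hβ) hx
    (by simpa using hxη)

end Comparison

/-- `f` increases at rate at least `L` on `s`. This lower bound on the slope, stated without
derivatives, is closed under pointwise limits. -/
def IsSteepOn (f : ℝ → ℝ) (L : ℝ) (s : Set ℝ) : Prop := MonotoneOn (fun x => f x - L * x) s

lemma IsSteepOn.mono {f : ℝ → ℝ} {L σ : ℝ} {s s' : Set ℝ} (h : IsSteepOn f L s) (hσ : σ ≤ L)
    (hs : s' ⊆ s) : IsSteepOn f σ s' := fun x hx y hy hxy => by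
  have := h (hs hx) (hs hy) hxy
  simp only at this ⊢
  nlinarith [mul_nonneg (sub_nonneg.2 hσ) (sub_nonneg.2 hxy)]

lemma IsSteepOn.mul_sub_le {f : ℝ → ℝ} {L x y : ℝ} {s : Set ℝ} (h : IsSteepOn f L s) (hx : x ∈ s)
    (hy : y ∈ s) (hxy : x ≤ y) : L * (y - x) ≤ f y - f x := by
  linarith [h hx hy hxy]

lemma isClosed_setOf_isSteepOn {u : ℝ → ℝ → ℝ} (hu : Continuous (uncurry u)) (L δ : ℝ) :
    IsClosed {p : ℝ × ℝ | IsSteepOn (u · p.2) L (Icc (p.1 - δ) (p.1 + δ))} := by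
  have htranslate : {p : ℝ × ℝ | IsSteepOn (u · p.2) L (Icc (p.1 - δ) (p.1 + δ))}
      = ⋂ a ∈ Icc (-δ) δ, ⋂ b ∈ Icc a δ,
        {p : ℝ × ℝ | L * (b - a) ≤ u (p.1 + b) p.2 - u (p.1 + a) p.2} := by
    ext p
    simp only [mem_ofPred_eq, mem_iInter]
    constructor
    · intro h a ha b hb
      have := h.mul_sub_le (x := p.1 + a) (y := p.1 + b) ⟨by linarith [ha.1], by linarith [ha.2]⟩
        ⟨by linarith [ha.1, hb.1], by linarith [hb.2]⟩ (by linarith [hb.1])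
      linarith
    · intro h x hx y hy hxy
      have := h (x - p.1) ⟨by linarith [hx.1], by linarith [hx.2]⟩ (y - p.1)
        ⟨by linarith, by linarith [hy.2]⟩
      rw [add_sub_cancel, add_sub_cancel] at this
      simp only
      linarith
  rw [htranslate]
  exact isClosed_biInter fun a _ => isClosed_biInter fun b _ =>
    isClosed_le continuous_const (by fun_prop)

namespace IsMonotoneSolution

variable {m t₀ : ℝ} {u : ℝ → ℝ → ℝ}

lemma exists_isSteepOn (h : IsMonotoneSolution m t₀ u) {α β t : ℝ}
    (hpos : ∀ x ∈ Icc α β, u x t ∈ Ioo 0 1) : ∃ c > 0, IsSteepOn (u · t) c (Icc α β) := by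
  rcases lt_or_ge β α with hαβ | hαβ
  · exact ⟨1, one_pos, (subsingleton_Icc_of_ge hαβ.le).monotoneOn _⟩
  obtain ⟨z, hz, hmin⟩ := isCompact_Icc.exists_isMinOn (nonempty_Icc.2 hαβ)
    (h.continuous_spaceDeriv t).continuousOn
  have hderiv (x : ℝ) : HasDerivAt (fun x => u x t - spaceDeriv u z t * x)
      (spaceDeriv u x t - spaceDeriv u z t) x := by
    exact ((h.hasDerivAt x t).sub ((hasDerivAt_id x).const_mul (spaceDeriv u z t))).congr_deriv
      (by rw [mul_one])
  refine ⟨spaceDeriv u z t, h.spaceDeriv_pos (hpos z hz), monotoneOn_of_deriv_nonneg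
    (convex_Icc α β) (fun x _ => (hderiv x).continuousAt.continuousWithinAt)
    (fun x _ => (hderiv x).differentiableAt.differentiableWithinAt) fun x hx => ?_⟩
  rw [(hderiv x).deriv]
  exact sub_nonneg.2 (hmin (interior_subset hx))

/-- A down-crossing of a line can be traced back in time by the maximum principle on both sides of
an intermediate zero. -/
lemma exists_crossing_lt (h : IsMonotoneSolution m t₀ u) (hm : m < 0) {α β a s x y σ d η : ℝ}
    (hσ : 0 < σ) (has : a < s) (hα : ∀ t ∈ Icc a s, u α t ≤ σ * α + d)
    (hβ : ∀ t ∈ Icc a s, σ * β + d ≤ u β t)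
    (hnd : ∀ x ∈ Icc α β, IsNondegenerateAt u t₀ (x, s)) (hη : 0 < η) (hx : α ≤ x) (hxy : x ≤ y)
    (hy : y ≤ β) (hux : η ≤ u x s - (σ * x + d)) (huy : u y s - (σ * y + d) ≤ -η) :
    ∃ t ∈ Ico a s, ∃ x' ∈ Icc α β, ∃ y' ∈ Icc α β, x' ≤ y' ∧ η ≤ u x' t - (σ * x' + d) ∧
      u y' t - (σ * y' + d) ≤ -η := by
  have hu := h.continuous
  obtain ⟨z, hz, hzero⟩ : ∃ z ∈ Icc x y, u z s - (σ * z + d) = 0 :=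
    intermediate_value_Icc' (f := fun x => u x s - (σ * x + d)) hxy (by fun_prop)
      ⟨huy.trans (neg_nonpos.2 hη.le), hη.le.trans hux⟩
  have hmid : ∀ᶠ t in 𝓝 s, |u z t - (σ * z + d)| < η / 2 :=
    ((by fun_prop : Continuous fun t => |u z t - (σ * z + d)|).tendsto s).eventually_lt_const
      (by rw [hzero, abs_zero]; exact half_pos hη)
  obtain ⟨l, hl, hls⟩ := exists_Ioc_subset_of_mem_nhds
    ((eventually_forall_isNondegenerateAt hnd).and hmid) ⟨a, has⟩
  obtain ⟨t, hlt, hts⟩ := exists_between (max_lt hl has)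
  rw [max_lt_iff] at hlt
  have hIcc : ∀ r ∈ Icc t s, r ∈ Icc a s ∧
      (∀ x ∈ Icc α β, IsNondegenerateAt u t₀ (x, r)) ∧ |u z r - (σ * z + d)| < η / 2 :=
    fun r hr => ⟨⟨hlt.2.le.trans hr.1, hr.2⟩, hls ⟨hlt.1.trans_le hr.1, hr.2⟩⟩
  obtain ⟨x', hx', hux'⟩ := h.exists_le_of_le_line hm (ε := 1) (κ := η / 2) hσ d hts.le
    (fun x hx r hr => (hIcc r hr).2.1 x ⟨hx.1, hx.2.trans (hz.2.trans hy)⟩) (half_lt_self hη)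
    (fun r hr => by linarith [hα r (hIcc r hr).1]) (fun r hr => by
      linarith [(abs_lt.1 (hIcc r hr).2.2).2]) ⟨hx, hz.1⟩ (by linarith)
  obtain ⟨y', hy', huy'⟩ := h.exists_le_of_le_line hm (ε := -1) (κ := η / 2) hσ d hts.le
    (fun x hx r hr => (hIcc r hr).2.1 x ⟨hx'.1.trans (hx'.2.trans hx.1), hx.2⟩) (half_lt_self hη)
    (fun r hr => by linarith [(abs_lt.1 (hIcc r hr).2.2).1])
    (fun r hr => by linarith [hβ r (hIcc r hr).1]) ⟨hz.2, hy⟩ (by linarith)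
  exact ⟨t, ⟨hlt.2.le, hts⟩, x', ⟨hx'.1, hx'.2.trans (hz.2.trans hy)⟩, y',
    ⟨hx'.1.trans (hx'.2.trans hy'.1), hy'.2⟩, hx'.2.trans hy'.1, by linarith, by linarith⟩

/-- At the first time of a down-crossing of a given size, `exists_crossing_lt` yields an earlier
one. -/
lemma line_le_of_line_lt (h : IsMonotoneSolution m t₀ u) (hm : m < 0) {α β a b x y σ d : ℝ}
    (hσ : 0 < σ) (hab : a ≤ b) (hα : ∀ t ∈ Icc a b, u α t ≤ σ * α + d)
    (hβ : ∀ t ∈ Icc a b, σ * β + d ≤ u β t)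
    (halt : ∀ t ∈ Icc a b, (∀ x ∈ Icc α β, IsNondegenerateAt u t₀ (x, t)) ∨
      IsSteepOn (u · t) σ (Icc α β))
    (hinit : IsSteepOn (u · a) σ (Icc α β)) (hx : x ∈ Icc α β) (hy : y ∈ Icc α β) (hxy : x ≤ y)
    (hux : σ * x + d < u x b) : σ * y + d ≤ u y b := by
  have hu := h.continuous
  by_contra! huy
  set η := min (u x b - (σ * x + d)) (σ * y + d - u y b)
  have hη : 0 < η := lt_min (sub_pos.2 hux) (sub_pos.2 huy)
  let K : Set (ℝ × ℝ × ℝ) := (Icc α β ×ˢ Icc α β ×ˢ Icc a b) ∩ ({q | q.1 ≤ q.2.1} ∩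
    ({q | η ≤ u q.1 q.2.2 - (σ * q.1 + d)} ∩ {q | u q.2.1 q.2.2 - (σ * q.2.1 + d) ≤ -η}))
  have hK : IsCompact K := (isCompact_Icc.prod (isCompact_Icc.prod isCompact_Icc)).inter_right <|
    (isClosed_le (by fun_prop) (by fun_prop)).inter <|
      (isClosed_le (by fun_prop) (by fun_prop)).inter (isClosed_le (by fun_prop) (by fun_prop))
  have hbK : (x, y, b) ∈ K := ⟨⟨hx, hy, right_mem_Icc.2 hab⟩, hxy,
    min_le_left (u x b - (σ * x + d)) _, by
      rw [mem_ofPred_eq, le_neg, neg_sub]; exact min_le_right _ _⟩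
  obtain ⟨⟨x, y, s⟩, ⟨⟨hx, hy, hs⟩, hxy, (hux : η ≤ u x s - (σ * x + d)),
    (huy : u y s - (σ * y + d) ≤ -η)⟩, hmin⟩ :=
    hK.exists_isMinOn ⟨_, hbK⟩ (f := fun q => q.2.2) (by fun_prop)
  have hnot : ¬ IsSteepOn (u · s) σ (Icc α β) := fun hsteep => by
    linarith [hsteep.mul_sub_le hx hy hxy]
  have has : a < s := hs.1.lt_of_ne (by rintro rfl; exact hnot hinit)
  obtain ⟨t, ht, x', hx', y', hy', hxy', hux', huy'⟩ := h.exists_crossing_lt hm hσ has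
    (fun t ht => hα t ⟨ht.1, ht.2.trans hs.2⟩) (fun t ht => hβ t ⟨ht.1, ht.2.trans hs.2⟩)
    ((halt s hs).resolve_right hnot) hη hx.1 hxy hy.2 hux huy
  have : s ≤ t := hmin (a := (x', y', t))
    ⟨⟨hx', hy', ht.1, ht.2.le.trans hs.2⟩, hxy', hux', huy'⟩
  exact this.not_gt ht.2

lemma mul_sub_le_of_add_le (h : IsMonotoneSolution m t₀ u) (hm : m < 0) {α β a b x y σ κ : ℝ}
    (hσ : 0 < σ) (hκ : 0 < κ) (hab : a ≤ b)
    (hα : ∀ t ∈ Icc a b, u α t + σ * (x - α) + κ ≤ u x b)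
    (hβ : ∀ t ∈ Icc a b, u x b + σ * (β - x) ≤ u β t)
    (halt : ∀ t ∈ Icc a b, (∀ x ∈ Icc α β, IsNondegenerateAt u t₀ (x, t)) ∨
      IsSteepOn (u · t) σ (Icc α β))
    (hinit : IsSteepOn (u · a) σ (Icc α β)) (hx : x ∈ Icc α β) (hy : y ∈ Icc α β) (hxy : x ≤ y) :
    σ * (y - x) ≤ u y b - u x b := by
  by_contra! hlt
  obtain ⟨ε, hε, hεlt⟩ := exists_between (lt_min hκ (sub_pos.2 hlt))
  rw [lt_min_iff] at hεlt
  have := h.line_le_of_line_lt hm (d := u x b - σ * x - ε) hσ hab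
    (fun t ht => by linarith [hα t ht]) (fun t ht => by linarith [hβ t ht]) halt hinit hx hy hxy
    (by linarith)
  linarith

lemma le_spaceDeriv_of_mul_sub_le (h : IsMonotoneSolution m t₀ u) {x y t σ : ℝ} (hxy : x < y)
    (hσ : ∀ z ∈ Ioo x y, σ * (z - x) ≤ u z t - u x t) : σ ≤ spaceDeriv u x t := by
  have hslope := (h.hasDerivAt x t).hasDerivWithinAt (s := Ioi x)
  rw [hasDerivWithinAt_iff_tendsto_slope' self_notMem_Ioi] at hslope
  refine ge_of_tendsto hslope ?_
  filter_upwards [Ioo_mem_nhdsGT hxy] with z hz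
  rw [slope_def_field, le_div_iff₀ (sub_pos.2 hz.1)]
  exact hσ z hz

lemma exists_add_lt_of_isSteepOn (h : IsMonotoneSolution m t₀ u) {x₁ t₁ ρ L : ℝ} (hρ : 0 < ρ)
    (hL : 0 < L) (hsteep : IsSteepOn (u · t₁) L (Icc (x₁ - ρ) (x₁ + ρ))) :
    ∃ δ > 0, ∀ x ∈ Metric.ball x₁ δ, ∀ s ∈ Metric.ball t₁ δ, ∀ t ∈ Metric.ball t₁ δ,
      u (x₁ - ρ) t + L / 2 * (x - (x₁ - ρ)) + L * ρ / 4 < u x s ∧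
      u x s + L / 2 * (x₁ + ρ - x) < u (x₁ + ρ) t := by
  have hu := h.continuous
  have hLρ : 0 < L * ρ := mul_pos hL hρ
  have hleft := hsteep.mul_sub_le (x := x₁ - ρ) (y := x₁) (by constructor <;> linarith)
    (by constructor <;> linarith) (by linarith)
  have hright := hsteep.mul_sub_le (x := x₁) (y := x₁ + ρ) (by constructor <;> linarith)
    (by constructor <;> linarith) (by linarith)
  have hnear : ∀ᶠ q : ℝ × ℝ × ℝ in 𝓝 (x₁, t₁, t₁),
      u (x₁ - ρ) q.2.2 + L / 2 * (q.1 - (x₁ - ρ)) + L * ρ / 4 < u q.1 q.2.1 ∧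
      u q.1 q.2.1 + L / 2 * (x₁ + ρ - q.1) < u (x₁ + ρ) q.2.2 :=
    eventually_and.2 ⟨ContinuousAt.eventually_lt (by fun_prop) (by fun_prop) (by linarith),
      ContinuousAt.eventually_lt (by fun_prop) (by fun_prop) (by linarith)⟩
  obtain ⟨δ, hδ, hball⟩ := Metric.eventually_nhds_iff_ball.1 hnear
  refine ⟨δ, hδ, fun x hx s hs t ht => hball (x, s, t) ?_⟩
  rw [← ball_prod_same, ← ball_prod_same]
  exact ⟨hx, hs, ht⟩

lemma isNondegenerateAt_of_isSteepOn (h : IsMonotoneSolution m t₀ u) (hm : m < 0) {x₁ t₁ ρ L : ℝ}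
    (hρ : 0 < ρ) (hL : 0 < L)
    (hreg : ∀ x ∈ Icc (x₁ - ρ) (x₁ + ρ), (x, t₁) ∈ transitionRegion u t₀)
    (halt : ∀ᶠ t in 𝓝 t₁, (∀ x ∈ Icc (x₁ - ρ) (x₁ + ρ), IsNondegenerateAt u t₀ (x, t)) ∨
      IsSteepOn (u · t) L (Icc (x₁ - ρ) (x₁ + ρ)))
    (hsteep : IsSteepOn (u · t₁) L (Icc (x₁ - ρ) (x₁ + ρ))) : IsNondegenerateAt u t₀ (x₁, t₁) := by
  have hregion := isOpen_transitionRegion h.continuous t₀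
  have hreg' : ∀ᶠ t in 𝓝 t₁, ∀ x ∈ Icc (x₁ - ρ) (x₁ + ρ), (x, t) ∈ transitionRegion u t₀ :=
    isCompact_Icc.eventually_forall_of_forall_eventually fun x hx =>
      (continuous_swap.tendsto (t₁, x)).eventually (hregion.mem_nhds (hreg x hx))
  obtain ⟨δ, hδ, hbarrier⟩ := h.exists_add_lt_of_isSteepOn hρ hL hsteep
  obtain ⟨δ', hδ', hnear⟩ := Metric.eventually_nhds_iff_ball.1 (halt.and hreg')
  obtain ⟨τ, hτ, hτlt⟩ := exists_between (lt_min (lt_min hδ hδ') hρ)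
  simp only [lt_min_iff, Real.ball_eq_Ioo] at hτlt hbarrier hnear
  obtain ⟨c, hc, hinit⟩ := h.exists_isSteepOn (t := t₁ - τ) fun x hx =>
    ((hnear (t₁ - τ) (by constructor <;> linarith)).2 x hx).2
  refine ⟨min (L / 2) c, lt_min (half_pos hL) hc, ?_⟩
  filter_upwards [hregion.mem_nhds (hreg x₁ (by constructor <;> linarith)),
    Metric.ball_mem_nhds (x₁, t₁) hτ] with ⟨x, s⟩ hxs hball
  rw [← ball_prod_same, Real.ball_eq_Ioo, Real.ball_eq_Ioo] at hball
  obtain ⟨⟨hx, hx'⟩, hs, hs'⟩ := hball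
  dsimp only at hx hx' hs hs'
  have hσL := min_le_left (L / 2) c
  have hbarrier' (t : ℝ) (ht : t ∈ Icc (t₁ - τ) s) := hbarrier x (by constructor <;> linarith) s
    (by constructor <;> linarith) t (by constructor <;> linarith [ht.1, ht.2])
  refine ⟨hxs, h.le_spaceDeriv_of_mul_sub_le (y := x₁ + ρ) (by linarith) fun z hz =>
    h.mul_sub_le_of_add_le hm (α := x₁ - ρ) (β := x₁ + ρ) (a := t₁ - τ) (κ := L * ρ / 4)
      (lt_min (half_pos hL) hc) (by positivity) hs.le (fun t ht => ?_) (fun t ht => ?_)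
      (fun t ht => ?_) (hinit.mono (min_le_right _ _) subset_rfl) (by constructor <;> linarith)
      ⟨by linarith [hz.1], hz.2.le⟩ hz.1.le⟩
  · nlinarith [(hbarrier' t ht).1]
  · nlinarith [(hbarrier' t ht).2]
  · exact (hnear t (by constructor <;> linarith [ht.1, ht.2])).1.imp_right fun hsteep' =>
      hsteep'.mono (hσL.trans (half_le_self hL.le)) subset_rfl

end IsMonotoneSolution

lemma exists_eventually_mem_of_isLocallyClosed {X : Type*} [TopologicalSpace X]
    [LocallyCompactSpace X] [R1Space X] {B : Set X} (hB : IsLocallyClosed B) (hne : B.Nonempty)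
    {E : ℕ → Set X} (hE : ∀ n, IsClosed (E n)) (hcover : B ⊆ ⋃ n, E n) :
    ∃ p ∈ B, ∃ n, ∀ᶠ q in 𝓝[B] p, q ∈ E n := by
  have := hB.locallyCompactSpace
  have := hne.to_subtype
  obtain ⟨n, p, hp⟩ := nonempty_interior_of_iUnion_of_closed (X := B)
    (f := fun n => (↑) ⁻¹' E n) (fun n => (hE n).preimage continuous_subtype_val)
    (eq_univ_iff_forall.2 fun q => by simpa using hcover q.2)
  exact ⟨p, p.2, n, (eventually_nhds_subtype_iff B p (· ∈ E n)).1 (mem_interior_iff_mem_nhds.1 hp)⟩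

namespace IsMonotoneSolution

variable {m t₀ : ℝ} {u : ℝ → ℝ → ℝ}

lemma exists_isSteepOn_one_div (h : IsMonotoneSolution m t₀ u) {p : ℝ × ℝ}
    (hp : p ∈ transitionRegion u t₀) :
    ∃ n : ℕ, IsSteepOn (u · p.2) (1 / (n + 1)) (Icc (p.1 - 1 / (n + 1)) (p.1 + 1 / (n + 1))) := by
  have hslice : ∀ᶠ x in 𝓝 p.1, (x, p.2) ∈ transitionRegion u t₀ :=
    ((by fun_prop : Continuous fun x => (x, p.2)).tendsto p.1).eventually
      ((isOpen_transitionRegion h.continuous t₀).mem_nhds hp)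
  obtain ⟨δ, hδ, hball⟩ := Metric.nhds_basis_closedBall.eventually_iff.1 hslice
  rw [Real.closedBall_eq_Icc] at hball
  obtain ⟨c, hc, hsteep⟩ := h.exists_isSteepOn fun x hx => (hball hx).2
  obtain ⟨n, hn⟩ := exists_nat_one_div_lt (lt_min hc hδ)
  rw [lt_min_iff] at hn
  exact ⟨n, hsteep.mono hn.1.le (Icc_subset_Icc (by linarith) (by linarith))⟩

theorem isNondegenerateAt (h : IsMonotoneSolution m t₀ u) (hm : m < 0) {p : ℝ × ℝ}
    (hp : p ∈ transitionRegion u t₀) : IsNondegenerateAt u t₀ p := by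
  by_contra hnp
  have hregion := isOpen_transitionRegion h.continuous t₀
  have hclosed := (isOpen_setOf_isNondegenerateAt u t₀).isClosed_compl
  obtain ⟨⟨x₁, t₁⟩, ⟨hregion₁, hbad⟩, n, hn⟩ := exists_eventually_mem_of_isLocallyClosed
    (hregion.isLocallyClosed.inter hclosed.isLocallyClosed)
    ⟨p, hp, hnp⟩ (fun n : ℕ => isClosed_setOf_isSteepOn h.continuous (1 / (n + 1)) (1 / (n + 1)))
    fun q hq => mem_iUnion.2 (h.exists_isSteepOn_one_div hq.1)
  have hδ : (0 : ℝ) < 1 / (n + 1) := Nat.one_div_pos_of_nat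
  set δ : ℝ := 1 / (n + 1)
  obtain ⟨r, hr, hball⟩ := Metric.eventually_nhds_iff_ball.1
    ((eventually_nhdsWithin_iff.1 hn).and (hregion.mem_nhds hregion₁))
  rw [← ball_prod_same, Real.ball_eq_Ioo, Real.ball_eq_Ioo] at hball
  obtain ⟨ρ, hρ, hρlt⟩ := exists_between (lt_min hr (half_pos hδ))
  rw [lt_min_iff] at hρlt
  have hmem {x t : ℝ} (hx : x ∈ Icc (x₁ - ρ) (x₁ + ρ)) (ht : t ∈ Ioo (t₁ - r) (t₁ + r)) :=
    hball (x, t) ⟨by constructor <;> linarith [hx.1, hx.2], ht⟩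
  have hsub {x : ℝ} (hx : x ∈ Icc (x₁ - ρ) (x₁ + ρ)) :
      Icc (x₁ - ρ) (x₁ + ρ) ⊆ Icc (x - δ) (x + δ) :=
    Icc_subset_Icc (by linarith [hx.2]) (by linarith [hx.1])
  have hx₁ : x₁ ∈ Icc (x₁ - ρ) (x₁ + ρ) := by constructor <;> linarith
  have ht₁ : t₁ ∈ Ioo (t₁ - r) (t₁ + r) := by constructor <;> linarith
  refine hbad (h.isNondegenerateAt_of_isSteepOn hm hρ hδ (fun x hx => (hmem hx ht₁).2) ?_
    (((hmem hx₁ ht₁).1 ⟨hregion₁, hbad⟩).mono le_rfl (hsub hx₁)))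
  filter_upwards [Ioo_mem_nhds ht₁.1 ht₁.2] with t ht
  refine or_iff_not_imp_left.2 fun hex => ?_
  push Not at hex
  obtain ⟨x, hx, hxt⟩ := hex
  exact ((hmem hx ht).1 ⟨(hmem hx ht).2, hxt⟩).mono le_rfl (hsub hx)

end IsMonotoneSolution

section Touching

variable {x₁ t₁ p k θ r : ℝ}

lemma hasDerivAt_parabola (x : ℝ) :
    HasDerivAt (fun x => p * (x - x₁) - k / 2 * (x - x₁) ^ 2) (p - k * (x - x₁)) x := by
  have hsub := (hasDerivAt_id x).sub_const x₁
  exact ((hsub.const_mul p).sub ((hsub.pow 2).const_mul (k / 2))).congr_deriv (by simp; ring)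

lemma hasDerivAt_parabola_slope (x : ℝ) : HasDerivAt (fun x => p - k * (x - x₁)) (-k) x :=
  ((((hasDerivAt_id x).sub_const x₁).const_mul k).const_sub p).congr_deriv (by simp)

namespace IsMonotoneSolution

variable {m t₀ : ℝ} {u : ℝ → ℝ → ℝ}

lemma not_forall_add_le_parabola (h : IsMonotoneSolution m t₀ u) (hm : m < 0) (hp : 0 < p)
    (hθ : θ < k * p ^ (m - 1)) (hr : 0 < r) (hmem : (x₁, t₁) ∈ transitionRegion u t₀) {η : ℝ}
    (hη : 0 < η) :
    ¬ ∀ x ∈ Icc (x₁ - r) (x₁ + r), ∀ t ∈ Icc (t₁ - r) t₁,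
      u x t + η * ((x - x₁) ^ 2 + (t₁ - t))
        ≤ u x₁ t₁ + (p * (x - x₁) - k / 2 * (x - x₁) ^ 2 - θ * (t - t₁)) := by
  intro hmax
  have hnear : ∀ᶠ x in 𝓝 x₁, 0 < p - k * (x - x₁) ∧ θ < k * (p - k * (x - x₁)) ^ (m - 1) :=
    (ContinuousAt.eventually_lt (by fun_prop) (by fun_prop) (by simpa using hp)).and
      (ContinuousAt.eventually_lt (by fun_prop) (continuousAt_const.mul
        (ContinuousAt.rpow_const (by fun_prop) (Or.inl (by simpa using hp.ne'))))
        (by simpa using hθ))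
  obtain ⟨δ, hδ, hball⟩ := Metric.eventually_nhds_iff_ball.1 hnear
  obtain ⟨δ', hδ', hball'⟩ := Metric.isOpen_iff.1 (isOpen_setOf_isNondegenerateAt u t₀) _
    (h.isNondegenerateAt hm hmem)
  rw [← ball_prod_same] at hball'
  obtain ⟨ρ, hρ, hρlt⟩ := exists_between (lt_min hr (lt_min hδ hδ'))
  simp only [lt_min_iff, Real.ball_eq_Ioo] at hρlt hball hball'
  have hslope {x : ℝ} (hx : x ∈ Icc (x₁ - ρ) (x₁ + ρ)) :=
    hball x (by constructor <;> linarith [hx.1, hx.2])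
  have hside {t : ℝ} (ht : t ∈ Icc (t₁ - ρ) t₁) {x : ℝ} (hx : x ∈ Icc (x₁ - ρ) (x₁ + ρ)) :=
    hmax x ⟨by linarith [hx.1], by linarith [hx.2]⟩ t ⟨by linarith [ht.1], ht.2⟩
  obtain ⟨y, hy, hle⟩ := h.exists_le_of_le hm (ε := 1) (θ := θ) (t₁ := t₁ - ρ) (t₂ := t₁) (x := x₁)
    (κ := u x₁ t₁ - η * ρ ^ 2) (η := u x₁ t₁) (by linarith)
    (fun x hx t ht => hball' ⟨by constructor <;> linarith [hx.1, hx.2],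
      by constructor <;> linarith [ht.1, ht.2]⟩)
    (fun x => (hasDerivAt_parabola x).add_const (θ * t₁)) hasDerivAt_parabola_slope continuous_const
    (fun x hx => (hslope hx).1) (fun x hx => by linarith [(hslope hx).2])
    (sub_lt_self _ (by positivity))
    (fun t ht => by nlinarith [hside ht (left_mem_Icc.2 (by linarith)), ht.2])
    (fun t ht => by nlinarith [hside ht (right_mem_Icc.2 (by linarith)), ht.2])
    (by constructor <;> linarith) (by simp)
  have := hside (left_mem_Icc.2 (by linarith)) hy
  nlinarith [mul_pos hη hρ, mul_nonneg hη.le (sq_nonneg (y - x₁))]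

lemma not_forall_le_parabola (h : IsMonotoneSolution m t₀ u) (hm : m < 0) (hp : 0 < p)
    (hθ : θ < k * p ^ (m - 1)) (hr : 0 < r) (hmem : (x₁, t₁) ∈ transitionRegion u t₀) :
    ¬ ∀ x ∈ Icc (x₁ - r) (x₁ + r), ∀ t ∈ Icc (t₁ - r) t₁,
      u x t ≤ u x₁ t₁ + (p * (x - x₁) - k / 2 * (x - x₁) ^ 2 - θ * (t - t₁)) := by
  intro hmax
  have hstrict : ∀ᶠ η in 𝓝 (0 : ℝ), θ + η < (k - 2 * η) * p ^ (m - 1) :=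
    ContinuousAt.eventually_lt (by fun_prop) (by fun_prop) (by simpa using hθ)
  obtain ⟨η, hηθ, hη⟩ :=
    ((hstrict.filter_mono nhdsWithin_le_nhds).and (self_mem_nhdsWithin (s := Ioi 0))).exists
  refine h.not_forall_add_le_parabola hm hp hηθ hr hmem hη fun x hx t ht => ?_
  linarith [hmax x hx t ht]

end IsMonotoneSolution

end Touching

/-- A supersolution of `v_t = v_x ^ (m - 1) * v_xx` on `[a, a + L]` before time `t₁`, for `1 ≤ L`
and `m ≤ -1`, whose size does not depend on `L`. -/
noncomputable def parabolicBarrier (m a L t₁ x t : ℝ) : ℝ :=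
  1 / 2 + 2 * ((x - a) / L) - ((x - a) / L) ^ 2 / 2 + 2 ^ (m - 2) * (t₁ - t)

section Barrier

variable {m a L t₁ x t : ℝ}

lemma half_le_parabolicBarrier (hL : 0 < L) (hx : x ∈ Icc a (a + L)) (ht : t ≤ t₁) :
    1 / 2 ≤ parabolicBarrier m a L t₁ x t := by
  have hz : 0 ≤ (x - a) / L := div_nonneg (sub_nonneg.2 hx.1) hL.le
  have hz' : (x - a) / L ≤ 1 := (div_le_one hL).2 (by linarith [hx.2])
  have : 0 ≤ (2 : ℝ) ^ (m - 2) * (t₁ - t) := mul_nonneg (by positivity) (sub_nonneg.2 ht)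
  rw [parabolicBarrier]
  nlinarith

lemma one_le_parabolicBarrier_right (hL : L ≠ 0) (ht : t ≤ t₁) :
    1 ≤ parabolicBarrier m a L t₁ (a + L) t := by
  have : 0 ≤ (2 : ℝ) ^ (m - 2) * (t₁ - t) := mul_nonneg (by positivity) (sub_nonneg.2 ht)
  rw [parabolicBarrier, add_sub_cancel_left, div_self hL]
  linarith

lemma one_le_parabolicBarrier_initial (hL : 0 < L) (hx : x ∈ Icc a (a + L))
    (ht : t + 2 ^ (1 - m) ≤ t₁) : 1 ≤ parabolicBarrier m a L t₁ x t := by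
  have hz : 0 ≤ (x - a) / L := div_nonneg (sub_nonneg.2 hx.1) hL.le
  have hz' : (x - a) / L ≤ 1 := (div_le_one hL).2 (by linarith [hx.2])
  have : (1 / 2 : ℝ) ≤ 2 ^ (m - 2) * (t₁ - t) :=
    calc (1 / 2 : ℝ) = 2 ^ (m - 2) * 2 ^ (1 - m) := by
          rw [← Real.rpow_add two_pos, sub_add_sub_cancel', one_div, ← Real.rpow_neg_one]
          norm_num
      _ ≤ 2 ^ (m - 2) * (t₁ - t) := by gcongr; linarith
  rw [parabolicBarrier]
  nlinarith

lemma parabolicBarrier_final_le :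
    parabolicBarrier m a L t₁ x t₁ ≤ 1 / 2 + 2 * ((x - a) / L) := by
  rw [parabolicBarrier, sub_self, mul_zero, add_zero]
  linarith [sq_nonneg ((x - a) / L)]

lemma parabolicBarrier_sub (y s : ℝ) :
    parabolicBarrier m a L t₁ x t - parabolicBarrier m a L t₁ y s
      = (2 - (y - a) / L) / L * (x - y) - 1 / L ^ 2 / 2 * (x - y) ^ 2 - 2 ^ (m - 2) * (t - s) := by
  simp only [parabolicBarrier]
  ring

lemma hasDerivAt_parabolicBarrier :
    HasDerivAt (parabolicBarrier m a L t₁ · t) ((2 - (x - a) / L) / L) x := by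
  have hz : HasDerivAt (fun x => (x - a) / L) (1 / L) x :=
    ((hasDerivAt_id x).sub_const a).div_const L
  refine ((((hz.const_mul 2).const_add (1 / 2)).sub ((hz.pow 2).div_const 2)).add_const
    (2 ^ (m - 2) * (t₁ - t))).congr_deriv ?_
  norm_num
  ring

lemma two_rpow_lt_mul_rpow (hm : m ≤ -1) (hL : 1 ≤ L) {p : ℝ} (hp : 0 < p) (hpL : p ≤ 2 / L) :
    2 ^ (m - 2) < 1 / L ^ 2 * p ^ (m - 1) := by
  have hL₀ : 0 < L := by linarith
  calc (2 : ℝ) ^ (m - 2) < 2 ^ (m - 1) := Real.rpow_lt_rpow_of_exponent_lt one_lt_two (by linarith)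
    _ ≤ 2 ^ (m - 1) * L ^ (-2 - (m - 1)) :=
      le_mul_of_one_le_right (by positivity) (Real.one_le_rpow hL (by linarith))
    _ = 1 / L ^ 2 * (2 / L) ^ (m - 1) := by
      rw [Real.rpow_sub hL₀, Real.div_rpow zero_le_two hL₀.le, Real.rpow_neg hL₀.le, Real.rpow_two]
      ring
    _ ≤ 1 / L ^ 2 * p ^ (m - 1) := by
      gcongr _ * ?_
      exact Real.rpow_le_rpow_of_nonpos hp hpL (by linarith)

end Barrier

namespace IsMonotoneSolution

variable {m t₀ : ℝ} {u : ℝ → ℝ → ℝ}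

lemma mem_Ioo_of_isLocalMax_sub (h : IsMonotoneSolution m t₀ u) {q : ℝ → ℝ} {q' x t : ℝ}
    (hpos : 0 < u x t) (hq : HasDerivAt q q' x) (hq' : 0 < q')
    (hmax : IsLocalMax (fun y => u y t - q y) x) : u x t ∈ Ioo 0 1 := by
  refine ⟨hpos, (h.mem_Icc x t).2.lt_of_ne fun hone => ?_⟩
  have hcrit := hmax.hasDerivAt_eq_zero ((h.hasDerivAt x t).sub hq)
  have hzero : spaceDeriv u x t = 0 := IsLocalMax.hasDerivAt_eq_zero
    (.of_forall fun y => (h.mem_Icc y t).2.trans hone.ge) (h.hasDerivAt x t)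
  linarith

lemma mem_Ioo_of_parabolicBarrier_lt (h : IsMonotoneSolution m t₀ u) {a s t₁ x t L : ℝ} (hL : 0 < L)
    (hst : s + 2 ^ (1 - m) ≤ t₁) (ha : ∀ t ∈ Icc s t₁, u a t ≤ 1 / 2) (hx : x ∈ Icc a (a + L))
    (ht : t ∈ Icc s t₁) (hlt : parabolicBarrier m a L t₁ x t < u x t) :
    x ∈ Ioo a (a + L) ∧ s < t := by
  refine ⟨⟨hx.1.lt_of_ne ?_, hx.2.lt_of_ne ?_⟩, ht.1.lt_of_ne ?_⟩ <;> rintro rfl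
  · exact hlt.not_ge ((ha t ht).trans (half_le_parabolicBarrier hL hx ht.2))
  · exact hlt.not_ge ((h.mem_Icc _ t).2.trans (one_le_parabolicBarrier_right hL.ne' ht.2))
  · exact hlt.not_ge ((h.mem_Icc x s).2.trans (one_le_parabolicBarrier_initial hL hx hst))

lemma le_parabolicBarrier (h : IsMonotoneSolution m t₀ u) (hm : m ≤ -1) {a s t₁ x L : ℝ}
    (hL : 1 ≤ L) (hs : t₀ < s) (hst : s + 2 ^ (1 - m) ≤ t₁) (ha : ∀ t ∈ Icc s t₁, u a t ≤ 1 / 2)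
    (hx : x ∈ Icc a (a + L)) : u x t₁ ≤ parabolicBarrier m a L t₁ x t₁ := by
  by_contra! hlt
  have hL₀ : 0 < L := by linarith
  have hst₁ : s < t₁ := lt_of_lt_of_le (lt_add_of_pos_right s (by positivity)) hst
  have hu := h.continuous
  obtain ⟨⟨y, τ⟩, ⟨hy, hτ⟩, hmax⟩ :=
    ((isCompact_Icc (a := a) (b := a + L)).prod (isCompact_Icc (a := s) (b := t₁))).exists_isMaxOn
      ⟨(x, t₁), hx, right_mem_Icc.2 hst₁.le⟩
      (f := fun z => u z.1 z.2 - parabolicBarrier m a L t₁ z.1 z.2)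
      (by unfold parabolicBarrier; fun_prop)
  have hmax (z w : ℝ) (hz : z ∈ Icc a (a + L)) (hw : w ∈ Icc s t₁) :
      u z w - parabolicBarrier m a L t₁ z w ≤ u y τ - parabolicBarrier m a L t₁ y τ :=
    hmax (a := (z, w)) ⟨hz, hw⟩
  have hpos : parabolicBarrier m a L t₁ y τ < u y τ := by
    linarith [hmax x t₁ hx (right_mem_Icc.2 hst₁.le)]
  obtain ⟨hy', hτ'⟩ := h.mem_Ioo_of_parabolicBarrier_lt hL₀ hst ha hy hτ hpos
  have hz : (y - a) / L ≤ 1 := (div_le_one hL₀).2 (by linarith [hy.2])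
  have hz₀ : 0 ≤ (y - a) / L := div_nonneg (by linarith [hy.1]) hL₀.le
  have hp : 0 < (2 - (y - a) / L) / L := div_pos (by linarith) hL₀
  have hmem : u y τ ∈ Ioo 0 1 := by
    refine h.mem_Ioo_of_isLocalMax_sub (by linarith [half_le_parabolicBarrier (m := m) hL₀ hy hτ.2])
      (hasDerivAt_parabolicBarrier (m := m) (t₁ := t₁) (t := τ)) hp ?_
    filter_upwards [Icc_mem_nhds hy'.1 hy'.2] with z hz using hmax z τ hz hτ
  obtain ⟨r, hr, hrlt⟩ := exists_between
    (lt_min (sub_pos.2 hy'.1) (lt_min (sub_pos.2 hy'.2) (sub_pos.2 hτ')))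
  simp only [lt_min_iff] at hrlt
  refine h.not_forall_le_parabola (by linarith) hp
    (two_rpow_lt_mul_rpow hm hL hp (by gcongr; linarith)) hr ⟨hs.trans hτ', hmem⟩
    fun z hz w hw => ?_
  rw [← parabolicBarrier_sub (t₁ := t₁)]
  linarith [hmax z w ⟨by linarith [hz.1], by linarith [hz.2]⟩
    ⟨by linarith [hw.1], hw.2.trans hτ.2⟩]

lemma le_half (h : IsMonotoneSolution m t₀ u) (hm : m ≤ -1) {a s t₁ x : ℝ} (hs : t₀ < s)
    (hst : s + 2 ^ (1 - m) ≤ t₁) (ha : ∀ t ∈ Icc s t₁, u a t ≤ 1 / 2) (hx : a ≤ x) :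
    u x t₁ ≤ 1 / 2 := by
  have hlim : Tendsto (fun L => 1 / 2 + 2 * ((x - a) / L)) atTop (𝓝 (1 / 2 + 2 * 0)) :=
    ((tendsto_const_nhds.div_atTop tendsto_id).const_mul 2).const_add (1 / 2)
  rw [mul_zero, add_zero] at hlim
  refine ge_of_tendsto hlim ?_
  filter_upwards [eventually_ge_atTop 1, eventually_ge_atTop (x - a)] with L hL hxL
  exact (h.le_parabolicBarrier hm hL hs hst ha ⟨hx, by linarith⟩).trans parabolicBarrier_final_le

lemma exists_forall_le_of_tendsto (h : IsMonotoneSolution m t₀ u) {K : Set ℝ} (hK : IsCompact K)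
    (hbot : ∀ t ∈ K, Tendsto (u · t) atBot (𝓝 0)) {c : ℝ} (hc : 0 < c) :
    ∃ a, ∀ t ∈ K, u a t ≤ c := by
  have hu := h.continuous
  have hlocal : ∀ t ∈ K, ∀ᶠ z : ℝ × ℝ in atBot ×ˢ 𝓝 t, u z.1 z.2 ≤ c := fun t ht => by
    obtain ⟨a, ha⟩ := ((hbot t ht).eventually_lt_const hc).exists
    have hnear : ∀ᶠ s in 𝓝 t, u a s < c :=
      ContinuousAt.eventually_lt (by fun_prop) (by fun_prop) ha
    filter_upwards [(eventually_le_atBot a).prod_mk hnear] with z hz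
    exact (h.monotone z.2 hz.1).trans hz.2.le
  have hall : ∀ᶠ z : ℝ × ℝ in atBot ×ˢ 𝓝ˢ K, u z.1 z.2 ≤ c := hK.mem_prod_nhdsSet_of_forall hlocal
  obtain ⟨a, ha⟩ := hall.curry.exists
  exact ⟨a, ha.self_of_nhdsSet⟩

theorem not_tendsto_one (h : IsMonotoneSolution m t₀ u) (hm : m ≤ -1)
    (hbot : ∀ t > t₀, Tendsto (u · t) atBot (𝓝 0)) :
    ∃ t > t₀, ¬ Tendsto (u · t) atTop (𝓝 1) := by
  obtain ⟨a, ha⟩ := h.exists_forall_le_of_tendsto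
    (isCompact_Icc (a := t₀ + 1) (b := t₀ + 1 + 2 ^ (1 - m)))
    (fun t ht => hbot t (by linarith [ht.1])) (c := 1 / 2) (by norm_num)
  have hduration : (0 : ℝ) < 2 ^ (1 - m) := by positivity
  refine ⟨t₀ + 1 + 2 ^ (1 - m), by linarith, fun htop => ?_⟩
  obtain ⟨x, hx, hax⟩ := ((htop.eventually_const_lt (by norm_num : (1 / 2 : ℝ) < 1)).and
    (eventually_ge_atTop a)).exists
  exact hx.not_ge (h.le_half hm (by linarith) le_rfl ha hax)

end IsMonotoneSolution

lemma IsWeakSolution.isMonotoneSolution {m : ℝ} {Φ u₀ : ℝ → ℝ} {u : ℝ → ℝ → ℝ}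
    (hu : IsWeakSolution Φ u₀ u) (hΦ : ∀ s, 0 < s → Φ s = s ^ m / m)
    (hmem : ∀ x t, 0 ≤ t → u x t ∈ Icc 0 1) (hmono : ∀ t, 0 < t → Monotone (u · t))
    (hpos : ∀ x t, 0 < t → u x t ∈ Ioo 0 1 → 0 < deriv (u · t) x) {T : ℝ} (hT : 0 < T) :
    IsMonotoneSolution m T (fun x t => u x (max t T)) := by
  obtain ⟨hcont, -, hsmooth, hweak⟩ := hu
  have hmax (t : ℝ) : 0 < max t T := lt_max_of_lt_right hT
  refine ⟨?_, fun x t => hmem x _ (hmax t).le, fun t => hmono _ (hmax t),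
    fun t => hsmooth _ (hmax t), fun h => hpos _ _ (hmax _) h, fun φ hφ hcpt hsupp => ?_⟩
  · exact hcont.comp_continuous (f := fun p : ℝ × ℝ => (p.1, max p.2 T)) (by fun_prop)
      fun p => ⟨mem_univ _, (hmax p.2).le⟩
  have hsub : tsupport (uncurry φ) ⊆ univ ×ˢ Ioi 0 :=
    fun p hp => ⟨mem_univ _, hT.trans (hsupp hp).1⟩
  refine Eq.trans ?_ (hweak φ hφ hcpt hsub)
  rw [← setIntegral_eq_integral_of_forall_compl_eq_zero (s := univ ×ˢ Ioi 0)]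
  · refine setIntegral_congr_fun (MeasurableSet.univ.prod measurableSet_Ioi) fun p hp => ?_
    by_cases hps : p ∈ tsupport (uncurry φ)
    · obtain ⟨hTp, hup⟩ := hsupp hps
      simp only [spaceDeriv, max_eq_left hTp.le] at hup ⊢
      rw [hΦ _ (hpos p.1 p.2 hp.2 hup)]
    · obtain ⟨htime, hspace⟩ := deriv_slices_eq_zero_of_notMem_tsupport hps
      simp only [htime, hspace, mul_zero]
  · intro p hp
    obtain ⟨htime, hspace⟩ := deriv_slices_eq_zero_of_notMem_tsupport fun h => hp (hsub h)
    simp only [htime, hspace, mul_zero, sub_zero]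

theorem typeI_nonexistence_general (m : ℝ) (hm : m ≤ -1) (Φ : ℝ → ℝ)
    (hΦ : ∀ s : ℝ, 0 < s → Φ s = s ^ m / m) (u₀ : ℝ → ℝ) :
    ¬ ∃ u : ℝ → ℝ → ℝ,
      (∀ x t : ℝ, 0 ≤ t → 0 ≤ u x t ∧ u x t ≤ 1) ∧
      (∀ t : ℝ, 0 < t →
        Monotone (fun x => u x t) ∧
        (∀ x : ℝ, 0 < u x t → u x t < 1 → 0 < deriv (fun y => u y t) x) ∧
        Tendsto (fun x => u x t) atBot (𝓝 0) ∧
        Tendsto (fun x => u x t) atTop (𝓝 1)) ∧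
      IsWeakSolution Φ u₀ u := by
  rintro ⟨u, hmem, hprofile, hu⟩
  have hmono := hu.isMonotoneSolution hΦ hmem (fun t ht => (hprofile t ht).1)
    (fun x t ht hx => (hprofile t ht).2.1 x hx.1 hx.2) one_pos
  obtain ⟨t, -, hlim⟩ := hmono.not_tendsto_one hm fun t _ =>
    (hprofile _ (lt_max_of_lt_right one_pos)).2.2.1
  exact hlim (hprofile _ (lt_max_of_lt_right one_pos)).2.2.2

/-- Theorem 5.1, nonexistence part, of Barenblatt–Vázquez.
For `m ≤ -1` and `Φ(s) = s^m/m` (for `s > 0`), the Cauchy problem with nondecreasing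
continuous bounded data `u₀` joining the levels `0` and `1` has no continuous weak
solution in the class of functions `0 ≤ u ≤ 1` whose profiles `u(·,t)` are
nondecreasing, with positive gradient where `0 < u < 1`, and join `0` at `-∞`
to `1` at `+∞`. -/
theorem typeI_nonexistence
    (m : ℝ) (hm : m ≤ -1) (Φ : ℝ → ℝ)
    (hΦ : ∀ s : ℝ, 0 < s → Φ s = s ^ m / m)
    (u₀ : ℝ → ℝ) (hu₀cont : Continuous u₀) (hu₀mono : Monotone u₀)
    (hu₀01 : ∀ x, 0 ≤ u₀ x ∧ u₀ x ≤ 1)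
    (hu₀bot : Tendsto u₀ atBot (𝓝 0)) (hu₀top : Tendsto u₀ atTop (𝓝 1)) :
    ¬ ∃ u : ℝ → ℝ → ℝ,
      (∀ x t : ℝ, 0 ≤ t → 0 ≤ u x t ∧ u x t ≤ 1) ∧
      (∀ t : ℝ, 0 < t →
        Monotone (fun x => u x t) ∧
        (∀ x : ℝ, 0 < u x t → u x t < 1 → 0 < deriv (fun y => u y t) x) ∧
        Tendsto (fun x => u x t) atBot (𝓝 0) ∧
        Tendsto (fun x => u x t) atTop (𝓝 1)) ∧
      IsWeakSolution Φ u₀ u := by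
  exact typeI_nonexistence_general m hm Φ hΦ u₀
end

section
/- Let m > -1 and let v be a nonnegative classical (smooth, positive where the equation is evaluated) solution of v_t = ∂ₓ²(v^m/m) on ℝ × (0,∞) (interpreted as v_t = ∂ₓ²(log v) when m = 0), with conserved unit mass: ∫_ℝ v(x,t) dx = 1 for all t > 0. Then the uniform norm decays at the exact rate t^{-1/(m+1)}: there exist constants 0 < c₁ ≤ c₂ < ∞ and t* > 0 such that c₁ t^{-1/(m+1)} ≤ sup_{x∈ℝ} v(x,t) ≤ c₂ t^{-1/(m+1)} for all t ≥ t*. -/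
open Set Filter Topology MeasureTheory

/-!
The idea is to work with the intensity `u`, where `uₓ = v` and `u_t = ∂ₓ Φ(v)`, instead of `v`. By
unit mass `u(·, t)` is increasing with total variation `1`. Put `γ = 1 / (m + 1)`.

Upper bound. A maximum principle for `u(y, t) - u(x, t)` in the doubled variables `(x, y, t)` allows
comparison with concave barriers `2 (1 - exp (-A(t) (y - x)))`; these are supersolutions as soon as
`A_t = -κ A ^ (m + 2)` with `κ` small, that is for `A(t) = a t ^ (-γ)` up to a time shift. Letting
`y → x` bounds `v` by a multiple of `t ^ (-γ)`.

Lower bound. Integrating `u_t = ∂ₓ Φ(v)` in time, `u(x, t) - u(x, s)` is the `x`-derivative of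
`∫ Φ(v(x, τ)) dτ` over `[s, t]`, and it has the same limit at both ends of the line. As `v` is
bounded, the integral is bounded above, so this limit is `0`: no mass escapes to infinity and
`c = u(-∞, t)` does not depend on `t`. The barrier `η + B t ^ (1 / 2) (X - x) ^ (-(m + 1) / 2)` then
keeps `u(x, t) - c` small for `x ≤ -C t ^ γ`, and by reflection `c + 1 - u(x, t)` for
`x ≥ C t ^ γ`. Hence `u` climbs by at least `1 / 2` over a distance `O(t ^ γ)`, and the mean value
theorem finishes.
-/

/-! ### Calculus on the line and in the half-plane -/

theorem second_deriv_nonpos_of_isLocalMax {f f' : ℝ → ℝ} {a c : ℝ} (hmax : IsLocalMax f a)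
    (hf : ∀ᶠ x in 𝓝 a, HasDerivAt f (f' x) x) (hf' : HasDerivAt f' c a) : c ≤ 0 := by
  by_contra! hc
  have hderiv : deriv f =ᶠ[𝓝 a] f' := hf.mono fun x hx => hx.deriv
  have hderiv2 : deriv (deriv f) a = c := hderiv.deriv_eq.trans hf'.deriv
  have hmin : IsLocalMin f a :=
    isLocalMin_of_deriv_deriv_pos (hderiv2 ▸ hc) hmax.deriv_eq_zero hf.self_of_nhds.continuousAt
  have hconst : f =ᶠ[𝓝 a] fun _ => f a := by
    filter_upwards [hmax, hmin] with x h₁ h₂ using le_antisymm h₁ h₂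
  have : deriv (deriv f) a = 0 := by simpa using hconst.deriv.deriv_eq
  exact hc.ne (this.symm.trans hderiv2)

theorem deriv_nonneg_of_isMaxOn_Icc {f : ℝ → ℝ} {a b c : ℝ} (hab : a < b)
    (hmax : IsMaxOn f (Icc a b) b) (hf : HasDerivAt f c b) : 0 ≤ c := by
  have h := hmax.localize.hasFDerivWithinAt_nonpos hf.hasFDerivAt.hasFDerivWithinAt
    (sub_mem_posTangentConeAt_of_segment_subset (y := a)
      (by rw [segment_symm, segment_eq_Icc hab.le]))
  have : (a - b) * c ≤ 0 := by simpa using h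
  nlinarith

theorem hasDerivAt_integral_of_continuousOn {F F' : ℝ → ℝ → ℝ} {U : Set ℝ} {a b x : ℝ}
    (hU : U ∈ 𝓝 x) (hF : ∀ y ∈ U, ContinuousOn (F y) (uIcc a b))
    (hF' : ContinuousOn (fun p : ℝ × ℝ => F' p.1 p.2) (U ×ˢ uIcc a b))
    (hderiv : ∀ y ∈ U, ∀ τ ∈ uIcc a b, HasDerivAt (fun z => F z τ) (F' y τ) y) :
    HasDerivAt (fun y => ∫ τ in a..b, F y τ) (∫ τ in a..b, F' x τ) x := by
  obtain ⟨K, hK, hKU, hKc⟩ := local_compact_nhds hU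
  obtain ⟨C, hC⟩ := (hKc.prod isCompact_uIcc).exists_bound_of_continuousOn
    (hF'.mono (prod_mono_left hKU))
  have hF'x : ContinuousOn (F' x) (uIcc a b) :=
    hF'.comp (f := fun τ => (x, τ)) (by fun_prop) fun τ hτ => ⟨mem_of_mem_nhds hU, hτ⟩
  refine (intervalIntegral.hasDerivAt_integral_of_dominated_loc_of_deriv_le (bound := fun _ => C)
    hK ?_ (hF x (mem_of_mem_nhds hU)).intervalIntegrable
    (hF'x.intervalIntegrable.def'.aestronglyMeasurable) (.of_forall fun τ hτ y hy =>
      hC (y, τ) ⟨hy, uIoc_subset_uIcc hτ⟩) intervalIntegrable_const (.of_forall fun τ hτ y hy =>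
      hderiv y (hKU hy) τ (uIoc_subset_uIcc hτ))).2
  filter_upwards [hU] with y hy using (hF y hy).intervalIntegrable.def'.aestronglyMeasurable

theorem tendsto_atTop_of_tendsto_deriv_pos {g g' : ℝ → ℝ} {c : ℝ}
    (hg : ∀ x, HasDerivAt g (g' x) x) (hg' : Tendsto g' atTop (𝓝 c)) (hc : 0 < c) :
    Tendsto g atTop atTop := by
  obtain ⟨R, hR⟩ := eventually_atTop.1 (hg'.eventually (lt_mem_nhds (half_lt_self hc)))
  have hlin : Tendsto (fun x => g R + c / 2 * (x - R)) atTop atTop :=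
    tendsto_atTop_add_const_left _ _
      ((tendsto_atTop_add_const_right _ _ tendsto_id).const_mul_atTop (half_pos hc))
  refine tendsto_atTop_mono' _ ?_ hlin
  filter_upwards [eventually_ge_atTop R] with x hx
  have := (convex_Ici R).mul_sub_le_image_sub_of_le_deriv (f := g) (C := c / 2)
    (fun y _ => (hg y).continuousAt.continuousWithinAt)
    (fun y _ => (hg y).differentiableAt.differentiableWithinAt)
    (fun y hy => by rw [(hg y).deriv]; exact (hR y (interior_subset hy)).le)
    R self_mem_Ici x hx hx
  linarith

theorem eq_zero_of_tendsto_deriv_of_bddAbove {g g' : ℝ → ℝ} {c : ℝ}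
    (hg : ∀ x, HasDerivAt g (g' x) x) (hbdd : BddAbove (range g))
    (hbot : Tendsto g' atBot (𝓝 c)) (htop : Tendsto g' atTop (𝓝 c)) : c = 0 := by
  rcases lt_trichotomy c 0 with hc | hc | hc
  · have hneg : ∀ x, HasDerivAt (fun x => g (-x)) (-g' (-x)) x := fun x =>
      ((hg (-x)).comp x (hasDerivAt_neg x)).congr_deriv (mul_neg_one _)
    have := tendsto_atTop_of_tendsto_deriv_pos hneg (hbot.comp tendsto_neg_atTop_atBot).neg
      (neg_pos.2 hc)
    exact absurd (hbdd.mono (range_comp_subset_range _ _)) (not_bddAbove_of_tendsto_atTop this)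
  · exact hc
  · exact absurd hbdd
      (not_bddAbove_of_tendsto_atTop (tendsto_atTop_of_tendsto_deriv_pos hg htop hc))

theorem contDiffAt_section_fst {n : WithTop ℕ∞} {f : ℝ → ℝ → ℝ} {U : Set (ℝ × ℝ)} {x t : ℝ}
    (hU : IsOpen U) (hf : ContDiffOn ℝ n (Function.uncurry f) U) (hp : (x, t) ∈ U) :
    ContDiffAt ℝ n (fun y => f y t) x :=
  (hf.contDiffAt (hU.mem_nhds hp)).comp (g := Function.uncurry f) (f := fun y => (y, t)) x
    (by fun_prop)

theorem contDiffAt_section_snd {n : WithTop ℕ∞} {f : ℝ → ℝ → ℝ} {U : Set (ℝ × ℝ)} {x t : ℝ}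
    (hU : IsOpen U) (hf : ContDiffOn ℝ n (Function.uncurry f) U) (hp : (x, t) ∈ U) :
    ContDiffAt ℝ n (fun τ => f x τ) t :=
  (hf.contDiffAt (hU.mem_nhds hp)).comp (g := Function.uncurry f) (f := fun τ => (x, τ)) t
    (by fun_prop)

theorem contDiffOn_deriv_fst {n : WithTop ℕ∞} {f : ℝ → ℝ → ℝ} {U : Set (ℝ × ℝ)}
    (hU : IsOpen U) (hf : ContDiffOn ℝ (n + 1) (Function.uncurry f) U) :
    ContDiffOn ℝ n (fun p : ℝ × ℝ => deriv (fun y => f y p.2) p.1) U := by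
  refine ((hf.fderiv_of_isOpen hU le_rfl).clm_apply
    (contDiffOn_const (c := ((1, 0) : ℝ × ℝ)))).congr fun p hp => ?_
  have hfp := (hf.differentiableOn (by simp)).differentiableAt (hU.mem_nhds hp)
  exact (hfp.hasFDerivAt.comp_hasDerivAt p.1
    ((hasDerivAt_id p.1).prodMk (hasDerivAt_const p.1 p.2))).deriv

theorem contDiffOn_deriv_snd {n : WithTop ℕ∞} {f : ℝ → ℝ → ℝ} {U : Set (ℝ × ℝ)}
    (hU : IsOpen U) (hf : ContDiffOn ℝ (n + 1) (Function.uncurry f) U) :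
    ContDiffOn ℝ n (fun p : ℝ × ℝ => deriv (fun τ => f p.1 τ) p.2) U := by
  refine ((hf.fderiv_of_isOpen hU le_rfl).clm_apply
    (contDiffOn_const (c := ((0, 1) : ℝ × ℝ)))).congr fun p hp => ?_
  have hfp := (hf.differentiableOn (by simp)).differentiableAt (hU.mem_nhds hp)
  exact (hfp.hasFDerivAt.comp_hasDerivAt p.2
    ((hasDerivAt_const p.2 p.1).prodMk (hasDerivAt_id p.2))).deriv

theorem continuousOn_uncurry_of_hasDerivAt {f f₁ f₂ : ℝ → ℝ → ℝ} {U : Set (ℝ × ℝ)}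
    (hU : IsOpen U)
    (h₁ : ∀ x t, (x, t) ∈ U → HasDerivAt (fun y => f y t) (f₁ x t) x)
    (h₂ : ∀ x t, (x, t) ∈ U → HasDerivAt (fun τ => f x τ) (f₂ x t) t)
    (hf₁ : ContinuousOn (Function.uncurry f₁) U) (hf₂ : ContinuousOn (Function.uncurry f₂) U) :
    ContinuousOn (Function.uncurry f) U := by
  have hL : Continuous (ContinuousLinearMap.toSpanSingleton ℝ : ℝ → ℝ →L[ℝ] ℝ) :=
    (ContinuousLinearMap.toSpanSingletonCLE (𝕜 := ℝ) (E := ℝ)).continuous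
  intro p hp
  refine (hasStrictFDerivAt_uncurry_coprod (𝕜 := ℝ) (u := p) (f := f)
    (f₁ := fun x t => .toSpanSingleton ℝ (f₁ x t)) (f₂ := fun x t => .toSpanSingleton ℝ (f₂ x t))
    ?_ ?_ ?_ ?_).continuousAt.continuousWithinAt
  · filter_upwards [hU.mem_nhds hp] with q hq using (h₁ q.1 q.2 hq).hasFDerivAt
  · filter_upwards [hU.mem_nhds hp] with q hq using (h₂ q.1 q.2 hq).hasFDerivAt
  · exact hL.continuousAt.comp (hf₁.continuousAt (hU.mem_nhds hp))
  · exact hL.continuousAt.comp (hf₂.continuousAt (hU.mem_nhds hp))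

theorem nonpos_of_forall_not_isMaxOn {X : Type*} [TopologicalSpace X] {f : X → ℝ} {s : Set X}
    (hs : IsClosed s) (hf : ContinuousOn f s)
    (hinf : ∀ δ > 0, ∀ᶠ p in cocompact X ⊓ 𝓟 s, f p < δ)
    (hmax : ∀ p ∈ s, 0 < f p → ¬ IsMaxOn f s p) : ∀ p ∈ s, f p ≤ 0 := by
  intro p hp
  by_contra! hpos
  obtain ⟨q, hq, hqmax⟩ := hf.exists_isMaxOn' hs hp ((hinf _ hpos).mono fun _ h => h.le)
  exact hmax q hq (hpos.trans_le (hqmax hp)) hqmax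

/-! ### The integrated equation -/

/-- The open half-plane `t > 0`, whose points are pairs `(x, t)`. -/
abbrev spaceTime : Set (ℝ × ℝ) := univ ×ˢ Ioi 0

theorem isOpen_spaceTime : IsOpen spaceTime := isOpen_univ.prod isOpen_Ioi

/-- The flux `∂ₓ Φ(v)` of the filtration equation `v_t = (Φ(v))ₓₓ`. -/
noncomputable def flux (Φ : ℝ → ℝ) (v : ℝ → ℝ → ℝ) (x t : ℝ) : ℝ :=
  deriv (fun y => Φ (v y t)) x

/-- `u` is the image intensity with gradient `v = uₓ > 0`: it solves the integrated filtration
equation `u_t = ∂ₓ Φ(uₓ)` for `t > 0`, and climbs from `c` to `c + 1` across the line. The height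
`c` is allowed to depend on `t`; `IsIntensity.exists_tendsto_atBot` shows that it does not when `v`
is bounded away from `t = 0`. -/
structure IsIntensity (Φ : ℝ → ℝ) (u v : ℝ → ℝ → ℝ) : Prop where
  contDiffOn_nonlinearity : ContDiffOn ℝ 1 Φ (Ioi 0)
  deriv_nonlinearity_nonneg : ∀ s, 0 < s → 0 ≤ deriv Φ s
  contDiffOn_gradient : ContDiffOn ℝ 1 (Function.uncurry v) spaceTime
  gradient_pos : ∀ x t, 0 < t → 0 < v x t
  hasDerivAt_space : ∀ x t, 0 < t → HasDerivAt (fun y => u y t) (v x t) x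
  hasDerivAt_time : ∀ x t, 0 < t → HasDerivAt (fun τ => u x τ) (flux Φ v x t) t
  exists_tendsto : ∀ t, 0 < t → ∃ c,
    Tendsto (fun x => u x t) atBot (𝓝 c) ∧ Tendsto (fun x => u x t) atTop (𝓝 (c + 1))

namespace IsIntensity

variable {Φ : ℝ → ℝ} {u v : ℝ → ℝ → ℝ}

section Basic

variable (h : IsIntensity Φ u v)
include h

theorem hasDerivAt_nonlinearity {s : ℝ} (hs : 0 < s) : HasDerivAt Φ (deriv Φ s) s :=
  ((h.contDiffOn_nonlinearity.differentiableOn one_ne_zero).differentiableAt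
    (Ioi_mem_nhds hs)).hasDerivAt

theorem hasDerivAt_gradient (x : ℝ) {t : ℝ} (ht : 0 < t) :
    HasDerivAt (fun y => v y t) (deriv (fun y => v y t) x) x :=
  ((contDiffAt_section_fst isOpen_spaceTime h.contDiffOn_gradient
    ⟨mem_univ _, ht⟩).differentiableAt one_ne_zero).hasDerivAt

theorem flux_eq (x : ℝ) {t : ℝ} (ht : 0 < t) :
    flux Φ v x t = deriv Φ (v x t) * deriv (fun y => v y t) x :=
  ((h.hasDerivAt_nonlinearity (h.gradient_pos x t ht)).comp x (h.hasDerivAt_gradient x ht)).deriv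

theorem continuousOn_flux : ContinuousOn (Function.uncurry (flux Φ v)) spaceTime := by
  have hΦ' : ContinuousOn (deriv Φ) (Ioi 0) :=
    h.contDiffOn_nonlinearity.continuousOn_deriv_of_isOpen isOpen_Ioi le_rfl
  have hvx := (contDiffOn_deriv_fst (n := 0) isOpen_spaceTime
    (by simpa using h.contDiffOn_gradient)).continuousOn
  exact ((hΦ'.comp h.contDiffOn_gradient.continuousOn
    fun p hp => h.gradient_pos _ _ hp.2).mul hvx).congr fun p hp => h.flux_eq _ hp.2

theorem continuousOn : ContinuousOn (Function.uncurry u) spaceTime :=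
  continuousOn_uncurry_of_hasDerivAt isOpen_spaceTime
    (fun x t hp => h.hasDerivAt_space x t hp.2) (fun x t hp => h.hasDerivAt_time x t hp.2)
    h.contDiffOn_gradient.continuousOn h.continuousOn_flux

theorem monotone {t : ℝ} (ht : 0 < t) : Monotone fun x => u x t :=
  monotone_of_hasDerivAt_nonneg (fun x => h.hasDerivAt_space x t ht)
    fun x => (h.gradient_pos x t ht).le

theorem sub_le_one {t : ℝ} (ht : 0 < t) (x y : ℝ) : u y t - u x t ≤ 1 := by
  obtain ⟨c, hbot, htop⟩ := h.exists_tendsto t ht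
  linarith [(h.monotone ht).le_of_tendsto hbot x, (h.monotone ht).ge_of_tendsto htop y]

theorem gradient_le_of_forall_sub_le {K x t : ℝ} (ht : 0 < t)
    (hK : ∀ x y, x ≤ y → u y t - u x t ≤ K * (y - x)) : v x t ≤ K := by
  have hmax : IsMaxOn (fun y => K * y - u y t) (Icc (x - 1) x) x := fun y hy => by
    change K * y - u y t ≤ K * x - u x t
    linarith [hK y x hy.2]
  have := deriv_nonneg_of_isMaxOn_Icc (sub_one_lt x) hmax
    (((hasDerivAt_id x).const_mul K).sub (h.hasDerivAt_space x t ht))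
  linarith

theorem reflect : IsIntensity Φ (fun x t => -u (-x) t) fun x t => v (-x) t where
  contDiffOn_nonlinearity := h.contDiffOn_nonlinearity
  deriv_nonlinearity_nonneg := h.deriv_nonlinearity_nonneg
  contDiffOn_gradient := h.contDiffOn_gradient.comp
    (f := fun p : ℝ × ℝ => (-p.1, p.2)) (by fun_prop) fun p hp => ⟨mem_univ _, hp.2⟩
  gradient_pos x t ht := h.gradient_pos (-x) t ht
  hasDerivAt_space x t ht :=
    ((h.hasDerivAt_space (-x) t ht).comp x (hasDerivAt_neg x)).neg.congr_deriv (by simp)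
  hasDerivAt_time x t ht :=
    (h.hasDerivAt_time (-x) t ht).neg.congr_deriv
      (deriv_comp_neg (fun y => Φ (v y t)) x).symm
  exists_tendsto t ht := by
    obtain ⟨c, hbot, htop⟩ := h.exists_tendsto t ht
    exact ⟨-(c + 1), (htop.comp tendsto_neg_atBot_atTop).neg,
      by simpa using (hbot.comp tendsto_neg_atTop_atBot).neg⟩

theorem tendsto_reflect_atBot {c : ℝ} (hc : ∀ t, 0 < t → Tendsto (fun x => u x t) atBot (𝓝 c)) :
    ∀ t, 0 < t → Tendsto (fun x => -u (-x) t) atBot (𝓝 (-(c + 1))) := by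
  intro t ht
  obtain ⟨c', hbot, htop⟩ := h.exists_tendsto t ht
  obtain rfl := tendsto_nhds_unique (hc t ht) hbot
  exact (htop.comp tendsto_neg_atBot_atTop).neg

theorem sub_le_iSup_gradient_mul {t x y : ℝ} (ht : 0 < t)
    (hbdd : BddAbove (range fun x => v x t)) (hxy : x ≤ y) :
    u y t - u x t ≤ (⨆ x, v x t) * (y - x) :=
  image_sub_le_mul_sub_of_deriv_le (fun x => (h.hasDerivAt_space x t ht).differentiableAt)
    (fun x => (h.hasDerivAt_space x t ht).deriv.trans_le (le_ciSup hbdd x)) hxy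

theorem exists_sub_lt_of_tail {s T ε : ℝ} (hs : 0 < s) (hε : 0 < ε) :
    ∃ R, ∀ t ∈ Icc s T, ∀ x y, y ≤ -R ∨ R ≤ x → u y t - u x t < ε := by
  have hpos : ∀ t ∈ Icc s T, 0 < t := fun t ht => hs.trans_le ht.1
  have hcont : ∀ x, ContinuousOn (fun t => u x t) (Icc s T) := fun x t ht =>
    (h.hasDerivAt_time x t (hpos t ht)).continuousAt.continuousWithinAt
  have hdini : TendstoUniformlyOn (fun R t => u R t - u (-R) t) (fun _ => 1) atTop (Icc s T) := by
    refine Monotone.tendstoUniformlyOn_of_forall_tendsto isCompact_Icc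
      (fun R => (hcont R).sub (hcont (-R))) (fun t ht R R' hR => ?_) continuousOn_const
      fun t ht => ?_
    · exact sub_le_sub (h.monotone (hpos t ht) hR) (h.monotone (hpos t ht) (neg_le_neg hR))
    · obtain ⟨c, hbot, htop⟩ := h.exists_tendsto t (hpos t ht)
      simpa using htop.sub (hbot.comp tendsto_neg_atTop_atBot)
  obtain ⟨R, hR⟩ := (Metric.tendstoUniformlyOn_iff.1 hdini ε hε).exists
  refine ⟨R, fun t ht x y hxy => ?_⟩
  have hR := (abs_lt.1 (hR t ht)).2
  have hmono := h.monotone (hpos t ht)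
  rcases hxy with hy | hx
  · linarith [hmono hy, h.sub_le_one (hpos t ht) x R]
  · linarith [hmono hx, h.sub_le_one (hpos t ht) (-R) y]

theorem exists_sub_lt_of_near {t ε : ℝ} (ht : 0 < t) (hε : 0 < ε) :
    ∃ δ > 0, ∀ x y, x ≤ y → y - x < δ → u y t - u x t < ε := by
  obtain ⟨R, hR⟩ := h.exists_sub_lt_of_tail (T := t) ht hε
  have hcont : ContinuousOn (fun x => u x t) (Icc (-R - 1) (R + 1)) := fun x _ =>
    (h.hasDerivAt_space x t ht).continuousAt.continuousWithinAt
  obtain ⟨δ, hδ, hunif⟩ := Metric.uniformContinuousOn_iff.1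
    (isCompact_Icc.uniformContinuousOn_of_continuous hcont) ε hε
  refine ⟨min δ 1, by positivity, fun x y hxy hδxy => ?_⟩
  obtain ⟨hδ', h1⟩ := lt_min_iff.1 hδxy
  have htail := hR t ⟨le_rfl, le_rfl⟩ x y
  rcases le_or_gt y (-R) with hy | hy
  · exact htail (.inl hy)
  rcases le_or_gt R x with hx | hx
  · exact htail (.inr hx)
  · have := hunif y ⟨by linarith, by linarith⟩ x ⟨by linarith, by linarith⟩
      (by rwa [Real.dist_eq, abs_of_nonneg (sub_nonneg.2 hxy)])
    exact (le_abs_self _).trans_lt this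

end Basic

end IsIntensity

/-! ### Comparison with barriers -/

/-- At `(z, t)` the barrier `β` satisfies `β_t > κ ∂_z Φ(β_z)`. The factor is `κ = 1` for barriers
bounding the intensity, and `κ = 2` for barriers in `z = y - x` bounding the increments
`u(y,t) - u(x,t)`, since both endpoints then contribute to the diffusion. -/
def IsStrictSupersolutionAt (Φ : ℝ → ℝ) (κ : ℝ) (β : ℝ → ℝ → ℝ) (z t : ℝ) : Prop :=
  ∃ (βz : ℝ → ℝ) (βzz βt : ℝ), (∀ᶠ y in 𝓝 z, HasDerivAt (fun y' => β y' t) (βz y) y) ∧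
    HasDerivAt βz βzz z ∧ HasDerivAt (fun τ => β z τ) βt t ∧ κ * (deriv Φ (βz z) * βzz) < βt

namespace IsIntensity

variable {Φ : ℝ → ℝ} {u v : ℝ → ℝ → ℝ}

section Comparison

variable (h : IsIntensity Φ u v)
include h

theorem flux_le_of_isLocalMax {b b' : ℝ → ℝ} {c x t : ℝ} (ht : 0 < t)
    (hmax : IsLocalMax (fun y => u y t - b y) x) (hb : ∀ᶠ y in 𝓝 x, HasDerivAt b (b' y) y)
    (hb' : HasDerivAt b' c x) : flux Φ v x t ≤ deriv Φ (b' x) * c := by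
  have hderiv : ∀ᶠ y in 𝓝 x, HasDerivAt (fun y => u y t - b y) (v y t - b' y) y :=
    hb.mono fun y hy => (h.hasDerivAt_space y t ht).sub hy
  have hgrad : v x t = b' x := sub_eq_zero.1 (hmax.hasDerivAt_eq_zero hderiv.self_of_nhds)
  have hsecond := second_deriv_nonpos_of_isLocalMax hmax hderiv
    ((h.hasDerivAt_gradient x ht).sub hb')
  rw [h.flux_eq x ht, ← hgrad]
  exact mul_le_mul_of_nonneg_left (sub_nonpos.1 hsecond)
    (h.deriv_nonlinearity_nonneg _ (h.gradient_pos x t ht))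

theorem le_flux_of_isLocalMin {b b' : ℝ → ℝ} {c x t : ℝ} (ht : 0 < t)
    (hmin : IsLocalMin (fun y => u y t - b y) x) (hb : ∀ᶠ y in 𝓝 x, HasDerivAt b (b' y) y)
    (hb' : HasDerivAt b' c x) : deriv Φ (b' x) * c ≤ flux Φ v x t := by
  have hderiv : ∀ᶠ y in 𝓝 x, HasDerivAt (fun y => -(u y t - b y)) (-(v y t - b' y)) y :=
    hb.mono fun y hy => ((h.hasDerivAt_space y t ht).sub hy).neg
  have hgrad : v x t = b' x :=
    sub_eq_zero.1 (neg_eq_zero.1 (hmin.neg.hasDerivAt_eq_zero hderiv.self_of_nhds))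
  have hsecond := second_deriv_nonpos_of_isLocalMax hmin.neg hderiv
    ((h.hasDerivAt_gradient x ht).sub hb').neg
  rw [h.flux_eq x ht, ← hgrad]
  exact mul_le_mul_of_nonneg_left (sub_nonneg.1 (neg_nonpos.1 hsecond))
    (h.deriv_nonlinearity_nonneg _ (h.gradient_pos x t ht))

theorem not_isStrictSupersolutionAt_of_contact {β : ℝ → ℝ → ℝ} {x t₁ t : ℝ} (ht₁ : 0 < t₁)
    (ht : t₁ < t) (hspace : IsLocalMax (fun y => u y t - β y t) x)
    (htime : IsMaxOn (fun τ => u x τ - β x τ) (Icc t₁ t) t) :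
    ¬ IsStrictSupersolutionAt Φ 1 β x t := by
  rintro ⟨βz, βzz, βt, hβz, hβzz, hβt, hlt⟩
  have ht₀ := ht₁.trans ht
  have hflux := h.flux_le_of_isLocalMax ht₀ hspace hβz hβzz
  have hrate := deriv_nonneg_of_isMaxOn_Icc ht htime ((h.hasDerivAt_time x t ht₀).sub hβt)
  linarith

theorem not_isStrictSupersolutionAt_of_two_point_contact {β : ℝ → ℝ → ℝ} {x y t₁ t : ℝ}
    (ht₁ : 0 < t₁) (ht : t₁ < t)
    (hleft : IsLocalMax (fun x' => u y t - u x' t - β (y - x') t) x)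
    (hright : IsLocalMax (fun y' => u y' t - u x t - β (y' - x) t) y)
    (htime : IsMaxOn (fun τ => u y τ - u x τ - β (y - x) τ) (Icc t₁ t) t) :
    ¬ IsStrictSupersolutionAt Φ 2 β (y - x) t := by
  rintro ⟨βz, βzz, βt, hβz, hβzz, hβt, hlt⟩
  have ht₀ := ht₁.trans ht
  have hrightFlux : flux Φ v y t ≤ deriv Φ (βz (y - x)) * βzz := by
    refine h.flux_le_of_isLocalMax (b := fun y' => β (y' - x) t) (b' := fun y' => βz (y' - x)) ht₀
      (hright.mono fun y' hy' => by linarith) ?_ (hβzz.comp_sub_const y x)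
    have hcont : Tendsto (fun y' => y' - x) (𝓝 y) (𝓝 (y - x)) :=
      (continuous_sub_right x).continuousAt
    exact (hcont.eventually hβz).mono fun y' hy' => hy'.comp_sub_const y' x
  have hleftFlux : deriv Φ (βz (y - x)) * -βzz ≤ flux Φ v x t := by
    refine h.le_flux_of_isLocalMin (b := fun x' => -β (y - x') t) (b' := fun x' => βz (y - x')) ht₀
      (hleft.mono fun x' hx' => by linarith) ?_ (hβzz.comp_const_sub y x)
    have hcont : Tendsto (fun x' => y - x') (𝓝 x) (𝓝 (y - x)) :=
      (continuous_sub_left y).continuousAt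
    exact (hcont.eventually hβz).mono fun x' hx' =>
      (hx'.comp_const_sub y x').neg.congr_deriv (neg_neg _)
  have hrate := deriv_nonneg_of_isMaxOn_Icc ht htime
    (((h.hasDerivAt_time y t ht₀).sub (h.hasDerivAt_time x t ht₀)).sub hβt)
  linarith

theorem eventually_sub_lt_of_lt_length {t₁ T δ : ℝ} (L : ℝ) (ht₁ : 0 < t₁) (hδ : 0 < δ) :
    ∀ᶠ p in cocompact (ℝ × ℝ × ℝ) ⊓ 𝓟 {p | p.1 ≤ p.2.1 ∧ p.2.2 ∈ Icc t₁ T},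
      p.2.1 - p.1 < L → u p.2.1 p.2.2 - u p.1 p.2.2 < δ := by
  obtain ⟨R, hR⟩ := h.exists_sub_lt_of_tail (T := T) ht₁ hδ
  let K : Set (ℝ × ℝ × ℝ) := Icc (-R - L) (R + L) ×ˢ Icc (-R - L) (R + L) ×ˢ Icc t₁ T
  have hK : IsCompact K := isCompact_Icc.prod (isCompact_Icc.prod isCompact_Icc)
  filter_upwards [mem_inf_of_left hK.compl_mem_cocompact, mem_inf_of_right (mem_principal_self _)]
  rintro ⟨x, y, t⟩ hpK ⟨hxy, ht⟩ hL
  refine hR t ht x y ?_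
  by_contra! hmid
  simp only at hxy hL
  exact hpK ⟨⟨by linarith, by linarith⟩, ⟨by linarith, by linarith⟩, ht⟩

theorem sub_le_of_forall_isStrictSupersolutionAt {β : ℝ → ℝ → ℝ} {t₁ T L : ℝ} (ht₁ : 0 < t₁)
    (hcont : ContinuousOn (Function.uncurry β) (Ici 0 ×ˢ Icc t₁ T))
    (hnonneg : ∀ z, 0 ≤ z → ∀ t ∈ Icc t₁ T, 0 ≤ β z t)
    (hlarge : ∀ z, L ≤ z → ∀ t ∈ Icc t₁ T, 1 ≤ β z t)
    (hinit : ∀ x y, x ≤ y → u y t₁ - u x t₁ ≤ β (y - x) t₁)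
    (hsuper : ∀ z, 0 < z → ∀ t ∈ Ioc t₁ T, β z t < 1 → IsStrictSupersolutionAt Φ 2 β z t)
    {x y t : ℝ} (hxy : x ≤ y) (ht : t ∈ Icc t₁ T) : u y t - u x t ≤ β (y - x) t := by
  let f : ℝ × ℝ × ℝ → ℝ := fun p => u p.2.1 p.2.2 - u p.1 p.2.2 - β (p.2.1 - p.1) p.2.2
  let s : Set (ℝ × ℝ × ℝ) := {p | p.1 ≤ p.2.1 ∧ p.2.2 ∈ Icc t₁ T}
  suffices ∀ p ∈ s, f p ≤ 0 from sub_nonpos.1 (this (x, y, t) ⟨hxy, ht⟩)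
  have hs : IsClosed s := (isClosed_le continuous_fst (by fun_prop)).inter
    (isClosed_Icc.preimage (by fun_prop : Continuous fun p : ℝ × ℝ × ℝ => p.2.2))
  have hpos : ∀ p ∈ s, 0 < p.2.2 := fun p hp => ht₁.trans_le hp.2.1
  have hf : ContinuousOn f s :=
    ((h.continuousOn.comp (f := fun p : ℝ × ℝ × ℝ => (p.2.1, p.2.2)) (by fun_prop)
      fun p hp => ⟨mem_univ _, hpos p hp⟩).sub
    (h.continuousOn.comp (f := fun p : ℝ × ℝ × ℝ => (p.1, p.2.2)) (by fun_prop)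
      fun p hp => ⟨mem_univ _, hpos p hp⟩)).sub
    (hcont.comp (f := fun p : ℝ × ℝ × ℝ => (p.2.1 - p.1, p.2.2)) (by fun_prop)
      fun p hp => ⟨sub_nonneg.2 hp.1, hp.2⟩)
  refine nonpos_of_forall_not_isMaxOn hs hf (fun δ hδ => ?_) ?_
  · filter_upwards [h.eventually_sub_lt_of_lt_length L ht₁ hδ,
      mem_inf_of_right (mem_principal_self s)]
    rintro ⟨x, y, t⟩ hshort ⟨hxy, ht⟩
    refine sub_lt_iff_lt_add.2 ?_
    rcases lt_or_ge (y - x) L with hL | hL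
    · linarith [hshort hL, hnonneg (y - x) (sub_nonneg.2 hxy) t ht]
    · linarith [hlarge _ hL t ht, h.sub_le_one (ht₁.trans_le ht.1) x y]
  · rintro ⟨x, y, t⟩ ⟨hxy, ht⟩ hfp hmax
    simp only at hxy ht
    replace hfp : β (y - x) t < u y t - u x t := sub_pos.1 hfp
    have hβ := hnonneg (y - x) (sub_nonneg.2 hxy) t ht
    have hlt : x < y := hxy.lt_of_ne fun hxy => by subst hxy; linarith
    have htt : t₁ < t := ht.1.lt_of_ne fun htt => by subst htt; linarith [hinit x y hxy]
    refine h.not_isStrictSupersolutionAt_of_two_point_contact ht₁ htt ?_ ?_ (fun τ hτ => ?_)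
      (hsuper (y - x) (sub_pos.2 hlt) t ⟨htt, ht.2⟩
        (hfp.trans_le (h.sub_le_one (ht₁.trans_le ht.1) x y)))
    · filter_upwards [Iio_mem_nhds hlt] with x' hx' using hmax (a := (x', y, t)) ⟨hx'.le, ht⟩
    · filter_upwards [Ioi_mem_nhds hlt] with y' hy' using hmax (a := (x, y', t)) ⟨hy'.le, ht⟩
    · exact hmax (a := (x, y, τ)) ⟨hxy, hτ.1, hτ.2.trans ht.2⟩

theorem sub_le_one_of_tendsto_atBot {c t : ℝ} (ht : 0 < t)
    (hc : Tendsto (fun x => u x t) atBot (𝓝 c)) (x : ℝ) : u x t - c ≤ 1 :=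
  le_of_tendsto (tendsto_const_nhds.sub hc) (.of_forall fun y => h.sub_le_one ht y x)

theorem exists_sub_lt_of_tendsto_atBot {c t₁ T δ : ℝ} (ht₁ : 0 < t₁) (hδ : 0 < δ)
    (hc : ∀ t ∈ Icc t₁ T, Tendsto (fun x => u x t) atBot (𝓝 c)) :
    ∃ R, ∀ t ∈ Icc t₁ T, ∀ x ≤ -R, u x t - c < δ := by
  obtain ⟨R, hR⟩ := h.exists_sub_lt_of_tail (T := T) ht₁ (half_pos hδ)
  refine ⟨R, fun t ht x hx => lt_of_le_of_lt ?_ (half_lt_self hδ)⟩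
  exact le_of_tendsto (tendsto_const_nhds.sub (hc t ht))
    (.of_forall fun y => (hR t ht y x (.inl hx)).le)

theorem sub_le_of_forall_isStrictSupersolutionAt_atBot {β : ℝ → ℝ → ℝ} {c t₁ T X : ℝ}
    (ht₁ : 0 < t₁) (hc : ∀ t ∈ Icc t₁ T, Tendsto (fun x => u x t) atBot (𝓝 c))
    (hcont : ContinuousOn (Function.uncurry β) (Iic X ×ˢ Icc t₁ T))
    (hnonneg : ∀ x, x ≤ X → ∀ t ∈ Icc t₁ T, 0 ≤ β x t)
    (hbdry : ∀ t ∈ Icc t₁ T, 1 ≤ β X t)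
    (hinit : ∀ x, x ≤ X → u x t₁ - c ≤ β x t₁)
    (hsuper : ∀ x, x < X → ∀ t ∈ Ioc t₁ T, β x t < 1 → IsStrictSupersolutionAt Φ 1 β x t)
    {x t : ℝ} (hx : x ≤ X) (ht : t ∈ Icc t₁ T) : u x t - c ≤ β x t := by
  let f : ℝ × ℝ → ℝ := fun p => u p.1 p.2 - c - β p.1 p.2
  let s : Set (ℝ × ℝ) := Iic X ×ˢ Icc t₁ T
  suffices ∀ p ∈ s, f p ≤ 0 from sub_nonpos.1 (this (x, t) ⟨hx, ht⟩)
  have hf : ContinuousOn f s :=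
    ((h.continuousOn.mono fun p hp => ⟨mem_univ _, ht₁.trans_le hp.2.1⟩).sub
      continuousOn_const).sub hcont
  refine nonpos_of_forall_not_isMaxOn (isClosed_Iic.prod isClosed_Icc) hf (fun δ hδ => ?_) ?_
  · obtain ⟨R, hR⟩ := h.exists_sub_lt_of_tendsto_atBot ht₁ hδ hc
    filter_upwards [mem_inf_of_left ((isCompact_Icc (a := -R) (b := X)).prod
      (isCompact_Icc (a := t₁) (b := T))).compl_mem_cocompact, mem_inf_of_right
      (mem_principal_self s)]
    rintro ⟨x, t⟩ hpK ⟨hx, ht⟩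
    have hxR : x ≤ -R := by
      by_contra! hxR
      exact hpK ⟨⟨hxR.le, hx⟩, ht⟩
    exact sub_lt_iff_lt_add.2 (by linarith [hR t ht x hxR, hnonneg x hx t ht])
  · rintro ⟨x, t⟩ ⟨hx, ht⟩ hfp hmax
    replace hfp : β x t < u x t - c := sub_pos.1 hfp
    have hβ : β x t < 1 :=
      hfp.trans_le (h.sub_le_one_of_tendsto_atBot (ht₁.trans_le ht.1) (hc t ht) x)
    have hlt : x < X := hx.lt_of_ne fun hxX => hβ.not_ge (hxX ▸ hbdry t ht)
    have htt : t₁ < t := ht.1.lt_of_ne fun (htt : t₁ = t) => hfp.not_ge (htt ▸ hinit x hx)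
    refine h.not_isStrictSupersolutionAt_of_contact ht₁ htt ?_ (fun τ hτ => ?_)
      (hsuper x hlt t ⟨htt, ht.2⟩ hβ)
    · filter_upwards [Iio_mem_nhds hlt] with y hy
      have : f (y, t) ≤ f (x, t) := hmax ⟨Iio_subset_Iic_self hy, ht⟩
      simp only [f] at this
      linarith
    · have : f (x, τ) ≤ f (x, t) := hmax ⟨hx, hτ.1, hτ.2.trans ht.2⟩
      simp only [f] at this
      exact show u x τ - β x τ ≤ u x t - β x t by linarith

end Comparison

end IsIntensity

/-! ### Absence of flux at infinity -/

namespace IsIntensity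

variable {Φ : ℝ → ℝ} {u v : ℝ → ℝ → ℝ}

section NoFlux

variable (h : IsIntensity Φ u v)
include h

theorem continuousOn_flux_section (x : ℝ) : ContinuousOn (flux Φ v x) (Ioi 0) :=
  h.continuousOn_flux.comp (f := fun t => (x, t)) (by fun_prop) fun _ ht => ⟨mem_univ _, ht⟩

theorem integral_flux {s t : ℝ} (hs : 0 < s) (ht : 0 < t) (x : ℝ) :
    ∫ τ in s..t, flux Φ v x τ = u x t - u x s := by
  have hsub : uIcc s t ⊆ Ioi 0 := fun τ hτ => (lt_min hs ht).trans_le hτ.1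
  exact intervalIntegral.integral_eq_sub_of_hasDerivAt
    (fun τ hτ => h.hasDerivAt_time x τ (hsub hτ))
    ((h.continuousOn_flux_section x).mono hsub).intervalIntegrable

theorem hasDerivAt_integral_nonlinearity {s t : ℝ} (hs : 0 < s) (ht : 0 < t) (x : ℝ) :
    HasDerivAt (fun y => ∫ τ in s..t, Φ (v y τ)) (u x t - u x s) x := by
  have hsub : uIcc s t ⊆ Ioi 0 := fun τ hτ => (lt_min hs ht).trans_le hτ.1
  rw [← h.integral_flux hs ht x]
  refine hasDerivAt_integral_of_continuousOn (F := fun y τ => Φ (v y τ)) (F' := flux Φ v) univ_mem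
    (fun y _ => ?_) (h.continuousOn_flux.mono (prod_mono_right hsub)) fun y _ τ hτ => ?_
  · exact h.contDiffOn_nonlinearity.continuousOn.comp
      (h.contDiffOn_gradient.continuousOn.comp (f := fun τ => (y, τ)) (by fun_prop)
        fun τ hτ => ⟨mem_univ _, hsub hτ⟩) fun τ hτ => h.gradient_pos y τ (hsub hτ)
  · exact ((h.hasDerivAt_nonlinearity (h.gradient_pos y τ (hsub hτ))).comp y
      (h.hasDerivAt_gradient y (hsub hτ))).differentiableAt.hasDerivAt

theorem monotoneOn_nonlinearity : MonotoneOn Φ (Ioi 0) :=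
  monotoneOn_of_deriv_nonneg (convex_Ioi 0) h.contDiffOn_nonlinearity.continuousOn
    ((h.contDiffOn_nonlinearity.differentiableOn one_ne_zero).mono interior_subset)
    fun s hs => h.deriv_nonlinearity_nonneg s (interior_subset hs)

theorem bddAbove_integral_nonlinearity {s t M : ℝ} (hs : 0 < s) (hst : s ≤ t)
    (hM : ∀ x, ∀ τ ∈ Icc s t, v x τ ≤ M) :
    BddAbove (range fun y => ∫ τ in s..t, Φ (v y τ)) := by
  refine ⟨∫ _ in s..t, Φ M, ?_⟩
  rintro _ ⟨y, rfl⟩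
  have hpos : ∀ τ ∈ Icc s t, 0 < v y τ := fun τ hτ => h.gradient_pos y τ (hs.trans_le hτ.1)
  have hcont : ContinuousOn (fun τ => Φ (v y τ)) (Icc s t) :=
    h.contDiffOn_nonlinearity.continuousOn.comp
      (h.contDiffOn_gradient.continuousOn.comp (f := fun τ => (y, τ)) (by fun_prop)
        fun τ hτ => ⟨mem_univ _, hs.trans_le hτ.1⟩) hpos
  exact intervalIntegral.integral_mono_on hst
    (hcont.mono (uIcc_of_le hst).subset).intervalIntegrable intervalIntegrable_const
    fun τ hτ => h.monotoneOn_nonlinearity (hpos τ hτ) ((hpos τ hτ).trans_le (hM y τ hτ))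
      (hM y τ hτ)

theorem limit_eq_of_le {s t M a b : ℝ} (hs : 0 < s) (hst : s ≤ t)
    (hM : ∀ x, ∀ τ ∈ Icc s t, v x τ ≤ M)
    (ha : Tendsto (fun x => u x s) atBot (𝓝 a)) (hb : Tendsto (fun x => u x t) atBot (𝓝 b)) :
    a = b := by
  have ht := hs.trans_le hst
  obtain ⟨a', ha', hatop⟩ := h.exists_tendsto s hs
  obtain ⟨b', hb', hbtop⟩ := h.exists_tendsto t ht
  obtain rfl := tendsto_nhds_unique ha ha'
  obtain rfl := tendsto_nhds_unique hb hb'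
  have := eq_zero_of_tendsto_deriv_of_bddAbove (h.hasDerivAt_integral_nonlinearity hs ht)
    (h.bddAbove_integral_nonlinearity hs hst hM) (hb.sub ha)
    (by simpa using hbtop.sub hatop)
  exact (sub_eq_zero.1 this).symm

theorem exists_tendsto_atBot
    (hbdd : ∀ s, 0 < s → ∃ M, ∀ x t, s ≤ t → v x t ≤ M) :
    ∃ c, ∀ t, 0 < t → Tendsto (fun x => u x t) atBot (𝓝 c) := by
  obtain ⟨c, hc, -⟩ := h.exists_tendsto 1 one_pos
  refine ⟨c, fun t ht => ?_⟩
  obtain ⟨b, hb, -⟩ := h.exists_tendsto t ht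
  obtain ⟨M, hM⟩ := hbdd (min t 1) (lt_min ht one_pos)
  suffices b = c from this ▸ hb
  rcases le_total t 1 with ht1 | ht1
  · exact h.limit_eq_of_le ht ht1
      (fun x τ hτ => hM x τ ((min_le_left _ _).trans hτ.1)) hb hc
  · exact (h.limit_eq_of_le one_pos ht1
      (fun x τ hτ => hM x τ ((min_le_right _ _).trans hτ.1)) hc hb).symm

end NoFlux

end IsIntensity

/-- The intensity with gradient `v`, normalised by `u(0,1) = 0`. Its value on the axis `x = 0` is
recovered from the flux, since `u_t = ∂ₓ Φ(v)`. -/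
noncomputable def potential (Φ : ℝ → ℝ) (v : ℝ → ℝ → ℝ) (x t : ℝ) : ℝ :=
  (∫ ξ in (0 : ℝ)..x, v ξ t) + ∫ τ in (1 : ℝ)..t, flux Φ v 0 τ

section Potential

variable {Φ : ℝ → ℝ} {v : ℝ → ℝ → ℝ}

theorem contDiffOn_comp_gradient (hΦ : ContDiffOn ℝ 2 Φ (Ioi 0))
    (hv : ContDiffOn ℝ 2 (Function.uncurry v) spaceTime)
    (hpos : ∀ x t, 0 < t → 0 < v x t) :
    ContDiffOn ℝ (1 + 1) (Function.uncurry fun x t => Φ (v x t)) spaceTime := by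
  rw [one_add_one_eq_two]
  exact hΦ.comp hv fun p hp => hpos _ _ hp.2

theorem hasDerivAt_integral_gradient (hv : ContDiffOn ℝ 2 (Function.uncurry v) spaceTime)
    (hflux : ContDiffOn ℝ 1 (Function.uncurry (flux Φ v)) spaceTime)
    (hpde : ∀ x t, 0 < t → deriv (fun s => v x s) t = deriv (fun y => flux Φ v y t) x)
    (x : ℝ) {t : ℝ} (ht : 0 < t) :
    HasDerivAt (fun τ => ∫ ξ in (0 : ℝ)..x, v ξ τ) (flux Φ v x t - flux Φ v 0 t) t := by
  have hvt : ContinuousOn (fun p : ℝ × ℝ => deriv (fun τ => v p.1 τ) p.2) spaceTime :=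
    (contDiffOn_deriv_snd (n := 1) isOpen_spaceTime (by rwa [one_add_one_eq_two])).continuousOn
  have hvt_section : Continuous fun ξ => deriv (fun τ => v ξ τ) t :=
    hvt.comp_continuous (f := fun ξ => (ξ, t)) (by fun_prop) fun ξ => ⟨mem_univ _, ht⟩
  have hintegral : ∫ ξ in (0 : ℝ)..x, deriv (fun τ => v ξ τ) t = flux Φ v x t - flux Φ v 0 t := by
    refine intervalIntegral.integral_eq_sub_of_hasDerivAt (f := fun y => flux Φ v y t)
      (fun ξ _ => ?_) (hvt_section.intervalIntegrable _ _)
    rw [hpde ξ t ht]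
    exact ((contDiffAt_section_fst isOpen_spaceTime hflux ⟨mem_univ _, ht⟩).differentiableAt
      one_ne_zero).hasDerivAt
  rw [← hintegral]
  refine hasDerivAt_integral_of_continuousOn (F := fun τ ξ => v ξ τ)
    (F' := fun τ ξ => deriv (fun τ => v ξ τ) τ) (Ioi_mem_nhds ht) (fun τ hτ => ?_) ?_
    fun τ hτ ξ _ => ?_
  · exact hv.continuousOn.comp (f := fun ξ => (ξ, τ)) (by fun_prop) fun ξ _ => ⟨mem_univ _, hτ⟩
  · exact hvt.comp (f := fun p : ℝ × ℝ => (p.2, p.1)) (by fun_prop)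
      fun p hp => ⟨mem_univ _, hp.1⟩
  · exact ((contDiffAt_section_snd isOpen_spaceTime hv ⟨mem_univ _, hτ⟩).differentiableAt
      two_ne_zero).hasDerivAt

theorem isIntensity_potential (hΦ : ContDiffOn ℝ 2 Φ (Ioi 0))
    (hΦ' : ∀ s, 0 < s → 0 ≤ deriv Φ s)
    (hv : ContDiffOn ℝ 2 (Function.uncurry v) spaceTime)
    (hpos : ∀ x t, 0 < t → 0 < v x t)
    (hpde : ∀ x t, 0 < t → deriv (fun s => v x s) t = deriv (fun y => flux Φ v y t) x)
    (hmass : ∀ t, 0 < t → ∫ x, v x t = 1) : IsIntensity Φ (potential Φ v) v where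
  contDiffOn_nonlinearity := hΦ.of_le one_le_two
  deriv_nonlinearity_nonneg := hΦ'
  contDiffOn_gradient := hv.of_le one_le_two
  gradient_pos := hpos
  hasDerivAt_space x t ht := by
    have hcont : Continuous fun ξ => v ξ t :=
      hv.continuousOn.comp_continuous (f := fun ξ => (ξ, t)) (by fun_prop)
        fun ξ => ⟨mem_univ _, ht⟩
    exact (hcont.integral_hasStrictDerivAt 0 x).hasDerivAt.add_const _
  hasDerivAt_time x t ht := by
    have hflux : ContDiffOn ℝ 1 (Function.uncurry (flux Φ v)) spaceTime :=
      contDiffOn_deriv_fst isOpen_spaceTime (contDiffOn_comp_gradient hΦ hv hpos)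
    have hcont : ContinuousOn (flux Φ v 0) (Ioi 0) :=
      hflux.continuousOn.comp (f := fun τ => ((0 : ℝ), τ)) (by fun_prop)
        fun τ hτ => ⟨mem_univ _, hτ⟩
    have hsub : uIcc 1 t ⊆ Ioi 0 := fun τ hτ => (lt_min one_pos ht).trans_le hτ.1
    have haxis : HasDerivAt (fun τ => ∫ τ' in (1 : ℝ)..τ, flux Φ v 0 τ') (flux Φ v 0 t) t :=
      intervalIntegral.integral_hasDerivAt_right (hcont.mono hsub).intervalIntegrable
        (hcont.stronglyMeasurableAtFilter isOpen_Ioi t ht) (hcont.continuousAt (Ioi_mem_nhds ht))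
    exact ((hasDerivAt_integral_gradient hv hflux hpde x ht).add haxis).congr_deriv (by ring)
  exists_tendsto t ht := by
    have hint : Integrable fun x => v x t := integrable_of_integral_eq_one (hmass t ht)
    have htotal := intervalIntegral.integral_Iic_add_Ioi (b := 0) hint.integrableOn
      hint.integrableOn
    refine ⟨-(∫ ξ in Iic 0, v ξ t) + ∫ τ in (1 : ℝ)..t, flux Φ v 0 τ, ?_, ?_⟩
    · refine Tendsto.add_const _ ?_
      simp_rw [intervalIntegral.integral_symm _ (0 : ℝ)]
      exact (intervalIntegral_tendsto_integral_Iic 0 hint.integrableOn tendsto_id).neg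
    · have htop := intervalIntegral_tendsto_integral_Ioi 0 hint.integrableOn tendsto_id
      rw [add_right_comm, show -(∫ ξ in Iic 0, v ξ t) + 1 = ∫ ξ in Ioi 0, v ξ t by
        linarith [hmass t ht]]
      exact htop.add_const _

end Potential

/-! ### The upper bound -/

section ExponentialBarrier

variable {Φ : ℝ → ℝ} {m : ℝ}

theorem exp_neg_le_half {w : ℝ} (hw : 1 ≤ w) : Real.exp (-w) ≤ 1 / 2 := by
  rw [Real.exp_neg, ← one_div]
  exact one_div_le_one_div_of_le two_pos (by linarith [Real.add_one_le_exp w])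

theorem rpow_add_two_eq {a : ℝ} (ha : 0 < a) : a ^ (m + 2) = a ^ (m - 1) * a ^ 3 := by
  rw [← Real.rpow_natCast, ← Real.rpow_add ha]
  congr 1
  push_cast
  ring

theorem min_one_two_rpow_le {q s : ℝ} (hs₁ : 1 ≤ s) (hs₂ : s ≤ 2) : min 1 (2 ^ q) ≤ s ^ q := by
  rcases le_total 0 q with hq | hq
  · exact (min_le_left _ _).trans (Real.one_le_rpow hs₁ hq)
  · exact (min_le_right _ _).trans (Real.rpow_le_rpow_of_nonpos (by linarith) hs₂ hq)

theorem isStrictSupersolutionAt_exp (hΦ : ∀ s, 0 < s → deriv Φ s = s ^ (m - 1)) {A : ℝ → ℝ}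
    {κ ε z t : ℝ} (hκ : 0 < κ) (hκm : κ ≤ min 1 (2 ^ (m - 1))) (hε : 0 ≤ ε) (hz : 0 < z)
    (hA : 0 < A t) (hode : HasDerivAt A (-(κ * A t ^ (m + 2))) t)
    (hlt : ε + 2 * (1 - Real.exp (-(A t * z))) < 1) :
    IsStrictSupersolutionAt Φ 2 (fun z t => ε + 2 * (1 - Real.exp (-(A t * z)))) z t := by
  set e := Real.exp (-(A t * z)) with he
  have he₀ : 1 / 2 < e := by linarith
  have he₁ : e ≤ 1 := Real.exp_le_one_iff.2 (by nlinarith)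
  have hAz : A t * z < 1 := by
    by_contra! hge
    exact he₀.not_ge (exp_neg_le_half hge)
  have hexp : ∀ y, HasDerivAt (fun y => Real.exp (-(A t * y))) (-(A t * Real.exp (-(A t * y)))) y :=
    fun y => ((hasDerivAt_id y).const_mul (A t)).neg.exp.congr_deriv
      (by simp only [Pi.neg_apply, id]; ring)
  refine ⟨fun y => 2 * (A t * Real.exp (-(A t * y))), 2 * (A t * -(A t * e)),
    2 * (κ * A t ^ (m + 2) * z * -e), .of_forall fun y => ?_,
    ((hexp z).const_mul (A t)).const_mul 2, ?_, ?_⟩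
  · exact ((((hexp y).const_sub 1).const_mul 2).const_add ε).congr_deriv (by ring)
  · exact (((hode.mul_const z).neg.exp.const_sub 1).const_mul 2 |>.const_add ε).congr_deriv
      (by simp only [Pi.neg_apply, ← he]; ring)
  · have hmul : (2 * (A t * e)) ^ (m - 1) = A t ^ (m - 1) * (2 * e) ^ (m - 1) := by
      rw [← Real.mul_rpow hA.le (by positivity)]; ring_nf
    have hκe : κ * (A t * z) < 2 * (2 * e) ^ (m - 1) := by
      have := hκm.trans (min_one_two_rpow_le (q := m - 1) (by linarith) (by linarith : 2 * e ≤ 2))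
      nlinarith
    simp only [← he]
    rw [hΦ _ (by positivity), hmul, rpow_add_two_eq hA]
    have hfactor : 0 < 2 * A t ^ (m - 1) * A t ^ 2 * e := by positivity
    nlinarith [mul_lt_mul_of_pos_left hκe hfactor]

theorem hasDerivAt_mul_rpow_decay (hm : -1 < m) {a τ : ℝ} (ha : 0 < a) (hτ : 0 < τ) :
    HasDerivAt (fun τ => a * τ ^ (-(1 / (m + 1))))
      (-(1 / (m + 1) / a ^ (m + 1) * (a * τ ^ (-(1 / (m + 1)))) ^ (m + 2))) τ := by
  have hm₁ : m + 1 ≠ 0 := by linarith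
  refine ((Real.hasDerivAt_rpow_const (Or.inl hτ.ne')).const_mul a).congr_deriv ?_
  have hexp : -(1 / (m + 1)) * (m + 2) = -(1 / (m + 1)) - 1 := by field_simp; ring
  have ha₂ : a ^ (m + 2) = a ^ (m + 1) * a := by
    rw [← Real.rpow_add_one ha.ne', add_assoc, one_add_one_eq_two]
  have ha₁ : a ^ (m + 1) ≠ 0 := (Real.rpow_pos_of_pos ha _).ne'
  rw [Real.mul_rpow ha.le (by positivity), ← Real.rpow_mul hτ.le, hexp, ha₂]
  field_simp

end ExponentialBarrier

namespace IsIntensity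

variable {Φ : ℝ → ℝ} {u v : ℝ → ℝ → ℝ} {m : ℝ}

section Upper

variable (h : IsIntensity Φ u v) (hΦ : ∀ s, 0 < s → deriv Φ s = s ^ (m - 1))
include h hΦ

theorem sub_le_exp_of_ode {A : ℝ → ℝ} {κ ε t₁ T x y : ℝ} (hκ : 0 < κ)
    (hκm : κ ≤ min 1 (2 ^ (m - 1))) (hε : 0 ≤ ε) (ht₁ : 0 < t₁) (hT : t₁ ≤ T)
    (hA : ∀ t ∈ Icc t₁ T, 0 < A t)
    (hode : ∀ t ∈ Icc t₁ T, HasDerivAt A (-(κ * A t ^ (m + 2))) t)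
    (hinit : ∀ x y, x ≤ y → A t₁ * (y - x) < 1 → u y t₁ - u x t₁ ≤ ε) (hxy : x ≤ y) :
    u y T - u x T ≤ ε + 2 * (1 - Real.exp (-(A T * (y - x)))) := by
  have hAcont : ContinuousOn A (Icc t₁ T) := fun t ht => (hode t ht).continuousAt.continuousWithinAt
  have hone : ∀ w, 1 ≤ w → 1 ≤ ε + 2 * (1 - Real.exp (-w)) := fun w hw => by
    linarith [exp_neg_le_half hw]
  have hzero : ∀ w, 0 ≤ w → 0 ≤ 2 * (1 - Real.exp (-w)) := fun w hw => by
    linarith [Real.exp_le_one_iff.2 (neg_nonpos.2 hw)]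
  obtain ⟨A₀, hA₀, hAmin⟩ := isCompact_Icc.exists_forall_le' hAcont hA
  refine h.sub_le_of_forall_isStrictSupersolutionAt
    (β := fun z t => ε + 2 * (1 - Real.exp (-(A t * z)))) (L := 1 / A₀) ht₁ ?_ ?_ ?_ ?_ ?_ hxy
    (right_mem_Icc.2 hT)
  · have : ContinuousOn (fun p : ℝ × ℝ => A p.2) (Ici 0 ×ˢ Icc t₁ T) :=
      hAcont.comp continuousOn_snd fun p hp => hp.2
    exact continuousOn_const.add (continuousOn_const.mul (continuousOn_const.sub
      (Real.continuous_exp.comp_continuousOn (this.mul continuousOn_fst).neg)))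
  · exact fun z hz t ht => add_nonneg hε (hzero _ (mul_nonneg (hA t ht).le hz))
  · intro z hz t ht
    refine hone _ ((div_le_iff₀' hA₀).1 hz |>.trans ?_)
    exact mul_le_mul_of_nonneg_right (hAmin t ht) ((by positivity : 0 ≤ 1 / A₀).trans hz)
  · intro x y hxy
    have hA₁ := hA t₁ (left_mem_Icc.2 hT)
    rcases lt_or_ge (A t₁ * (y - x)) 1 with hlt | hge
    · linarith [hinit x y hxy hlt, hzero _ (mul_nonneg hA₁.le (sub_nonneg.2 hxy))]
    · exact (h.sub_le_one ht₁ x y).trans (hone _ hge)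
  · exact fun z hz t ht hlt => isStrictSupersolutionAt_exp hΦ hκ hκm hε hz
      (hA t ⟨ht.1.le, ht.2⟩) (hode t ⟨ht.1.le, ht.2⟩) hlt

theorem sub_le_mul_rpow (hm : -1 < m) {a T : ℝ} (ha : 0 < a)
    (ham : 1 / (m + 1) / a ^ (m + 1) ≤ min 1 (2 ^ (m - 1))) (hT : 0 < T) {x y : ℝ} (hxy : x ≤ y) :
    u y T - u x T ≤ 2 * (a * (T / 2) ^ (-(1 / (m + 1)))) * (y - x) := by
  have hm₁ : 0 < m + 1 := by linarith
  refine le_of_forall_pos_le_add fun ε hε => ?_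
  obtain ⟨δ, hδ, hnear⟩ := h.exists_sub_lt_of_near (half_pos hT) hε
  -- The delay `σ` makes the initial slope of the barrier equal to `1 / δ`.
  set σ := (a * δ) ^ (m + 1) with hσ
  have hσ₀ : 0 < σ := by positivity
  let A : ℝ → ℝ := fun t => a * (t - (T / 2 - σ)) ^ (-(1 / (m + 1)))
  have hA₁ : A (T / 2) = 1 / δ := by
    simp only [A, sub_sub_cancel]
    rw [hσ, Real.rpow_neg (by positivity), one_div, Real.rpow_rpow_inv (by positivity) hm₁.ne']
    field_simp
  have hA₂ : A T ≤ a * (T / 2) ^ (-(1 / (m + 1))) :=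
    mul_le_mul_of_nonneg_left (Real.rpow_le_rpow_of_nonpos (by positivity) (by linarith)
      (neg_nonpos.2 (by positivity))) ha.le
  have hτ : ∀ t ∈ Icc (T / 2) T, 0 < t - (T / 2 - σ) := fun t ht => by linarith [ht.1]
  have hmain := h.sub_le_exp_of_ode hΦ (A := A) (by positivity) ham hε.le (half_pos hT)
    (by linarith) (fun t ht => mul_pos ha (Real.rpow_pos_of_pos (hτ t ht) _))
    (fun t ht => (hasDerivAt_mul_rpow_decay hm ha (hτ t ht)).comp_sub_const t _)
    (fun x y hxy hlt => (hnear x y hxy (by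
      rwa [hA₁, one_div, inv_mul_lt_iff₀ hδ, mul_one] at hlt)).le) hxy
  have hexp := Real.add_one_le_exp (-(A T * (y - x)))
  linarith [mul_le_mul_of_nonneg_right hA₂ (sub_nonneg.2 hxy)]

theorem exists_gradient_le (hm : -1 < m) :
    ∃ K, ∀ x t, 0 < t → v x t ≤ K * t ^ (-(1 / (m + 1))) := by
  have hm₁ : 0 < m + 1 := by linarith
  set κ : ℝ := min 1 (2 ^ (m - 1))
  have hκ₀ : 0 < κ := lt_min one_pos (by positivity)
  set a : ℝ := (1 / (m + 1) / κ) ^ (m + 1)⁻¹ with ha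
  have ham : 1 / (m + 1) / a ^ (m + 1) ≤ κ := by
    rw [ha, Real.rpow_inv_rpow (div_pos (one_div_pos.2 hm₁) hκ₀).le hm₁.ne',
      div_div_cancel₀ (one_div_pos.2 hm₁).ne']
  refine ⟨2 * (a * (2⁻¹) ^ (-(1 / (m + 1)))), fun x t ht => ?_⟩
  refine h.gradient_le_of_forall_sub_le ht fun x y hxy => ?_
  have := h.sub_le_mul_rpow hΦ hm (by positivity) ham ht hxy
  rwa [div_eq_inv_mul, Real.mul_rpow (by positivity) ht.le, ← mul_assoc a, ← mul_assoc 2] at this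

theorem exists_gradient_le_of_le (hm : -1 < m) {s : ℝ} (hs : 0 < s) :
    ∃ M, ∀ x t, s ≤ t → v x t ≤ M := by
  have hm₁ : 0 < m + 1 := by linarith
  obtain ⟨K, hK⟩ := h.exists_gradient_le hΦ hm
  have hK₀ : 0 < K := (h.gradient_pos 0 1 one_pos).trans_le (by simpa using hK 0 1 one_pos)
  refine ⟨K * s ^ (-(1 / (m + 1))), fun x t hst => (hK x t (hs.trans_le hst)).trans ?_⟩
  exact mul_le_mul_of_nonneg_left
    (Real.rpow_le_rpow_of_nonpos hs hst (neg_nonpos.2 (by positivity))) hK₀.le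

end Upper

end IsIntensity

/-! ### The lower bound -/

section PowerBarrier

variable {Φ : ℝ → ℝ} {m : ℝ}

theorem rpow_barrier_diffusion {p Q z : ℝ} (hmp : m + 1 = 2 * p) (hp : 0 < p) (hQ : 0 < Q)
    (hz : 0 < z) :
    (Q * (p * z ^ (-(p + 1)))) ^ (m - 1) * (Q * (p * ((p + 1) * z ^ (-(p + 1 + 1))))) =
      p ^ m * (p + 1) * (Q * z ^ (-p)) ^ (m + 2) / Q ^ 2 := by
  have hpm : p ^ m = p ^ (m - 1) * p := by rw [← Real.rpow_add_one hp.ne', sub_add_cancel]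
  have hzm : z ^ (-p * (m + 2)) = z ^ (-(p + 1) * (m - 1)) * z ^ (-(p + 1 + 1)) := by
    rw [← Real.rpow_add hz]
    congr 1
    linear_combination hmp
  rw [Real.mul_rpow hQ.le (by positivity), Real.mul_rpow hp.le (by positivity),
    Real.mul_rpow hQ.le (by positivity), ← Real.rpow_mul hz.le, ← Real.rpow_mul hz.le,
    hpm, rpow_add_two_eq hQ, hzm]
  field_simp

theorem isStrictSupersolutionAt_rpow (hΦ : ∀ s, 0 < s → deriv Φ s = s ^ (m - 1)) (hm : -1 < m)
    {p B η X x t : ℝ} (hp : p = (m + 1) / 2) (hB : 0 < B) (hB₂ : 2 * (p ^ m * (p + 1)) < B ^ 2)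
    (hη : 0 ≤ η) (hx : x < X) (ht : 0 < t)
    (hlt : η + B * t ^ (1 / 2 : ℝ) * (X - x) ^ (-p) < 1) :
    IsStrictSupersolutionAt Φ 1 (fun x t => η + B * t ^ (1 / 2 : ℝ) * (X - x) ^ (-p)) x t := by
  have hp₀ : 0 < p := by linarith
  have hpow : ∀ q : ℝ, ∀ y < X, HasDerivAt (fun y => (X - y) ^ (-q)) (q * (X - y) ^ (-(q + 1))) y :=
    fun q y hy => ((Real.hasDerivAt_rpow_const (Or.inl (sub_pos.2 hy).ne')).comp_const_sub
      X y).congr_deriv (by rw [neg_add']; ring)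
  set Q := B * t ^ (1 / 2 : ℝ) with hQ
  have hQ₀ : 0 < Q := by positivity
  have hQ₂ : Q ^ 2 = B ^ 2 * t := by
    rw [hQ, mul_pow, ← Real.sqrt_eq_rpow, Real.sq_sqrt ht.le]
  refine ⟨fun y => Q * (p * (X - y) ^ (-(p + 1))),
    Q * (p * ((p + 1) * (X - x) ^ (-(p + 1 + 1)))), Q / (2 * t) * (X - x) ^ (-p), ?_, ?_, ?_, ?_⟩
  · filter_upwards [Iio_mem_nhds hx] with y hy using ((hpow p y hy).const_mul Q).const_add η
  · exact ((hpow (p + 1) x hx).const_mul p).const_mul Q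
  · refine ((((Real.hasDerivAt_rpow_const (p := 1 / 2) (Or.inl ht.ne')).const_mul B).mul_const
      _).const_add η).congr_deriv ?_
    rw [hQ, Real.rpow_sub_one ht.ne']
    field_simp
  · have hz : 0 < X - x := sub_pos.2 hx
    set Y := Q * (X - x) ^ (-p) with hY
    have hY₀ : 0 < Y := by positivity
    have hY₁ : Y ^ (m + 1) < 1 := Real.rpow_lt_one hY₀.le (by linarith) (by linarith)
    have hY₂ : Y ^ (m + 2) = Y ^ (m + 1) * Y := by
      rw [← Real.rpow_add_one hY₀.ne', add_assoc, one_add_one_eq_two]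
    have hrate : Q / (2 * t) * (X - x) ^ (-p) = B ^ 2 / 2 * Y / Q ^ 2 := by
      rw [hQ₂, hY]; field_simp
    rw [one_mul, hΦ _ (by positivity), rpow_barrier_diffusion (by linarith) hp₀ hQ₀ hz, hrate,
      hY₂, ← mul_assoc]
    gcongr
    nlinarith [(by positivity : 0 < p ^ m * (p + 1))]

end PowerBarrier

namespace IsIntensity

variable {Φ : ℝ → ℝ} {u v : ℝ → ℝ → ℝ} {m : ℝ}

section Lower

variable (h : IsIntensity Φ u v) (hΦ : ∀ s, 0 < s → deriv Φ s = s ^ (m - 1)) (hm : -1 < m)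
include h hΦ hm

theorem exists_sub_le_rpow_atBot {c η : ℝ} (hη : 0 < η)
    (hc : ∀ t, 0 < t → Tendsto (fun x => u x t) atBot (𝓝 c)) :
    ∃ B X, 0 < B ∧ ∀ t, 1 ≤ t → ∀ x, x ≤ X - 1 →
      u x t - c ≤ η + B * t ^ (1 / 2 : ℝ) * (X - x) ^ (-((m + 1) / 2)) := by
  set p := (m + 1) / 2 with hp
  have hp₀ : 0 < p := by linarith
  set b := 2 * (p ^ m * (p + 1))
  have hb₀ : 0 < b := by positivity
  obtain ⟨R, hR⟩ := h.exists_sub_lt_of_tendsto_atBot (T := 1) one_pos hη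
    fun t ht => hc t (one_pos.trans_le ht.1)
  refine ⟨1 + b, -R, by positivity, fun t ht x hx => ?_⟩
  have hpos : ∀ x, x ≤ -R - 1 → 0 < -R - x := fun x hx => by linarith
  have hterm : ∀ x, x ≤ -R - 1 → ∀ τ, 1 ≤ τ → 0 ≤ (1 + b) * τ ^ (1 / 2 : ℝ) * (-R - x) ^ (-p) :=
    fun x hx τ hτ => by have := hpos x hx; positivity
  refine h.sub_le_of_forall_isStrictSupersolutionAt_atBot (X := -R - 1) (t₁ := 1) (T := t)
    (β := fun x t => η + (1 + b) * t ^ (1 / 2 : ℝ) * (-R - x) ^ (-p)) one_pos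
    (fun τ hτ => hc τ (one_pos.trans_le hτ.1)) ?_ ?_ ?_ ?_ ?_ hx ⟨ht, le_rfl⟩
  · have hz : ContinuousOn (fun q : ℝ × ℝ => (-R - q.1) ^ (-p)) (Iic (-R - 1) ×ˢ Icc 1 t) :=
      ContinuousOn.rpow_const (by fun_prop) fun q hq => Or.inl (hpos q.1 hq.1).ne'
    have hsqrt : Continuous fun q : ℝ × ℝ => q.2 ^ (1 / 2 : ℝ) :=
      continuous_snd.rpow_const fun _ => Or.inr (by norm_num)
    exact continuousOn_const.add ((continuousOn_const.mul hsqrt.continuousOn).mul hz)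
  · exact fun x hx τ hτ => add_nonneg hη.le (hterm x hx τ hτ.1)
  · intro τ hτ
    have hτ' : 1 ≤ τ ^ (1 / 2 : ℝ) := Real.one_le_rpow hτ.1 (by norm_num)
    simp only [sub_sub_cancel, Real.one_rpow, mul_one]
    nlinarith
  · intro x hx
    linarith [hR 1 ⟨le_rfl, le_rfl⟩ x (by linarith), hterm x hx 1 le_rfl]
  · exact fun x hx τ hτ hlt => isStrictSupersolutionAt_rpow hΦ hm hp (by positivity)
      (by nlinarith) hη.le (by linarith) (by linarith [hτ.1]) hlt

theorem exists_sub_le_at_rpow {c η : ℝ} (hη : 0 < η)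
    (hc : ∀ t, 0 < t → Tendsto (fun x => u x t) atBot (𝓝 c)) :
    ∃ C, 0 < C ∧ ∀ t, 1 ≤ t → u (-(C * t ^ (1 / (m + 1)))) t - c ≤ η := by
  have hm₁ : 0 < m + 1 := by linarith
  obtain ⟨B, X, hB, hbarrier⟩ := h.exists_sub_le_rpow_atBot hΦ hm (half_pos hη) hc
  set p := (m + 1) / 2 with hp
  have hp₀ : 0 < p := by linarith
  set D := max 1 ((2 * B / η) ^ p⁻¹)
  have hD₁ : 1 ≤ D := le_max_left _ _
  have hDp : B * D ^ (-p) ≤ η / 2 := by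
    have : 2 * B / η ≤ D ^ p := by
      rw [← Real.rpow_inv_rpow (by positivity : 0 ≤ 2 * B / η) hp₀.ne']
      exact Real.rpow_le_rpow (by positivity) (le_max_right _ _) hp₀.le
    rw [Real.rpow_neg (by positivity), ← div_eq_mul_inv, div_le_iff₀ (by positivity)]
    rw [div_le_iff₀ hη] at this
    linarith
  refine ⟨|X| + D, by positivity, fun t ht => ?_⟩
  have ht₀ : 0 < t := one_pos.trans_le ht
  set g := t ^ (1 / (m + 1)) with hg
  have hg₁ : 1 ≤ g := Real.one_le_rpow ht (by positivity)
  have hgp : t ^ (1 / 2 : ℝ) * g ^ (-p) = 1 := by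
    rw [hg, ← Real.rpow_mul ht₀.le, ← Real.rpow_add ht₀, hp,
      show 1 / 2 + 1 / (m + 1) * -((m + 1) / 2) = 0 by field_simp; ring, Real.rpow_zero]
  have hmono : u (-((|X| + D) * g)) t ≤ u (X - D * g) t :=
    h.monotone ht₀ (by nlinarith [neg_abs_le X, abs_nonneg X])
  have hbound := hbarrier t ht (X - D * g) (by nlinarith)
  rw [sub_sub_cancel, Real.mul_rpow (by positivity) (by positivity)] at hbound
  have : B * t ^ (1 / 2 : ℝ) * (D ^ (-p) * g ^ (-p)) = B * D ^ (-p) := by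
    linear_combination B * D ^ (-p) * hgp
  linarith

theorem exists_le_iSup_gradient {c : ℝ}
    (hc : ∀ t, 0 < t → Tendsto (fun x => u x t) atBot (𝓝 c))
    (hbdd : ∀ t, 0 < t → BddAbove (range fun x => v x t)) :
    ∃ k, 0 < k ∧ ∀ t, 1 ≤ t → k * t ^ (-(1 / (m + 1))) ≤ ⨆ x, v x t := by
  obtain ⟨C₁, hC₁, hleft⟩ := h.exists_sub_le_at_rpow hΦ hm (by norm_num : (0 : ℝ) < 1 / 4) hc
  obtain ⟨C₂, hC₂, hright⟩ := h.reflect.exists_sub_le_at_rpow hΦ hm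
    (by norm_num : (0 : ℝ) < 1 / 4) (h.tendsto_reflect_atBot hc)
  refine ⟨1 / (2 * (C₁ + C₂)), by positivity, fun t ht => ?_⟩
  have ht₀ : 0 < t := one_pos.trans_le ht
  have hl := hleft t ht
  have hr := hright t ht
  rw [Real.rpow_neg ht₀.le, ← div_eq_mul_inv, div_div, div_le_iff₀ (by positivity)]
  rw [neg_neg] at hr
  set g := t ^ (1 / (m + 1))
  have hg : 0 < g := by positivity
  have hmean := h.sub_le_iSup_gradient_mul ht₀ (hbdd t ht₀) (x := -(C₁ * g)) (y := C₂ * g)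
    (by nlinarith)
  linarith

end Lower

end IsIntensity

/-! ### Power nonlinearities -/

/-- The nonlinearity `Φ(s) = s ^ m / m`, completed by `log` at `m = 0` so that
its derivative is `s ^ (m - 1)` for every `m`. -/
noncomputable def powerNonlinearity (m s : ℝ) : ℝ := if m = 0 then Real.log s else s ^ m / m

theorem powerNonlinearity_zero : powerNonlinearity 0 = Real.log := by
  ext s
  simp [powerNonlinearity]

theorem powerNonlinearity_of_ne_zero {m : ℝ} (hm : m ≠ 0) :
    powerNonlinearity m = fun s => s ^ m / m := by
  ext s
  simp [powerNonlinearity, hm]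

theorem hasDerivAt_powerNonlinearity (m : ℝ) {s : ℝ} (hs : 0 < s) :
    HasDerivAt (powerNonlinearity m) (s ^ (m - 1)) s := by
  rcases eq_or_ne m 0 with rfl | hm
  · simpa [powerNonlinearity_zero, Real.rpow_neg_one] using Real.hasDerivAt_log hs.ne'
  · simpa [powerNonlinearity_of_ne_zero hm, hm] using
      (Real.hasDerivAt_rpow_const (p := m) (Or.inl hs.ne')).div_const m

theorem contDiffOn_powerNonlinearity (m : ℝ) {n : WithTop ℕ∞} :
    ContDiffOn ℝ n (powerNonlinearity m) (Ioi 0) := by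
  intro s hs
  refine ContDiffAt.contDiffWithinAt ?_
  rcases eq_or_ne m 0 with rfl | hm
  · exact powerNonlinearity_zero ▸ Real.contDiffAt_log.2 (ne_of_gt hs)
  · exact powerNonlinearity_of_ne_zero hm ▸
      (Real.contDiffAt_rpow_const_of_ne (ne_of_gt hs)).div_const m

theorem filtration_decay_rate_general {m : ℝ} (hm : -1 < m) {v : ℝ → ℝ → ℝ}
    (hpos : ∀ x t, 0 < t → 0 < v x t) (hv : ContDiffOn ℝ 2 (Function.uncurry v) spaceTime)
    (hpde : ∀ x t, 0 < t →
      deriv (fun s => v x s) t = deriv (fun y => flux (powerNonlinearity m) v y t) x)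
    (hmass : ∀ t, 0 < t → ∫ x, v x t = 1) :
    ∃ c₁ c₂, 0 < c₁ ∧ c₁ ≤ c₂ ∧
      (∀ x t, 0 < t → v x t ≤ c₂ * t ^ (-(1 / (m + 1)))) ∧
      ∀ t, 1 ≤ t → c₁ * t ^ (-(1 / (m + 1))) ≤ ⨆ x, v x t := by
  have hΦ : ∀ s, 0 < s → deriv (powerNonlinearity m) s = s ^ (m - 1) :=
    fun s hs => (hasDerivAt_powerNonlinearity m hs).deriv
  have hu := isIntensity_potential (contDiffOn_powerNonlinearity m)
    (fun s hs => (hΦ s hs).symm ▸ Real.rpow_nonneg hs.le _) hv hpos hpde hmass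
  have hbdd : ∀ s, 0 < s → ∃ M, ∀ x t, s ≤ t → v x t ≤ M :=
    fun s hs => hu.exists_gradient_le_of_le hΦ hm hs
  obtain ⟨c, hc⟩ := hu.exists_tendsto_atBot hbdd
  obtain ⟨k, hk, hlower⟩ := hu.exists_le_iSup_gradient hΦ hm hc fun t ht =>
    let ⟨M, hM⟩ := hbdd t ht
    ⟨M, forall_mem_range.2 fun x => hM x t le_rfl⟩
  obtain ⟨K, hupper⟩ := hu.exists_gradient_le hΦ hm
  refine ⟨k, K, hk, ?_, hupper, hlower⟩
  simpa using (hlower 1 le_rfl).trans (ciSup_le fun x => hupper x 1 one_pos)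

/-- asymptotic decay rate of Theorem 5.1 of Barenblatt–Vázquez.
Let `m > -1` and let `v ≥ 0` be a classical (smooth, positive for `t > 0`) solution of
the nonlinear filtration equation `v_t = (v^m/m)_{xx}` on `ℝ × (0,∞)` (with `v^m/m`
replaced by `log v` when `m = 0`), with conserved unit mass `∫ v(x,t) dx = 1`.
Then `sup_x v(x,t)` decays exactly like `t^{-1/(m+1)}`: there are constants
`0 < c₁ ≤ c₂ < ∞` and a time `t* > 0` such that
`c₁ t^{-1/(m+1)} ≤ sup_x v(x,t) ≤ c₂ t^{-1/(m+1)}` for all `t ≥ t*`. -/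
theorem filtration_decay_rate
    (m : ℝ) (hm : -1 < m) (Φ : ℝ → ℝ)
    (hΦ : ∀ s : ℝ, Φ s = if m = 0 then Real.log s else s ^ m / m)
    (v : ℝ → ℝ → ℝ)
    (hnonneg : ∀ x t : ℝ, 0 ≤ v x t)
    (hpos : ∀ x t : ℝ, 0 < t → 0 < v x t)
    (hsmooth : ContDiffOn ℝ (⊤ : ℕ∞) (fun p : ℝ × ℝ => v p.1 p.2)
      ((Set.univ : Set ℝ) ×ˢ Set.Ioi 0))
    (hpde : ∀ x t : ℝ, 0 < t →
      deriv (fun s => v x s) t = deriv (deriv (fun y => Φ (v y t))) x)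
    (hmass : ∀ t : ℝ, 0 < t → ∫ x : ℝ, v x t = 1) :
    ∃ c₁ c₂ tstar : ℝ, 0 < c₁ ∧ c₁ ≤ c₂ ∧ 0 < tstar ∧
      ∀ t : ℝ, tstar ≤ t →
        (∀ x : ℝ, v x t ≤ c₂ * t ^ (-(1 / (m + 1)))) ∧
        c₁ * t ^ (-(1 / (m + 1))) ≤ ⨆ x : ℝ, v x t := by
  obtain rfl : Φ = powerNonlinearity m := funext hΦ
  obtain ⟨c₁, c₂, hc₁, hc, hupper, hlower⟩ := filtration_decay_rate_general hm hpos
    (mod_cast contDiffOn_infty.1 hsmooth 2) hpde hmass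
  exact ⟨c₁, c₂, 1, hc₁, hc, one_pos, fun t ht =>
    ⟨fun x => hupper x t (one_pos.trans_le ht), hlower t ht⟩⟩
end

section
/- Let T ∈ (0,∞], let Ψ : [0,∞) → ℝ be continuous and strictly increasing with Ψ(0) = 0 and Ψ smooth on (0,∞). Let w : [0,1] × (0,T) → [0,∞) be continuous with w(0,t) = w(1,t) = 0 for all t, w > 0 and smooth on (0,1) × (0,T), bounded on [0,1] × [s,T) for each 0 < s < T, solving ∂_t w = ∂_u²(Ψ(w)) on (0,1) × (0,T), and such that ∫₀¹ w(u,t) du → 0 as t → T. Let z : (0,1) × (0,T) → ℝ be smooth with ∂_u z = w and ∂_t z = ∂_u(Ψ(w)), and suppose a ≤ z(u,t) ≤ b for all (u,t). Then for each t ∈ (0,T) the limits l(t) = lim_{u→0⁺} z(u,t) and r(t) = lim_{u→1⁻} z(u,t) exist, the curves l and r are continuous on (0,T) and satisfy a ≤ l(t) < r(t) ≤ b, l(t) is nondecreasing, r(t) is nonincreasing, and r(t) − l(t) → 0 as t → T. -/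
open Set Filter Topology

/-- The filter of real times `t` approaching the horizon `T ∈ (0,∞]` from below:
for finite `T` this is `𝓝[<] T`, and for `T = ∞` it is `atTop`. -/
noncomputable def approachesHorizon (T : EReal) : Filter ℝ :=
  Filter.comap (fun t : ℝ => (t : EReal)) (nhdsWithin T (Set.Iio T))

/-- The open time interval `(0,T)` for a horizon `T ∈ (0,∞]`. -/
def timeInterval (T : EReal) : Set ℝ :=
  {t : ℝ | 0 < t ∧ (t : EReal) < T}

/-!
Since `w = z_u` is continuous up to the lateral boundary, so is `z`, and `l`, `r` are its traces at
`u = 0` and `u = 1`. The relation `z_t = ∂_u(Ψ(w))` is a conservation law, and its flux `Ψ(w)` is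
smallest on the lateral boundary. The divergence theorem on `[0, h] × [s, t]` then shows that the
mass of `z` in `[0, h]` does not decrease between the times `s` and `t`; letting `h → 0` gives
`l s ≤ l t`. The same balance on `[1 - h, 1] × [s, t]` makes `r` nonincreasing. Finally,
`r t - l t = ∫₀¹ w(u, t) du`.
-/

open Function MeasureTheory

section Slices

variable {E : Type*} [NormedAddCommGroup E] [NormedSpace ℝ E] {f : ℝ → ℝ → E} {x y : ℝ}

theorem fderiv_uncurry_apply_one_zero (hf : DifferentiableAt ℝ (uncurry f) (x, y)) :
    fderiv ℝ (uncurry f) (x, y) (1, 0) = deriv (fun x' => f x' y) x :=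
  (hf.hasFDerivAt.comp_hasDerivAt x ((hasDerivAt_id x).prodMk (hasDerivAt_const x y))).deriv.symm

theorem fderiv_uncurry_apply_zero_one (hf : DifferentiableAt ℝ (uncurry f) (x, y)) :
    fderiv ℝ (uncurry f) (x, y) (0, 1) = deriv (f x) y :=
  (hf.hasFDerivAt.comp_hasDerivAt y ((hasDerivAt_const y x).prodMk (hasDerivAt_id y))).deriv.symm

theorem differentiableAt_slice_left (hf : DifferentiableAt ℝ (uncurry f) (x, y)) :
    DifferentiableAt ℝ (fun x' => f x' y) x :=
  hf.comp x (f := fun x' => (x', y)) (by fun_prop)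

end Slices

theorem continuousOn_parametric_primitive {X E : Type*} [TopologicalSpace X]
    [NormedAddCommGroup E] [NormedSpace ℝ E] {f : ℝ → X → E} {S : Set X} {x₀ x₁ c : ℝ}
    (hc : c ∈ Icc x₀ x₁) (hf : ContinuousOn (uncurry f) (Icc x₀ x₁ ×ˢ S)) :
    ContinuousOn (fun q : ℝ × X => ∫ u in c..q.1, f u q.2) (Icc x₀ x₁ ×ˢ S) := by
  have hle : x₀ ≤ x₁ := hc.1.trans hc.2
  have hclamp : Continuous (uncurry fun (s : S) (u : ℝ) => f (projIcc x₀ x₁ hle u) s) :=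
    hf.comp_continuous (f := fun q : S × ℝ => ((projIcc x₀ x₁ hle q.2 : ℝ), (q.1 : X)))
      (by fun_prop) fun q => ⟨(projIcc x₀ x₁ hle q.2).2, q.1.2⟩
  have hprim := intervalIntegral.continuous_parametric_primitive_of_continuous
    (μ := volume) (a₀ := c) hclamp
  rw [continuousOn_iff_continuous_domRestrict]
  refine (hprim.comp (f := fun q : Icc x₀ x₁ ×ˢ S => ((⟨q.1.2, q.2.2⟩ : S), q.1.1))
    (by fun_prop)).congr fun q => intervalIntegral.integral_congr fun u hu => ?_
  simp only [projIcc_of_mem hle (uIcc_subset_Icc hc q.2.1 hu)]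

theorem exists_continuousOn_extension_of_hasDerivAt {X E : Type*} [TopologicalSpace X]
    [NormedAddCommGroup E] [NormedSpace ℝ E] [CompleteSpace E] {w z : ℝ → X → E} {S : Set X}
    {x₀ x₁ : ℝ} (hx : x₀ < x₁) (hw : ContinuousOn (uncurry w) (Icc x₀ x₁ ×ˢ S))
    (hz : ContinuousOn (uncurry z) (Ioo x₀ x₁ ×ˢ S))
    (hzw : ∀ u ∈ Ioo x₀ x₁, ∀ t ∈ S, HasDerivAt (fun u' => z u' t) (w u t) u) :
    ∃ Z : ℝ → X → E, ContinuousOn (uncurry Z) (Icc x₀ x₁ ×ˢ S) ∧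
      ∀ u ∈ Ioo x₀ x₁, ∀ t ∈ S, Z u t = z u t := by
  obtain ⟨c, hc⟩ := nonempty_Ioo.2 hx
  refine ⟨fun u t => z c t + ∫ y in c..u, w y t, ?_, fun u hu t ht => ?_⟩
  · have hzc : ContinuousOn (fun q : ℝ × X => z c q.2) (Icc x₀ x₁ ×ˢ S) :=
      hz.comp (f := fun q : ℝ × X => (c, q.2)) (by fun_prop) fun q hq => ⟨hc, hq.2⟩
    exact hzc.add (continuousOn_parametric_primitive (Ioo_subset_Icc_self hc) hw)
  · have hsub : uIcc c u ⊆ Ioo x₀ x₁ := ordConnected_Ioo.uIcc_subset hc hu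
    have hwt : ContinuousOn (fun y => w y t) (uIcc c u) :=
      (hw.uncurry_right t ht).mono (hsub.trans Ioo_subset_Icc_self)
    have hftc := intervalIntegral.integral_eq_sub_of_hasDerivAt
      (fun y hy => hzw y (hsub hy) t ht) hwt.intervalIntegrable
    exact (congrArg (z c t + ·) hftc).trans (add_sub_cancel _ _)

theorem tendsto_endpoints_of_eqOn_Ioo {α β : Type*} [LinearOrder α] [TopologicalSpace α]
    [OrderClosedTopology α] [TopologicalSpace β] {f F : α → β} {a b : α} (hab : a < b)
    (hF : ContinuousOn F (Icc a b)) (heq : EqOn F f (Ioo a b)) :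
    Tendsto f (𝓝[>] a) (𝓝 (F a)) ∧ Tendsto f (𝓝[<] b) (𝓝 (F b)) := by
  rw [← nhdsWithin_Ioo_eq_nhdsGT hab, ← nhdsWithin_Ioo_eq_nhdsLT hab]
  have htrace : ∀ c ∈ Icc a b, Tendsto f (𝓝[Ioo a b] c) (𝓝 (F c)) := fun c hc =>
    ((hF c hc).mono Ioo_subset_Icc_self).tendsto.congr' (eventually_nhdsWithin_of_forall heq)
  exact ⟨htrace a (left_mem_Icc.2 hab.le), htrace b (right_mem_Icc.2 hab.le)⟩

section NonnegOfIntegral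

variable {g : ℝ → ℝ} {a b : ℝ}

theorem nonneg_left_of_forall_integral_nonneg (hab : a < b) (hg : ContinuousOn g (Icc a b))
    (hint : ∀ y ∈ Ioo a b, 0 ≤ ∫ x in a..y, g x) : 0 ≤ g a := by
  by_contra! hneg
  have hev : ∀ᶠ y in 𝓝[≥] a, g y < 0 := by
    rw [← nhdsWithin_Icc_eq_nhdsGE hab]
    exact (hg a (left_mem_Icc.2 hab.le)).eventually (gt_mem_nhds hneg)
  obtain ⟨c, hac, hc⟩ := (mem_nhdsGE_iff_exists_mem_Ioc_Ico_subset hab).1 hev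
  obtain ⟨y, hay, hyc⟩ := exists_between hac.1
  have hyb : y < b := hyc.trans_le hac.2
  have hpos : 0 < ∫ x in a..y, -g x :=
    intervalIntegral.intervalIntegral_pos_of_pos_on
      ((hg.neg.mono (Icc_subset_Icc_right hyb.le)).intervalIntegrable_of_Icc hay.le)
      (fun x hx => neg_pos.2 (hc ⟨hx.1.le, hx.2.trans hyc⟩)) hay
  rw [intervalIntegral.integral_neg] at hpos
  linarith [hint y ⟨hay, hyb⟩]

theorem nonneg_right_of_forall_integral_nonneg (hab : a < b) (hg : ContinuousOn g (Icc a b))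
    (hint : ∀ y ∈ Ioo a b, 0 ≤ ∫ x in y..b, g x) : 0 ≤ g b := by
  have hreflect : ContinuousOn (fun x => g (-x)) (Icc (-b) (-a)) :=
    hg.comp continuousOn_neg fun x hx => ⟨le_neg.1 hx.2, neg_le.1 hx.1⟩
  have := nonneg_left_of_forall_integral_nonneg (neg_lt_neg hab) hreflect fun y hy => by
    rw [intervalIntegral.integral_comp_neg, neg_neg]
    exact hint (-y) ⟨lt_neg.1 hy.2, neg_lt.1 hy.1⟩
  rwa [neg_neg] at this

end NonnegOfIntegral

theorem integral_sub_integral_eq_of_fderiv_eq {E : Type*} [NormedAddCommGroup E]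
    [NormedSpace ℝ E] {f g : ℝ × ℝ → E} {x₀ x₁ s t : ℝ} (hx : x₀ ≤ x₁) (hst : s ≤ t)
    (hf : ContinuousOn f (Icc x₀ x₁ ×ˢ Icc s t)) (hg : ContinuousOn g (Icc x₀ x₁ ×ˢ Icc s t))
    (hfd : ∀ q ∈ Ioo x₀ x₁ ×ˢ Ioo s t, DifferentiableAt ℝ f q)
    (hgd : ∀ q ∈ Ioo x₀ x₁ ×ˢ Ioo s t, DifferentiableAt ℝ g q)
    (hfg : ∀ q ∈ Ioo x₀ x₁ ×ˢ Ioo s t, fderiv ℝ g q (0, 1) = fderiv ℝ f q (1, 0)) :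
    (∫ u in x₀..x₁, g (u, t)) - ∫ u in x₀..x₁, g (u, s) =
      (∫ τ in s..t, f (x₁, τ)) - ∫ τ in s..t, f (x₀, τ) := by
  set R : Set (ℝ × ℝ) := Ioo x₀ x₁ ×ˢ Ioo s t
  -- The derivatives are cut off outside the open rectangle, so that the divergence of `(f, -g)`
  -- vanishes identically and integrability up to the boundary is free.
  have hdiv : ∀ q, R.indicator (fderiv ℝ f) q (1, 0)
      + R.indicator (fun q => -fderiv ℝ g q) q (0, 1) = 0 := by
    intro q
    by_cases hq : q ∈ R
    · rw [indicator_of_mem hq, indicator_of_mem hq, neg_apply, hfg q hq, add_neg_cancel]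
    · simp only [indicator_of_notMem hq, zero_apply, add_zero]
  have hgreen := integral_divergence_prod_Icc_of_hasFDerivAt_of_le f (fun q => -g q)
    (R.indicator (fderiv ℝ f)) (R.indicator fun q => -fderiv ℝ g q) (x₀, s) (x₁, t) ⟨hx, hst⟩
    (by rwa [← Icc_prod_Icc]) (by rw [← Icc_prod_Icc]; exact hg.neg)
    (fun q hq => by rw [indicator_of_mem hq]; exact (hfd q hq).hasFDerivAt)
    (fun q hq => by rw [indicator_of_mem hq]; exact (hgd q hq).hasFDerivAt.neg)
    (by simp only [hdiv, integrableOn_zero])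
  simp only [hdiv, integral_zero, intervalIntegral.integral_neg] at hgreen
  rw [← sub_eq_zero, ← neg_eq_zero, hgreen]
  abel

/-- The conservation law `z_t = p_u` with density `z` and flux `p` on `(x₀, x₁) × S`, where `S` is
a set of times; both functions are continuous up to the lateral boundary `u = x₀`, `u = x₁`. -/
structure ConservationLawOn {E : Type*} [NormedAddCommGroup E] [NormedSpace ℝ E]
    (z p : ℝ → ℝ → E) (x₀ x₁ : ℝ) (S : Set ℝ) : Prop where
  continuousOn_density : ContinuousOn (uncurry z) (Icc x₀ x₁ ×ˢ S)
  continuousOn_flux : ContinuousOn (uncurry p) (Icc x₀ x₁ ×ˢ S)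
  differentiableOn_density : DifferentiableOn ℝ (uncurry z) (Ioo x₀ x₁ ×ˢ S)
  differentiableOn_flux : DifferentiableOn ℝ (uncurry p) (Ioo x₀ x₁ ×ˢ S)
  deriv_density_eq : ∀ u ∈ Ioo x₀ x₁, ∀ t ∈ S, deriv (z u) t = deriv (fun y => p y t) u

namespace ConservationLawOn

variable {E : Type*} [NormedAddCommGroup E] [NormedSpace ℝ E] {x₀ x₁ : ℝ} {S : Set ℝ}

theorem mono {z p : ℝ → ℝ → E} (h : ConservationLawOn z p x₀ x₁ S) {y₀ y₁ : ℝ} {S' : Set ℝ}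
    (hx : x₀ ≤ y₀) (hy : y₁ ≤ x₁) (hS : S' ⊆ S) : ConservationLawOn z p y₀ y₁ S' where
  continuousOn_density := h.continuousOn_density.mono (prod_mono (Icc_subset_Icc hx hy) hS)
  continuousOn_flux := h.continuousOn_flux.mono (prod_mono (Icc_subset_Icc hx hy) hS)
  differentiableOn_density := h.differentiableOn_density.mono (prod_mono (Ioo_subset_Ioo hx hy) hS)
  differentiableOn_flux := h.differentiableOn_flux.mono (prod_mono (Ioo_subset_Ioo hx hy) hS)
  deriv_density_eq u hu t ht := h.deriv_density_eq u (Ioo_subset_Ioo hx hy hu) t (hS ht)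

theorem integral_density_sub {z p : ℝ → ℝ → E} {s t : ℝ}
    (h : ConservationLawOn z p x₀ x₁ (Icc s t)) (hx : x₀ ≤ x₁) (hst : s ≤ t) :
    ∫ u in x₀..x₁, (z u t - z u s) = ∫ τ in s..t, (p x₁ τ - p x₀ τ) := by
  have hnhds : ∀ q ∈ Ioo x₀ x₁ ×ˢ Ioo s t, Ioo x₀ x₁ ×ˢ Icc s t ∈ 𝓝 q := fun q hq =>
    mem_of_superset ((isOpen_Ioo.prod isOpen_Ioo).mem_nhds hq)
      (prod_mono_right Ioo_subset_Icc_self)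
  have hz : ∀ q ∈ Ioo x₀ x₁ ×ˢ Ioo s t, DifferentiableAt ℝ (uncurry z) q := fun q hq =>
    h.differentiableOn_density.differentiableAt (hnhds q hq)
  have hp : ∀ q ∈ Ioo x₀ x₁ ×ˢ Ioo s t, DifferentiableAt ℝ (uncurry p) q := fun q hq =>
    h.differentiableOn_flux.differentiableAt (hnhds q hq)
  have hzint : ∀ τ ∈ Icc s t, IntervalIntegrable (fun u => z u τ) volume x₀ x₁ := fun τ hτ =>
    (h.continuousOn_density.uncurry_right τ hτ).intervalIntegrable_of_Icc hx
  have hpint : ∀ u ∈ Icc x₀ x₁, IntervalIntegrable (p u) volume s t := fun u hu =>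
    (h.continuousOn_flux.uncurry_left u hu).intervalIntegrable_of_Icc hst
  rw [intervalIntegral.integral_sub (hzint t (right_mem_Icc.2 hst)) (hzint s (left_mem_Icc.2 hst)),
    intervalIntegral.integral_sub (hpint x₁ (right_mem_Icc.2 hx)) (hpint x₀ (left_mem_Icc.2 hx))]
  refine integral_sub_integral_eq_of_fderiv_eq hx hst h.continuousOn_flux h.continuousOn_density
    hp hz fun q hq => ?_
  exact (fderiv_uncurry_apply_zero_one (hz q hq)).trans <|
    (h.deriv_density_eq q.1 hq.1 q.2 (Ioo_subset_Icc_self hq.2)).trans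
      (fderiv_uncurry_apply_one_zero (hp q hq)).symm

theorem monotoneOn_left {z p : ℝ → ℝ → ℝ} (h : ConservationLawOn z p x₀ x₁ S) (hx : x₀ < x₁)
    (hS : S.OrdConnected) (hp : ∀ u ∈ Ioo x₀ x₁, ∀ t ∈ S, p x₀ t ≤ p u t) :
    MonotoneOn (z x₀) S := by
  intro s hs t ht hst
  have hI : Icc s t ⊆ S := hS.out hs ht
  refine sub_nonneg.1 (nonneg_left_of_forall_integral_nonneg (g := fun u => z u t - z u s) hx
    ((h.continuousOn_density.uncurry_right t ht).sub (h.continuousOn_density.uncurry_right s hs))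
    fun y hy => ?_)
  rw [(h.mono le_rfl hy.2.le hI).integral_density_sub hy.1.le hst]
  exact intervalIntegral.integral_nonneg hst fun τ hτ => sub_nonneg.2 (hp y hy τ (hI hτ))

theorem antitoneOn_right {z p : ℝ → ℝ → ℝ} (h : ConservationLawOn z p x₀ x₁ S) (hx : x₀ < x₁)
    (hS : S.OrdConnected) (hp : ∀ u ∈ Ioo x₀ x₁, ∀ t ∈ S, p x₁ t ≤ p u t) :
    AntitoneOn (z x₁) S := by
  intro s hs t ht hst
  have hI : Icc s t ⊆ S := hS.out hs ht
  refine sub_nonneg.1 (nonneg_right_of_forall_integral_nonneg (g := fun u => z u s - z u t) hx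
    ((h.continuousOn_density.uncurry_right s hs).sub (h.continuousOn_density.uncurry_right t ht))
    fun y hy => ?_)
  calc (0 : ℝ) ≤ ∫ τ in s..t, (p y τ - p x₁ τ) :=
        intervalIntegral.integral_nonneg hst fun τ hτ => sub_nonneg.2 (hp y hy τ (hI hτ))
    _ = -∫ τ in s..t, (p x₁ τ - p y τ) := by
        simp only [← intervalIntegral.integral_neg, neg_sub]
    _ = -∫ u in y..x₁, (z u t - z u s) := by
        rw [(h.mono hy.1.le le_rfl hI).integral_density_sub hy.2.le hst]
    _ = ∫ u in y..x₁, (z u s - z u t) := by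
        simp only [← intervalIntegral.integral_neg, neg_sub]

end ConservationLawOn

theorem exists_monotone_boundary_traces {w z p : ℝ → ℝ → ℝ} {x₀ x₁ : ℝ} {S : Set ℝ}
    (hx : x₀ < x₁) (hSo : IsOpen S) (hS : S.OrdConnected)
    (hw : ContinuousOn (uncurry w) (Icc x₀ x₁ ×ˢ S))
    (hp : ContinuousOn (uncurry p) (Icc x₀ x₁ ×ˢ S))
    (hpd : DifferentiableOn ℝ (uncurry p) (Ioo x₀ x₁ ×ˢ S))
    (hp₀ : ∀ u ∈ Ioo x₀ x₁, ∀ t ∈ S, p x₀ t ≤ p u t)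
    (hp₁ : ∀ u ∈ Ioo x₀ x₁, ∀ t ∈ S, p x₁ t ≤ p u t)
    (hzd : DifferentiableOn ℝ (uncurry z) (Ioo x₀ x₁ ×ˢ S))
    (hzw : ∀ u ∈ Ioo x₀ x₁, ∀ t ∈ S, HasDerivAt (fun y => z y t) (w u t) u)
    (hzt : ∀ u ∈ Ioo x₀ x₁, ∀ t ∈ S, deriv (z u) t = deriv (fun y => p y t) u) :
    ∃ l r : ℝ → ℝ,
      (∀ t ∈ S, Tendsto (fun u => z u t) (𝓝[>] x₀) (𝓝 (l t)) ∧
        Tendsto (fun u => z u t) (𝓝[<] x₁) (𝓝 (r t))) ∧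
      ContinuousOn l S ∧ ContinuousOn r S ∧ MonotoneOn l S ∧ AntitoneOn r S := by
  obtain ⟨Z, hZ, hZz⟩ := exists_continuousOn_extension_of_hasDerivAt hx hw hzd.continuousOn hzw
  have hcons : ConservationLawOn Z p x₀ x₁ S :=
    { continuousOn_density := hZ
      continuousOn_flux := hp
      differentiableOn_density := hzd.congr fun q hq => hZz q.1 hq.1 q.2 hq.2
      differentiableOn_flux := hpd
      deriv_density_eq := fun u hu t ht =>
        (EventuallyEq.deriv_eq (eventually_of_mem (hSo.mem_nhds ht) (hZz u hu))).trans
          (hzt u hu t ht) }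
  exact ⟨Z x₀, Z x₁,
    fun t ht => tendsto_endpoints_of_eqOn_Ioo hx (hZ.uncurry_right t ht) fun u hu => hZz u hu t ht,
    hZ.uncurry_left x₀ (left_mem_Icc.2 hx.le), hZ.uncurry_left x₁ (right_mem_Icc.2 hx.le),
    hcons.monotoneOn_left hx hS hp₀, hcons.antitoneOn_right hx hS hp₁⟩

theorem isOpen_timeInterval (T : EReal) : IsOpen (timeInterval T) :=
  isOpen_Ioi.inter (isOpen_Iio.preimage continuous_coe_real_ereal)

theorem ordConnected_timeInterval (T : EReal) : (timeInterval T).OrdConnected :=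
  ordConnected_Ioi.inter (ordConnected_Iio.preimage_mono EReal.coe_strictMono.monotone)

theorem eventually_mem_timeInterval {T : EReal} (hT : 0 < T) :
    ∀ᶠ t in approachesHorizon T, t ∈ timeInterval T :=
  ⟨Ioo 0 T, Ioo_mem_nhdsLT hT, fun _ ht => ⟨EReal.coe_pos.1 ht.1, ht.2⟩⟩

theorem interface_curves_exist_continuous_monotone_general
    (T : EReal) (hT : 0 < T)
    (Ψ : ℝ → ℝ) (hΨcont : ContinuousOn Ψ (Ici 0)) (hΨmin : ∀ s > 0, Ψ 0 ≤ Ψ s)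
    (hΨdiff : DifferentiableOn ℝ Ψ (Ioi 0))
    (a b : ℝ) (w z : ℝ → ℝ → ℝ)
    (hwcont : ContinuousOn (uncurry w) (Icc 0 1 ×ˢ timeInterval T))
    (hwbdry : ∀ t ∈ timeInterval T, w 0 t = 0 ∧ w 1 t = 0)
    (hwpos : ∀ u ∈ Ioo (0 : ℝ) 1, ∀ t ∈ timeInterval T, 0 < w u t)
    (hwdiff : DifferentiableOn ℝ (uncurry w) (Ioo 0 1 ×ˢ timeInterval T))
    (hwmass : Tendsto (fun t => ∫ u in (0 : ℝ)..1, w u t) (approachesHorizon T) (𝓝 0))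
    (hzdiff : DifferentiableOn ℝ (uncurry z) (Ioo 0 1 ×ˢ timeInterval T))
    (hzu : ∀ u ∈ Ioo (0 : ℝ) 1, ∀ t ∈ timeInterval T, deriv (fun y => z y t) u = w u t)
    (hzt : ∀ u ∈ Ioo (0 : ℝ) 1, ∀ t ∈ timeInterval T,
      deriv (z u) t = deriv (fun y => Ψ (w y t)) u)
    (hzbdd : ∀ u ∈ Ioo (0 : ℝ) 1, ∀ t ∈ timeInterval T, a ≤ z u t ∧ z u t ≤ b) :
    ∃ l r : ℝ → ℝ,
      (∀ t ∈ timeInterval T,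
        Tendsto (fun u => z u t) (𝓝[>] 0) (𝓝 (l t)) ∧
        Tendsto (fun u => z u t) (𝓝[<] 1) (𝓝 (r t))) ∧
      ContinuousOn l (timeInterval T) ∧ ContinuousOn r (timeInterval T) ∧
      (∀ t ∈ timeInterval T, a ≤ l t ∧ l t < r t ∧ r t ≤ b) ∧
      MonotoneOn l (timeInterval T) ∧ AntitoneOn r (timeInterval T) ∧
      Tendsto (fun t => r t - l t) (approachesHorizon T) (𝓝 0) := by
  have hwnonneg : ∀ q ∈ Icc (0 : ℝ) 1 ×ˢ timeInterval T, 0 ≤ uncurry w q := by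
    rintro ⟨u, t⟩ ⟨hu, ht⟩
    rcases eq_endpoints_or_mem_Ioo_of_mem_Icc hu with rfl | rfl | hu
    exacts [(hwbdry t ht).1.ge, (hwbdry t ht).2.ge, (hwpos u hu t ht).le]
  have hzw : ∀ u ∈ Ioo (0 : ℝ) 1, ∀ t ∈ timeInterval T, HasDerivAt (fun y => z y t) (w u t) u :=
    fun u hu t ht => hzu u hu t ht ▸ (differentiableAt_slice_left (hzdiff.differentiableAt
      ((isOpen_Ioo.prod (isOpen_timeInterval T)).mem_nhds ⟨hu, ht⟩))).hasDerivAt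
  obtain ⟨l, r, hlim, hl, hr, hlmono, hranti⟩ :=
    exists_monotone_boundary_traces (p := fun u t => Ψ (w u t)) zero_lt_one
      (isOpen_timeInterval T) (ordConnected_timeInterval T) hwcont (hΨcont.comp hwcont hwnonneg)
      (hΨdiff.comp hwdiff fun q hq => hwpos q.1 hq.1 q.2 hq.2)
      (fun u hu t ht => (hwbdry t ht).1.symm ▸ hΨmin _ (hwpos u hu t ht))
      (fun u hu t ht => (hwbdry t ht).2.symm ▸ hΨmin _ (hwpos u hu t ht)) hzdiff hzw hzt
  have hwint : ∀ t ∈ timeInterval T, IntervalIntegrable (fun u => w u t) volume 0 1 := fun t ht =>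
    (hwcont.uncurry_right t ht).intervalIntegrable_of_Icc zero_le_one
  have hmass : ∀ t ∈ timeInterval T, ∫ u in (0 : ℝ)..1, w u t = r t - l t := fun t ht =>
    intervalIntegral.integral_eq_sub_of_hasDerivAt_of_tendsto zero_lt_one
      (fun u hu => hzw u hu t ht) (hwint t ht) (hlim t ht).1 (hlim t ht).2
  refine ⟨l, r, hlim, hl, hr, fun t ht => ⟨?_, ?_, ?_⟩, hlmono, hranti, ?_⟩
  · exact ge_of_tendsto (hlim t ht).1 <|
      eventually_of_mem (Ioo_mem_nhdsGT zero_lt_one) fun u hu => (hzbdd u hu t ht).1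
  · exact sub_pos.1 <| hmass t ht ▸ intervalIntegral.intervalIntegral_pos_of_pos_on (hwint t ht)
      (fun u hu => hwpos u hu t ht) zero_lt_one
  · exact le_of_tendsto (hlim t ht).2 <|
      eventually_of_mem (Ioo_mem_nhdsLT zero_lt_one) fun u hu => (hzbdd u hu t ht).2
  · exact hwmass.congr' <| (eventually_mem_timeInterval hT).mono hmass

/-- Lemma 6.2 of Barenblatt–Vázquez.
Let `w ≥ 0` solve the differentiated conjugate equation `w_t = (Ψ(w))_{uu}` on
`(0,1) × (0,T)` with zero lateral boundary values, continuous up to the boundary,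
positive and smooth inside, bounded on `[0,1] × [s,T)` for every `0 < s < T`, and
with `∫₀¹ w(u,t) du → 0` as `t → T`. Let `z` be an associated mass function,
`z_u = w`, `z_t = (Ψ(w))_u`, with `a ≤ z ≤ b`. Then for each `t ∈ (0,T)` the limits
`l(t) = lim_{u→0⁺} z(u,t)` and `r(t) = lim_{u→1⁻} z(u,t)` exist, the curves `l, r`
are continuous and monotone (`l` nondecreasing, `r` nonincreasing) on `(0,T)`,
satisfy `a ≤ l(t) < r(t) ≤ b`, and `r(t) − l(t) → 0` as `t → T`. -/
theorem interface_curves_exist_continuous_monotone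
    (T : EReal) (hT : 0 < T)
    (Ψ : ℝ → ℝ) (hΨcont : ContinuousOn Ψ (Ici 0))
    (hΨmono : StrictMonoOn Ψ (Ici 0)) (hΨ0 : Ψ 0 = 0)
    (hΨsmooth : ContDiffOn ℝ (⊤ : ℕ∞) Ψ (Ioi 0))
    (a b : ℝ) (w z : ℝ → ℝ → ℝ)
    (hwcont : ContinuousOn (fun p : ℝ × ℝ => w p.1 p.2) (Icc 0 1 ×ˢ timeInterval T))
    (hwnonneg : ∀ u ∈ Icc (0:ℝ) 1, ∀ t ∈ timeInterval T, 0 ≤ w u t)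
    (hwbdry : ∀ t ∈ timeInterval T, w 0 t = 0 ∧ w 1 t = 0)
    (hwpos : ∀ u ∈ Ioo (0:ℝ) 1, ∀ t ∈ timeInterval T, 0 < w u t)
    (hwsmooth : ContDiffOn ℝ (⊤ : ℕ∞) (fun p : ℝ × ℝ => w p.1 p.2)
      (Ioo 0 1 ×ˢ timeInterval T))
    (hwbdd : ∀ s : ℝ, 0 < s → (s : EReal) < T → ∃ M : ℝ,
      ∀ u ∈ Icc (0:ℝ) 1, ∀ t : ℝ, s ≤ t → (t : EReal) < T → w u t ≤ M)
    (hwpde : ∀ u ∈ Ioo (0:ℝ) 1, ∀ t ∈ timeInterval T,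
      deriv (fun s => w u s) t = deriv (deriv (fun p => Ψ (w p t))) u)
    (hwmass : Tendsto (fun t => ∫ u in (0:ℝ)..1, w u t) (approachesHorizon T) (𝓝 0))
    (hzsmooth : ContDiffOn ℝ (⊤ : ℕ∞) (fun p : ℝ × ℝ => z p.1 p.2)
      (Ioo 0 1 ×ˢ timeInterval T))
    (hzu : ∀ u ∈ Ioo (0:ℝ) 1, ∀ t ∈ timeInterval T, deriv (fun p => z p t) u = w u t)
    (hzt : ∀ u ∈ Ioo (0:ℝ) 1, ∀ t ∈ timeInterval T,
      deriv (fun s => z u s) t = deriv (fun p => Ψ (w p t)) u)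
    (hzbdd : ∀ u ∈ Ioo (0:ℝ) 1, ∀ t ∈ timeInterval T, a ≤ z u t ∧ z u t ≤ b) :
    ∃ l r : ℝ → ℝ,
      (∀ t ∈ timeInterval T,
        Tendsto (fun u => z u t) (nhdsWithin 0 (Ioi 0)) (𝓝 (l t)) ∧
        Tendsto (fun u => z u t) (nhdsWithin 1 (Iio 1)) (𝓝 (r t))) ∧
      ContinuousOn l (timeInterval T) ∧ ContinuousOn r (timeInterval T) ∧
      (∀ t ∈ timeInterval T, a ≤ l t ∧ l t < r t ∧ r t ≤ b) ∧
      MonotoneOn l (timeInterval T) ∧ AntitoneOn r (timeInterval T) ∧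
      Tendsto (fun t => r t - l t) (approachesHorizon T) (𝓝 0) :=
  interface_curves_exist_continuous_monotone_general T hT Ψ hΨcont
    (fun _ hs => hΨmono.monotoneOn self_mem_Ici hs.le hs.le) (hΨsmooth.differentiableOn (by simp))
    a b w z hwcont hwbdry hwpos (hwsmooth.differentiableOn (by simp)) hwmass
    (hzsmooth.differentiableOn (by simp)) hzu hzt hzbdd
end
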